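/- arXiv:1604.08283 — 3 statements merged into one kernel-verified Lean document; each statement's English description precedes it below -/
import Mathlib

section
/- Let (A,b) be a unital A∞-algebra over a field k of characteristic 0. For every R ∈ Art, the assignment x ↦ (A⊗_kR, b⊗_kR + x) induces a bijection Def_{C̄^•(A)[1]}(R) = MC(C̄^•(A)[1]⊗_km_R)/exp((C̄^•(A)[1]⊗_km_R)⁰) ≅ 𝖣𝖠𝗅𝗀_A(R), natural in R, where 𝖣𝖠𝗅𝗀_A(R) is the set of isomorphism classes of deformations of (A,b) to R. -/
open Finsupp
open scoped Classical

namespace NCB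

variable (S : Type) [CommRing S] {κ : Type}

/-- The sign `(−1)^n` for `n : ℤ`. -/
noncomputable def sgn (n : ℤ) : S := if Even n then 1 else -1

/-- Degree of a basis element of `A` (the unit `none` = `1_A` has degree `0`). -/
def dgO (dg : κ → ℤ) : Option κ → ℤ := fun x => x.elim 0 dg

/-- `A ⊗ S`, for `A` a graded vector space with homogeneous basis `Option κ`. -/
abbrev Avs (κ : Type) (S : Type) [CommRing S] := Option κ →₀ S

/-- The bar coalgebra `BA ⊗ S = ⊕ₙ (A[1])^{⊗n} ⊗ S`, with basis the words in the basis
of `A`. -/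
abbrev BW (κ : Type) (S : Type) [CommRing S] := List (Option κ) →₀ S

/-- `(BA ⊗ BA) ⊗ S`. -/
abbrev BW2 (κ : Type) (S : Type) [CommRing S] :=
  (List (Option κ) × List (Option κ)) →₀ S

variable (dg : κ → ℤ)

/-- Degree in `BA` of a basis word: `Σ (|a|−1)` (suspended degrees). -/
def epsO : List (Option κ) → ℤ := fun ls => (ls.map fun x => dgO dg x - 1).sum

/-- The deconcatenation comultiplication `Δ : BA → BA ⊗ BA`. -/
noncomputable def comul : BW κ S →ₗ[S] BW2 κ S :=
  Finsupp.lift (BW2 κ S) S (List (Option κ)) fun ls =>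
    ∑ i ∈ Finset.range (ls.length + 1), Finsupp.single (ls.take i, ls.drop i) 1

/-- The counit `BA → S` (projection to the empty word). -/
noncomputable def counit : BW κ S →ₗ[S] S :=
  Finsupp.lift S S (List (Option κ)) fun ls => if ls = [] then 1 else 0

/-- `F ⊗ 1 : BA ⊗ BA → BA ⊗ BA`. -/
noncomputable def tensL (F : Module.End S (BW κ S)) : Module.End S (BW2 κ S) :=
  Finsupp.lift (BW2 κ S) S (List (Option κ) × List (Option κ)) fun pq =>
    (F (Finsupp.single pq.1 1)).sum fun p' c => Finsupp.single (p', pq.2) c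

/-- `1 ⊗ F : BA ⊗ BA → BA ⊗ BA` with the Koszul sign of a map `F` of degree `dF`. -/
noncomputable def tensR (dF : ℤ) (F : Module.End S (BW κ S)) : Module.End S (BW2 κ S) :=
  Finsupp.lift (BW2 κ S) S (List (Option κ) × List (Option κ)) fun pq =>
    sgn S (dF * epsO dg pq.1) •
      (F (Finsupp.single pq.2 1)).sum fun q' c => Finsupp.single (pq.1, q') c

/-- `F ⊗ G` for two maps of degree `0`. -/
noncomputable def tens2 (F G : Module.End S (BW κ S)) : Module.End S (BW2 κ S) :=
  Finsupp.lift (BW2 κ S) S (List (Option κ) × List (Option κ)) fun pq =>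
    (F (Finsupp.single pq.1 1)).sum fun p' c =>
      c • ((G (Finsupp.single pq.2 1)).sum fun q' c' => Finsupp.single (p', q') c')

/-- Projection `BA → A[1]` onto the words of length one. -/
noncomputable def proj1 : BW κ S →ₗ[S] Avs κ S :=
  Finsupp.lift (Avs κ S) S (List (Option κ)) fun ls =>
    match ls with
    | [x] => Finsupp.single x 1
    | _ => 0

/-- `F` is homogeneous of degree `dF` with respect to the grading of `BA`. -/
def HomogEnd (dF : ℤ) (F : Module.End S (BW κ S)) : Prop :=
  ∀ ls ms, ms ∈ (F (Finsupp.single ls 1)).support → epsO dg ms = epsO dg ls + dF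

/-- `F` is a coderivation of degree `dF` of the graded coalgebra `BA`:
`Δ∘F = (F⊗1 + 1⊗F)∘Δ`. -/
def IsCoder (dF : ℤ) (F : Module.End S (BW κ S)) : Prop :=
  comul S ∘ₗ F = tensL S F ∘ₗ comul S + tensR S dg dF F ∘ₗ comul S

/-- `F` is a morphism of the graded coalgebra `BA` (degree `0`):
`Δ∘F = (F⊗F)∘Δ` and `ε∘F = ε`. -/
def IsCoalgMor (F : Module.End S (BW κ S)) : Prop :=
  comul S ∘ₗ F = tens2 S F F ∘ₗ comul S ∧ counit S ∘ₗ F = counit S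

/-- `F` is normalized: its components vanish on words containing the unit `1_A`. -/
def NormalizedEnd (F : Module.End S (BW κ S)) : Prop :=
  ∀ ls, none ∈ ls → proj1 S (F (Finsupp.single ls 1)) = 0

/-- All matrix coefficients of `F` lie in the ideal `m` (i.e. `F ∈ End ⊗ m_R`). -/
def CoeffIn (m : Ideal S) (F : Module.End S (BW κ S)) : Prop :=
  ∀ ls ms, (F (Finsupp.single ls 1)) ms ∈ m

/-- The reduction of `F` modulo `m` is the identity. -/
def ReducesToId (m : Ideal S) (F : Module.End S (BW κ S)) : Prop :=
  ∀ ls ms, (F (Finsupp.single ls 1) - Finsupp.single ls 1 : BW κ S) ms ∈ m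

/-- Unit axioms for (the coderivation of) a curved A∞-structure, in terms of its components
`m_n`: `m₁(1_A) = 0`, `m₂[a|1_A] = m₂[1_A|a] = a`, and `m_n` vanishes on the unit for
`n ≥ 3`. -/
def UnitAxioms (D : Module.End S (BW κ S)) : Prop :=
  proj1 S (D (Finsupp.single [none] 1)) = 0 ∧
  (∀ x : Option κ, proj1 S (D (Finsupp.single [x, none] 1)) =
      sgn S (dgO dg x) • Finsupp.single x 1) ∧
  (∀ x : Option κ, proj1 S (D (Finsupp.single [none, x] 1)) = Finsupp.single x 1) ∧
  ∀ ls, 3 ≤ ls.length → none ∈ ls → proj1 S (D (Finsupp.single ls 1)) = 0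

end NCB

namespace NCB

variable (k : Type) [Field k] [CharZero k] {κ : Type}
variable (R : Type) [CommRing R] [Algebra k R]

/-- Base change `BA → BA ⊗ R` of the bar coalgebra. -/
noncomputable def mapBW : BW κ k →ₗ[k] BW κ R :=
  Finsupp.mapRange.linearMap (Algebra.linearMap k R)

/-- Base change of a `k`-linear endomorphism of `BA` to an `R`-linear endomorphism of
`BA ⊗ R`. -/
noncomputable def baseEnd (F : Module.End k (BW κ k)) : Module.End R (BW κ R) :=
  Finsupp.lift (BW κ R) R (List (Option κ)) fun ls => mapBW k R (F (Finsupp.single ls 1))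

/-- Truncated exponential `Σ_{i<N} F^i/i!` of an endomorphism (equal to `exp F` whenever
the coefficients of `F` lie in `m` with `m^N = 0`). -/
noncomputable def expEnd (N : ℕ) (F : Module.End R (BW κ R)) : Module.End R (BW κ R) :=
  ∑ i ∈ Finset.range N, algebraMap k R ((i.factorial : k)⁻¹) • F ^ i

/-- The gauge action `e^α • μ = μ + Σᵢ ad_α^i/(i+1)!·([α,μ] − ∂α)` of a degree-0 element
`α` on a degree-1 element `μ`, where `∂α = [Db, α]` (a finite sum: all terms beyond `N`
vanish). -/
noncomputable def gaugeEnd (N : ℕ) (Db : Module.End R (BW κ R))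
    (α μ : Module.End R (BW κ R)) : Module.End R (BW κ R) :=
  μ + ∑ i ∈ Finset.range N, algebraMap k R (((i + 1).factorial : k)⁻¹) •
    (fun y => α * y - y * α)^[i] ((α * μ - μ * α) - (Db * α - α * Db))

end NCB

/-!
The unit axioms fix a curved `A∞`-structure on all words containing `1_A`, so two unital structures
differ by a normalized coderivation and `x ↦ b + x` is a bijection onto the deformations. The
gauge action of `d` is the conjugation of `b + x` by `exp d`, and the exponential of a coderivation
of degree `0` is an isomorphism of coalgebras; gauge equivalent elements therefore give isomorphic
deformations.

Conversely, the logarithm of an isomorphism `f` of deformations need not be normalized, and it is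
corrected one power of the maximal ideal at a time. If `f = (1 + ε) exp d` with `d` normalized and
`ε = 0` modulo `mⁱ`, then modulo `mⁱ⁺¹` the error `ε` is a coderivation whose differential is
normalized. A homotopy inserting the unit shows that `ε` is cohomologous to a normalized
coderivation `Θ`, say `ε + [b, Ψ] ≡ Θ`. As `[b', Ψ]` commutes with the target structure `b'`,
replacing `f` by `exp [b', Ψ] ∘ f` gives another isomorphism, which agrees with `exp (d + Θ)`
modulo `mⁱ⁺¹`.
-/

namespace NCB

section Sign

variable (S : Type) [CommRing S]

theorem sgn_zero : sgn S 0 = 1 := by simp [sgn]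

theorem sgn_one : sgn S 1 = -1 := by simp [sgn]

theorem sgn_neg (a : ℤ) : sgn S (-a) = sgn S a := by simp [sgn]

theorem sgn_add (a b : ℤ) : sgn S (a + b) = sgn S a * sgn S b := by
  by_cases ha : Even a <;> by_cases hb : Even b <;> simp [sgn, ha, hb, Int.even_add]

theorem sgn_sub (a b : ℤ) : sgn S (a - b) = sgn S a * sgn S b := by
  rw [sub_eq_add_neg, sgn_add, sgn_neg]

theorem sgn_mul_self (a : ℤ) : sgn S a * sgn S a = 1 := by
  by_cases ha : Even a <;> simp [sgn, ha]

theorem algebraMap_sgn (k R : Type) [CommRing k] [CommRing R] [Algebra k R] (a : ℤ) :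
    algebraMap k R (sgn k a) = sgn R a := by
  by_cases ha : Even a <;> simp [sgn, ha]

end Sign

section SplitSum

variable {α M : Type*} [AddCommMonoid M]

/-- The sum of `f p q` over all splittings `w = p ++ q` of a word: the shape of every formula
involving the deconcatenation comultiplication. -/
def splitSum (f : List α → List α → M) (w : List α) : M :=
  ∑ i ∈ Finset.range (w.length + 1), f (w.take i) (w.drop i)

theorem splitSum_nil (f : List α → List α → M) : splitSum f [] = f [] [] := by
  simp [splitSum]

theorem splitSum_cons (f : List α → List α → M) (a : α) (w : List α) :
    splitSum f (a :: w) = f [] (a :: w) + splitSum (fun p q => f (a :: p) q) w := by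
  simp only [splitSum, List.length_cons]
  rw [Finset.sum_range_succ', add_comm]
  simp

theorem splitSum_congr {f g : List α → List α → M} {w : List α}
    (h : ∀ p q, p ++ q = w → f p q = g p q) : splitSum f w = splitSum g w :=
  Finset.sum_congr rfl fun _ _ => h _ _ (List.take_append_drop _ _)

theorem splitSum_eq_zero {f : List α → List α → M} {w : List α}
    (h : ∀ p q, p ++ q = w → f p q = 0) : splitSum f w = 0 :=
  Finset.sum_eq_zero fun _ _ => h _ _ (List.take_append_drop _ _)

theorem splitSum_add (f g : List α → List α → M) (w : List α) :
    splitSum (fun p q => f p q + g p q) w = splitSum f w + splitSum g w :=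
  Finset.sum_add_distrib

theorem splitSum_neg {M : Type*} [AddCommGroup M] (f : List α → List α → M) (w : List α) :
    splitSum (fun p q => -f p q) w = -splitSum f w :=
  Finset.sum_neg_distrib _

theorem smul_splitSum {R : Type*} [Monoid R] [DistribMulAction R M] (r : R)
    (f : List α → List α → M) (w : List α) :
    r • splitSum f w = splitSum (fun p q => r • f p q) w :=
  Finset.smul_sum

theorem map_splitSum {M' F : Type*} [AddCommMonoid M'] [FunLike F M M']
    [AddMonoidHomClass F M M'] (φ : F) (f : List α → List α → M) (w : List α) :
    φ (splitSum f w) = splitSum (fun p q => φ (f p q)) w :=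
  map_sum _ _ _

theorem splitSum_mem {R : Type*} [Semiring R] [Module R M] (N : Submodule R M)
    {f : List α → List α → M} {w : List α} (h : ∀ p q, p ++ q = w → f p q ∈ N) :
    splitSum f w ∈ N :=
  N.sum_mem fun _ _ => h _ _ (List.take_append_drop _ _)

theorem splitSum_append_cons (f : List α → List α → M) (u : List α) (a : α) (w : List α) :
    splitSum f (u ++ a :: w) =
      splitSum (fun p q => f p (q ++ a :: w)) u + splitSum (fun p q => f (u ++ a :: p) q) w := by
  induction u generalizing f with
  | nil => simp [splitSum_cons, splitSum_nil]
  | cons b u ih => rw [List.cons_append, splitSum_cons, ih, splitSum_cons]; simp [add_assoc]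

theorem splitSum_assoc (f : List α → List α → List α → M) (w : List α) :
    splitSum (fun x r => splitSum (fun y z => f x y z) r) w =
      splitSum (fun r z => splitSum (fun x y => f x y z) r) w := by
  induction w generalizing f with
  | nil => simp [splitSum_nil]
  | cons a w ih =>
    rw [splitSum_cons, splitSum_cons, ih, splitSum_cons, splitSum_nil, add_assoc,
      ← splitSum_add]
    exact congrArg _ (splitSum_congr fun p q _ => by rw [splitSum_cons])

theorem splitSum_comm {β : Type*} (f : List α → List α → List β → List β → M) (w : List α)
    (w' : List β) :
    splitSum (fun p q => splitSum (fun p' q' => f p q p' q') w') w =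
      splitSum (fun p' q' => splitSum (fun p q => f p q p' q') w) w' :=
  Finset.sum_comm

theorem splitSum_eq_nil_left {f : List α → List α → M} {w : List α}
    (h : ∀ p q, p ++ q = w → p ≠ [] → f p q = 0) : splitSum f w = f [] w := by
  cases w with
  | nil => exact splitSum_nil f
  | cons a w =>
    rw [splitSum_cons, splitSum_eq_zero, add_zero]
    exact fun p q hpq => h _ _ (by simp [hpq]) (by simp)

theorem splitSum_eq_nil_right {f : List α → List α → M} {w : List α}
    (h : ∀ p q, p ++ q = w → q ≠ [] → f p q = 0) : splitSum f w = f w [] := by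
  induction w generalizing f with
  | nil => exact splitSum_nil f
  | cons a w ih =>
    rw [splitSum_cons, ih fun p q hpq => h _ _ (by simp [hpq]), h [] _ (by simp) (by simp),
      zero_add]

end SplitSum

section Tensor

variable {S : Type} [CommRing S] {κ : Type} (dg : κ → ℤ)

theorem dgO_none : dgO dg none = 0 := rfl

theorem epsO_nil : epsO dg [] = 0 := by simp [epsO]

theorem epsO_cons (a : Option κ) (w : List (Option κ)) :
    epsO dg (a :: w) = dgO dg a - 1 + epsO dg w := by
  simp [epsO]

theorem epsO_append (u w : List (Option κ)) : epsO dg (u ++ w) = epsO dg u + epsO dg w := by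
  simp [epsO]

/-- The map `v ↦ v ⊗ q` for a fixed word `q`. -/
noncomputable def tmulWord (q : List (Option κ)) : BW κ S →ₗ[S] BW2 κ S :=
  lmapDomain S S fun p => (p, q)

/-- The map `v ↦ p ⊗ v` for a fixed word `p`, without a sign. -/
noncomputable def wordTmul (p : List (Option κ)) : BW κ S →ₗ[S] BW2 κ S :=
  lmapDomain S S fun q => (p, q)

theorem tmulWord_single (p q : List (Option κ)) (c : S) :
    tmulWord q (single p c) = single (p, q) c := mapDomain_single

theorem wordTmul_single (p q : List (Option κ)) (c : S) :
    wordTmul p (single q c) = single (p, q) c := mapDomain_single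

theorem tmulWord_apply (v : BW κ S) (p q r : List (Option κ)) :
    tmulWord r v (p, q) = if r = q then v p else 0 := by
  split_ifs with h
  · subst h
    exact mapDomain_apply (fun _ _ h => (Prod.mk.inj h).1) v p
  · exact mapDomain_of_notMem_range _ _ (by simp [h])

theorem wordTmul_apply (v : BW κ S) (p q r : List (Option κ)) :
    wordTmul r v (p, q) = if r = p then v q else 0 := by
  split_ifs with h
  · subst h
    exact mapDomain_apply (fun _ _ h => (Prod.mk.inj h).2) v q
  · exact mapDomain_of_notMem_range _ _ (by simp [h])

theorem BW.hom_ext {M : Type*} [AddCommGroup M] [Module S M] {F G : BW κ S →ₗ[S] M}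
    (h : ∀ w, F (single w 1) = G (single w 1)) : F = G :=
  Finsupp.lhom_ext' fun w => LinearMap.ext_ring (h w)

theorem BW2.hom_ext {M : Type*} [AddCommGroup M] [Module S M] {F G : BW2 κ S →ₗ[S] M}
    (h : ∀ p q, F (single (p, q) 1) = G (single (p, q) 1)) : F = G :=
  Finsupp.lhom_ext' fun w => LinearMap.ext_ring (h w.1 w.2)

theorem comul_single (w : List (Option κ)) :
    comul S (single w (1 : S)) = splitSum (fun p q => single (p, q) 1) w := by
  simp [comul, splitSum]

theorem tensL_single (F : Module.End S (BW κ S)) (p q : List (Option κ)) :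
    tensL S F (single (p, q) 1) = tmulWord q (F (single p 1)) := by
  simp [tensL, tmulWord, Finsupp.mapDomain]

theorem tensR_single (d : ℤ) (F : Module.End S (BW κ S)) (p q : List (Option κ)) :
    tensR S dg d F (single (p, q) 1) = sgn S (d * epsO dg p) • wordTmul p (F (single q 1)) := by
  simp [tensR, wordTmul, Finsupp.mapDomain]

theorem tensL_tmulWord (F : Module.End S (BW κ S)) (q : List (Option κ)) (v : BW κ S) :
    tensL S F (tmulWord q v) = tmulWord q (F v) := by
  have : tensL S F ∘ₗ tmulWord q = tmulWord q ∘ₗ F := BW.hom_ext fun w => by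
    rw [LinearMap.comp_apply, LinearMap.comp_apply, tmulWord_single, tensL_single]
  exact LinearMap.congr_fun this v

theorem tensR_wordTmul (d : ℤ) (F : Module.End S (BW κ S)) (p : List (Option κ))
    (v : BW κ S) :
    tensR S dg d F (wordTmul p v) = sgn S (d * epsO dg p) • wordTmul p (F v) := by
  have : tensR S dg d F ∘ₗ wordTmul p = sgn S (d * epsO dg p) • (wordTmul p ∘ₗ F) :=
    BW.hom_ext fun w => by
      rw [LinearMap.comp_apply, LinearMap.smul_apply, LinearMap.comp_apply, wordTmul_single,
        tensR_single]
  exact LinearMap.congr_fun this v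

theorem tensL_wordTmul (F : Module.End S (BW κ S)) (p : List (Option κ)) (v : BW κ S) :
    tensL S F (wordTmul p v) = (F (single p 1)).sum fun p' c => c • wordTmul p' v := by
  induction v using Finsupp.induction_linear with
  | zero => simp
  | add v v' hv hv' =>
    rw [map_add, map_add, hv, hv', ← Finsupp.sum_add]
    exact Finsupp.sum_congr fun x _ => by rw [map_add, smul_add]
  | single a b =>
    have hb : (single a b : BW κ S) = b • single a 1 := by simp
    rw [hb, map_smul, map_smul, wordTmul_single, tensL_single, tmulWord, lmapDomain_apply,
      mapDomain, Finsupp.smul_sum]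
    exact Finsupp.sum_congr fun x _ => by rw [map_smul, wordTmul_single]; simp [mul_comm]

theorem tensL_mul (F G : Module.End S (BW κ S)) :
    tensL S (F * G) = tensL S F * tensL S G :=
  BW2.hom_ext fun p q => by
    rw [Module.End.mul_apply, tensL_single, tensL_single, tensL_tmulWord, Module.End.mul_apply]

theorem tensL_add (F G : Module.End S (BW κ S)) :
    tensL S (F + G) = tensL S F + tensL S G :=
  BW2.hom_ext fun p q => by simp only [LinearMap.add_apply, tensL_single, map_add]

theorem tensL_smul (r : S) (F : Module.End S (BW κ S)) : tensL S (r • F) = r • tensL S F :=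
  BW2.hom_ext fun p q => by simp only [LinearMap.smul_apply, tensL_single, map_smul]

theorem tensL_one : tensL S (1 : Module.End S (BW κ S)) = 1 :=
  BW2.hom_ext fun p q => by simp [tensL_single, tmulWord_single]

theorem tensR_mul (a b : ℤ) (F G : Module.End S (BW κ S)) :
    tensR S dg (a + b) (F * G) = tensR S dg a F * tensR S dg b G :=
  BW2.hom_ext fun p q => by
    rw [Module.End.mul_apply, tensR_single, tensR_single, map_smul, tensR_wordTmul,
      Module.End.mul_apply, smul_smul, add_mul, sgn_add, mul_comm]

theorem tensR_add (d : ℤ) (F G : Module.End S (BW κ S)) :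
    tensR S dg d (F + G) = tensR S dg d F + tensR S dg d G :=
  BW2.hom_ext fun p q => by simp only [LinearMap.add_apply, tensR_single, map_add, smul_add]

theorem tensR_smul (d : ℤ) (r : S) (F : Module.End S (BW κ S)) :
    tensR S dg d (r • F) = r • tensR S dg d F :=
  BW2.hom_ext fun p q => by
    simp only [LinearMap.smul_apply, tensR_single, map_smul]
    rw [smul_comm]

theorem tensR_one : tensR S dg 0 (1 : Module.End S (BW κ S)) = 1 :=
  BW2.hom_ext fun p q => by simp [tensR_single, wordTmul_single, sgn_zero]

theorem tens2_eq_tensL_mul_tensR (F G : Module.End S (BW κ S)) :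
    tens2 S F G = tensL S F * tensR S dg 0 G :=
  BW2.hom_ext fun p q => by
    rw [Module.End.mul_apply, tensR_single, zero_mul, sgn_zero, one_smul, tensL_wordTmul]
    simp [tens2, wordTmul, Finsupp.mapDomain]

theorem tensR_mul_tensL (a b : ℤ) (F G : Module.End S (BW κ S)) (hF : HomogEnd S dg a F) :
    tensR S dg b G * tensL S F = sgn S (a * b) • (tensL S F * tensR S dg b G) := by
  refine BW2.hom_ext fun p q => ?_
  rw [LinearMap.smul_apply, Module.End.mul_apply, Module.End.mul_apply, tensR_single,
    tensL_single, map_smul, tensL_wordTmul, tmulWord, lmapDomain_apply, mapDomain,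
    map_finsuppSum, Finsupp.smul_sum, Finsupp.smul_sum]
  refine Finsupp.sum_congr fun x hx => ?_
  have hc : (single (x, q) (F (single p 1) x) : BW2 κ S) =
      F (single p 1) x • single (x, q) 1 := by simp
  rw [hc, map_smul, tensR_single, hF p x hx, mul_add, sgn_add, mul_comm b a, mul_smul,
    smul_comm (sgn S (b * epsO dg p)), smul_comm (F (single p 1) x),
    smul_comm (F (single p 1) x)]

end Tensor

section Coderivation

variable {S : Type} [CommRing S] {κ : Type} (dg : κ → ℤ)

theorem tensL_sub (F G : Module.End S (BW κ S)) :
    tensL S (F - G) = tensL S F - tensL S G :=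
  BW2.hom_ext fun p q => by simp only [LinearMap.sub_apply, tensL_single, map_sub]

theorem tensR_sub (d : ℤ) (F G : Module.End S (BW κ S)) :
    tensR S dg d (F - G) = tensR S dg d F - tensR S dg d G :=
  BW2.hom_ext fun p q => by simp only [LinearMap.sub_apply, tensR_single, map_sub, smul_sub]

variable (S) in
/-- The coderivations of degree `d`, without the homogeneity condition. -/
def coderSubmodule (d : ℤ) : Submodule S (Module.End S (BW κ S)) where
  carrier := {F | IsCoder S dg d F}
  zero_mem' := by
    have hL := tensL_smul (0 : S) (0 : Module.End S (BW κ S))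
    have hR := tensR_smul dg d (0 : S) (0 : Module.End S (BW κ S))
    rw [zero_smul, zero_smul] at hL hR
    change comul S ∘ₗ 0 = tensL S 0 ∘ₗ comul S + tensR S dg d 0 ∘ₗ comul S
    rw [hL, hR]
    simp
  add_mem' {F G} hF hG := by
    change comul S ∘ₗ F = _ at hF
    change comul S ∘ₗ G = _ at hG
    change comul S ∘ₗ (F + G) = _
    rw [LinearMap.comp_add, hF, hG, tensL_add, tensR_add, LinearMap.add_comp, LinearMap.add_comp]
    abel
  smul_mem' r F hF := by
    change comul S ∘ₗ F = _ at hF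
    change comul S ∘ₗ (r • F) = _
    rw [LinearMap.comp_smul, hF, tensL_smul, tensR_smul, LinearMap.smul_comp,
      LinearMap.smul_comp, smul_add]

variable (S) in
/-- The endomorphisms of the bar coalgebra that are homogeneous of degree `d`. -/
def homogSubmodule (d : ℤ) : Submodule S (Module.End S (BW κ S)) where
  carrier := {F | HomogEnd S dg d F}
  zero_mem' ls ms h := by simp at h
  add_mem' {F G} hF hG ls ms h := by
    rcases Finset.mem_union.1 (Finsupp.support_add h) with h | h
    exacts [hF ls ms h, hG ls ms h]
  smul_mem' r F hF ls ms h := hF ls ms (Finsupp.support_smul h)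

variable (κ) in
/-- The endomorphisms of the bar coalgebra with matrix coefficients in the ideal `J`. -/
def coeffSubmodule (J : Ideal S) : Submodule S (Module.End S (BW κ S)) where
  carrier := {F | CoeffIn S J F}
  zero_mem' _ _ := J.zero_mem
  add_mem' hF hG ls ms := J.add_mem (hF ls ms) (hG ls ms)
  smul_mem' r _ hF ls ms := J.mul_mem_left r (hF ls ms)

variable (κ) in
theorem coeffSubmodule_bot : coeffSubmodule κ (⊥ : Ideal S) = ⊥ := by
  refine (Submodule.eq_bot_iff _).2 fun G hG => BW.hom_ext fun w => ?_
  ext ms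
  simpa using hG w ms

variable (S κ) in
/-- Hochschild cochains: families of maps `A[1]^{⊗n} → A[1]` for all `n ≥ 0` at once, given by
their values on basis words. -/
abbrev Cochain := List (Option κ) → Avs κ S

/-- The components `A[1]^{⊗n} → A[1]` of an endomorphism of the bar coalgebra. -/
noncomputable def components (F : Module.End S (BW κ S)) : Cochain S κ :=
  fun w => proj1 S (F (single w 1))

theorem components_add (F G : Module.End S (BW κ S)) :
    components (F + G) = components F + components G :=
  funext fun w => map_add (proj1 S) (F (single w 1)) (G (single w 1))

theorem components_sub (F G : Module.End S (BW κ S)) :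
    components (F - G) = components F - components G :=
  funext fun w => map_sub (proj1 S) (F (single w 1)) (G (single w 1))

theorem comul_apply (v : BW κ S) (p q : List (Option κ)) : comul S v (p, q) = v (p ++ q) := by
  have : (Finsupp.lapply (p, q) : BW2 κ S →ₗ[S] S) ∘ₗ comul S = Finsupp.lapply (p ++ q) := by
    refine BW.hom_ext fun w => ?_
    rw [LinearMap.comp_apply, comul_single, lapply_apply, lapply_apply, splitSum,
      Finsupp.finsetSum_apply]
    by_cases hw : w = p ++ q
    · subst hw
      rw [Finset.sum_eq_single p.length]
      · simp
      · intro i hi hip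
        rw [single_apply, if_neg]
        intro h
        have := congrArg (List.length ∘ Prod.fst) h
        simp at this hi
        omega
      · simp
    · rw [single_apply, if_neg hw]
      refine Finset.sum_eq_zero fun i _ => ?_
      rw [single_apply, if_neg]
      intro h
      obtain ⟨rfl, rfl⟩ := Prod.mk.inj h
      exact hw (List.take_append_drop i w).symm
  exact LinearMap.congr_fun this v

theorem proj1_apply (v : BW κ S) (c : Option κ) : proj1 S v c = v [c] := by
  have : (Finsupp.lapply c : Avs κ S →ₗ[S] S) ∘ₗ proj1 S = Finsupp.lapply [c] := by
    refine BW.hom_ext fun w => ?_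
    rw [LinearMap.comp_apply, lapply_apply, lapply_apply]
    match w with
    | [] => simp [proj1]
    | [x] => simp [proj1, single_apply]
    | x :: y :: t => simp [proj1]
  exact LinearMap.congr_fun this v

theorem tensL_comul_apply (F : Module.End S (BW κ S)) (w p q : List (Option κ)) :
    tensL S F (comul S (single w 1)) (p, q) =
      splitSum (fun a b => if b = q then F (single a 1) p else 0) w := by
  rw [comul_single, map_splitSum]
  change Finsupp.lapply (R := S) (p, q) _ = _
  rw [map_splitSum]
  exact splitSum_congr fun a b _ => by rw [tensL_single, lapply_apply, tmulWord_apply]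

theorem tensR_comul_apply (d : ℤ) (F : Module.End S (BW κ S)) (w p q : List (Option κ)) :
    tensR S dg d F (comul S (single w 1)) (p, q) =
      splitSum (fun a b => if a = p then sgn S (d * epsO dg p) * F (single b 1) q else 0) w := by
  rw [comul_single, map_splitSum]
  change Finsupp.lapply (R := S) (p, q) _ = _
  rw [map_splitSum]
  refine splitSum_congr fun a b _ => ?_
  rw [tensR_single, lapply_apply, Finsupp.smul_apply, wordTmul_apply]
  split_ifs with h
  · rw [h, smul_eq_mul]
  · exact smul_zero _

/-- `G` satisfies the coderivation identity modulo the ideal `J`. -/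
def IsCoderMod (J : Ideal S) (d : ℤ) (G : Module.End S (BW κ S)) : Prop :=
  ∀ w p q, (comul S (G (single w 1)) - tensL S G (comul S (single w 1))
    - tensR S dg d G (comul S (single w 1)) : BW2 κ S) (p, q) ∈ J

variable {dg}

theorem IsCoder.isCoderMod {d : ℤ} {F : Module.End S (BW κ S)} (hF : IsCoder S dg d F)
    (J : Ideal S) : IsCoderMod dg J d F := by
  intro w p q
  have hw : comul S (F (single w 1)) =
      tensL S F (comul S (single w 1)) + tensR S dg d F (comul S (single w 1)) :=
    LinearMap.congr_fun hF (single w 1)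
  rw [hw, add_sub_cancel_left, sub_self]
  exact J.zero_mem

theorem IsCoderMod.apply_nil_mem {J : Ideal S} {d : ℤ} {G : Module.End S (BW κ S)}
    (hG : IsCoderMod dg J d G) (w : List (Option κ)) : G (single w 1) [] ∈ J := by
  have h := hG w [] []
  simp only [Finsupp.sub_apply, comul_apply, tensL_comul_apply, tensR_comul_apply] at h
  rw [splitSum_eq_nil_right (fun p q _ hq => by simp [hq]),
    splitSum_eq_nil_left (fun p q _ hq => by simp [hq])] at h
  simpa [epsO_nil, sgn_zero] using h

theorem IsCoderMod.apply_cons_cons_mem {J : Ideal S} {d : ℤ} {G : Module.End S (BW κ S)}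
    (hG : IsCoderMod dg J d G) {w : List (Option κ)}
    (ih : ∀ w' : List (Option κ), w'.length < w.length → ∀ ms, G (single w' 1) ms ∈ J)
    (c e : Option κ) (t : List (Option κ)) : G (single w 1) (c :: e :: t) ∈ J := by
  have h := hG w [c] (e :: t)
  simp only [Finsupp.sub_apply, comul_apply, tensL_comul_apply, tensR_comul_apply] at h
  have hL : splitSum (fun a b => if b = e :: t then G (single a 1) [c] else 0) w ∈ J := by
    refine splitSum_mem J fun a b hab => ?_
    split_ifs with hb
    · exact ih _ (by simp [← hab, hb]) _
    · exact J.zero_mem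
  have hR : splitSum (fun a b => if a = [c] then
      sgn S (d * epsO dg [c]) * G (single b 1) (e :: t) else 0) w ∈ J := by
    refine splitSum_mem J fun a b hab => ?_
    split_ifs with ha
    · exact J.mul_mem_left _ (ih _ (by simp [← hab, ha]) _)
    · exact J.zero_mem
  simpa using J.add_mem (J.add_mem h hR) hL

theorem IsCoderMod.coeffIn {J : Ideal S} {d : ℤ} {G : Module.End S (BW κ S)}
    (hG : IsCoderMod dg J d G) (h1 : ∀ w c, components G w c ∈ J) : CoeffIn S J G := by
  intro w
  induction hn : w.length using Nat.strong_induction_on generalizing w with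
  | _ n ih =>
    subst hn
    intro ms
    match ms with
    | [] => exact hG.apply_nil_mem w
    | [c] => exact proj1_apply (G (single w 1)) c ▸ h1 w c
    | c :: e :: t => exact hG.apply_cons_cons_mem (fun w' hw' => ih _ hw' w' rfl) c e t

theorem IsCoder.ext {d : ℤ} {F G : Module.End S (BW κ S)} (hF : IsCoder S dg d F)
    (hG : IsCoder S dg d G) (h : components F = components G) : F = G := by
  have hFG : IsCoder S dg d (F - G) :=
    Submodule.sub_mem (coderSubmodule S dg d) (x := F) (y := G) hF hG
  rw [← sub_eq_zero, ← Submodule.mem_bot S, ← coeffSubmodule_bot]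
  refine (hFG.isCoderMod ⊥).coeffIn fun w c => ?_
  rw [components_sub, h, sub_self]
  exact Ideal.zero_mem _

/-- The map `a ↦ x ++ a ++ z` inserting a letter between two words. -/
noncomputable def surround (x z : List (Option κ)) : Avs κ S →ₗ[S] BW κ S :=
  lmapDomain S S fun c => x ++ c :: z

theorem surround_single (x z : List (Option κ)) (c : Option κ) (r : S) :
    surround x z (single c r) = single (x ++ c :: z) r := by simp [surround]

theorem Avs.hom_ext {M : Type*} [AddCommGroup M] [Module S M] {F G : Avs κ S →ₗ[S] M}
    (h : ∀ c, F (single c 1) = G (single c 1)) : F = G :=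
  Finsupp.lhom_ext' fun c => LinearMap.ext_ring (h c)

theorem comul_surround (x z : List (Option κ)) (a : Avs κ S) :
    comul S (surround x z a) =
      splitSum (fun p q => wordTmul p (surround q z a)) x +
      splitSum (fun p q => tmulWord q (surround x p a)) z := by
  induction a using Finsupp.induction_linear with
  | zero => simp [splitSum]
  | add f g hf hg => simp only [map_add, hf, hg, splitSum_add]; abel
  | single c r =>
    have hr : (single c r : Avs κ S) = r • single c 1 := by simp
    rw [hr]
    simp only [map_smul, surround_single, ← smul_splitSum, ← smul_add]
    rw [comul_single, splitSum_append_cons]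
    simp only [wordTmul_single, tmulWord_single]

theorem proj1_surround (x z : List (Option κ)) (a : Avs κ S) :
    proj1 S (surround x z a) = if x = [] ∧ z = [] then a else 0 := by
  have : proj1 S ∘ₗ surround x z =
      if x = [] ∧ z = [] then LinearMap.id else (0 : Avs κ S →ₗ[S] Avs κ S) := by
    refine Avs.hom_ext fun c => ?_
    ext e
    rw [LinearMap.comp_apply, surround_single, proj1_apply, single_apply]
    rcases x with _ | ⟨x1, x⟩
    · rcases z with _ | ⟨z1, z⟩ <;> simp [single_apply]
    · simp
  rw [← LinearMap.comp_apply, this]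
  split_ifs <;> rfl

variable (dg)

/-- The coderivation of degree `d` with components `φ`. -/
noncomputable def coderOf (d : ℤ) (φ : Cochain S κ) : Module.End S (BW κ S) :=
  Finsupp.lift (BW κ S) S (List (Option κ)) fun w =>
    splitSum (fun x r => splitSum
      (fun y z => sgn S (d * epsO dg x) • surround x z (φ y)) r) w

theorem coderOf_single (d : ℤ) (φ : Cochain S κ) (w : List (Option κ)) :
    coderOf dg d φ (single w 1) = splitSum (fun x r => splitSum
      (fun y z => sgn S (d * epsO dg x) • surround x z (φ y)) r) w := by
  simp [coderOf]

theorem isCoder_coderOf (d : ℤ) (φ : Cochain S κ) :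
    IsCoder S dg d (coderOf dg d φ) := by
  refine BW.hom_ext fun w => ?_
  simp only [LinearMap.comp_apply, LinearMap.add_apply]
  rw [coderOf_single, comul_single]
  simp only [map_splitSum, map_smul, comul_surround, tensL_single, tensR_single, coderOf_single,
    smul_add, splitSum_add, smul_splitSum]
  rw [add_comm]
  refine congrArg₂ (· + ·) ?_ ?_
  · rw [← splitSum_assoc]
    exact splitSum_congr fun x r _ => by rw [← splitSum_assoc]
  · rw [splitSum_assoc (fun p q r => splitSum (fun y z => sgn S (d * epsO dg p) •
      sgn S (d * epsO dg q) • wordTmul p (surround q z (φ y) : BW κ S)) r) w]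
    refine splitSum_congr fun x r _ => (splitSum_comm _ _ _).trans ?_
    refine splitSum_congr fun p q hpq => splitSum_congr fun y z _ => ?_
    rw [← hpq, epsO_append, mul_add, sgn_add, mul_smul]

theorem components_coderOf (d : ℤ) (φ : Cochain S κ) :
    components (coderOf dg d φ) = φ := by
  funext w
  rw [components, coderOf_single]
  simp only [map_splitSum, map_smul, proj1_surround]
  rw [splitSum_eq_nil_left, splitSum_eq_nil_right]
  · simp [epsO_nil, sgn_zero]
  · intro p q _ hq
    simp [hq]
  · intro p q _ hp
    exact splitSum_eq_zero fun y z _ => by simp [hp]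

variable {dg}

theorem IsCoder.eq_coderOf {d : ℤ} {F : Module.End S (BW κ S)} (hF : IsCoder S dg d F) :
    F = coderOf dg d (components F) :=
  hF.ext (isCoder_coderOf dg d _) (components_coderOf dg d _).symm

theorem IsCoder.comul_comp_mul {a b : ℤ} {F G : Module.End S (BW κ S)}
    (hF : IsCoder S dg a F) (hG : IsCoder S dg b G) (hG' : HomogEnd S dg b G) :
    comul S ∘ₗ (F * G) = (tensL S F * tensL S G + tensL S F * tensR S dg b G
      + sgn S (a * b) • (tensL S G * tensR S dg a F) + tensR S dg a F * tensR S dg b G) ∘ₗ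
      comul S := by
  unfold IsCoder at *
  rw [Module.End.mul_eq_comp, ← LinearMap.comp_assoc, hF, LinearMap.add_comp,
    LinearMap.comp_assoc, LinearMap.comp_assoc, hG, mul_comm a b,
    ← tensR_mul_tensL dg b a G F hG']
  ext1
  simp only [LinearMap.comp_add, LinearMap.add_comp, Module.End.mul_eq_comp,
    LinearMap.comp_assoc]
  abel_nf

theorem IsCoder.bracket {a b : ℤ} {F G : Module.End S (BW κ S)} (hF : IsCoder S dg a F)
    (hG : IsCoder S dg b G) (hF' : HomogEnd S dg a F) (hG' : HomogEnd S dg b G) :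
    IsCoder S dg (a + b) (F * G - sgn S (a * b) • (G * F)) := by
  have hL : tensL S (F * G - sgn S (a * b) • (G * F)) =
      tensL S F * tensL S G - sgn S (a * b) • (tensL S G * tensL S F) := by
    rw [tensL_sub, tensL_smul, tensL_mul, tensL_mul]
  have hR : tensR S dg (a + b) (F * G - sgn S (a * b) • (G * F)) =
      tensR S dg a F * tensR S dg b G - sgn S (a * b) • (tensR S dg b G * tensR S dg a F) := by
    rw [tensR_sub, tensR_smul, tensR_mul, add_comm a b, tensR_mul]
  unfold IsCoder
  rw [LinearMap.comp_sub, LinearMap.comp_smul, hF.comul_comp_mul hG hG',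
    hG.comul_comp_mul hF hF', hL, hR, ← LinearMap.smul_comp, ← LinearMap.sub_comp,
    ← LinearMap.add_comp]
  congr 1
  simp only [smul_add, smul_smul, mul_comm b a, sgn_mul_self, one_smul]
  abel

end Coderivation

section Homogeneity

variable {S : Type} [CommRing S] {κ : Type} {dg : κ → ℤ}

theorem homogEnd_iff {d : ℤ} {F : Module.End S (BW κ S)} : HomogEnd S dg d F ↔
    ∀ w, F (single w 1) ∈ Finsupp.supported S S {ms | epsO dg ms = epsO dg w + d} :=
  Iff.rfl

theorem homogEnd_one : HomogEnd S dg 0 (1 : Module.End S (BW κ S)) := by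
  intro w ms h
  rw [Module.End.one_apply] at h
  rw [Finset.mem_singleton.1 (Finsupp.support_single_subset h), add_zero]

theorem HomogEnd.mul {a b : ℤ} {F G : Module.End S (BW κ S)} (hF : HomogEnd S dg a F)
    (hG : HomogEnd S dg b G) : HomogEnd S dg (a + b) (F * G) := by
  refine homogEnd_iff.2 fun w => ?_
  rw [Module.End.mul_apply, ← Finsupp.sum_single (G (single w 1)), map_finsuppSum]
  refine Submodule.sum_mem _ fun x hx => ?_
  have hc : (single x (G (single w 1) x) : BW κ S) = G (single w 1) x • single x 1 := by simp
  have hFx := homogEnd_iff.1 hF x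
  rw [hG w x hx, add_assoc, add_comm b a] at hFx
  beta_reduce
  rw [hc, map_smul]
  exact Submodule.smul_mem _ _ hFx

variable (dg) in
/-- The cochain `φ` is homogeneous of degree `d` for the suspended grading. -/
def HomogCochain (d : ℤ) (φ : Cochain S κ) : Prop :=
  ∀ w c, φ w c ≠ 0 → dgO dg c - 1 = epsO dg w + d

theorem HomogEnd.homogCochain {d : ℤ} {F : Module.End S (BW κ S)} (hF : HomogEnd S dg d F) :
    HomogCochain dg d (components F) := by
  intro w c h
  rw [components, proj1_apply] at h
  rw [← hF w [c] (Finsupp.mem_support_iff.2 h)]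
  simp [epsO]

theorem HomogCochain.homogEnd_coderOf {d : ℤ} {φ : Cochain S κ} (h : HomogCochain dg d φ) :
    HomogEnd S dg d (coderOf dg d φ) := by
  refine homogEnd_iff.2 fun w => ?_
  rw [coderOf_single]
  refine splitSum_mem _ fun x r hxr => splitSum_mem _ fun y z hyz => Submodule.smul_mem _ _ ?_
  rw [← Finsupp.sum_single (φ y), map_finsuppSum]
  refine Submodule.sum_mem _ fun c hc => ?_
  beta_reduce
  rw [surround_single]
  refine Finsupp.single_mem_supported _ _ ?_
  have hdeg := h y c (Finsupp.mem_support_iff.1 hc)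
  rw [Set.mem_ofPred_eq, ← hxr, ← hyz, epsO_append, epsO_cons, epsO_append, epsO_append, hdeg]
  ring

end Homogeneity

section Brace

variable {S : Type} [CommRing S] {κ : Type} (dg : κ → ℤ)

/-- The map `a ↦ β(x, a, z)` evaluating a cochain with one free argument. -/
noncomputable def plug (β : Cochain S κ) (x z : List (Option κ)) : Avs κ S →ₗ[S] Avs κ S :=
  Finsupp.lift _ S _ fun c => β (x ++ c :: z)

theorem plug_single (β : Cochain S κ) (x z : List (Option κ)) (c : Option κ) :
    plug β x z (single c 1) = β (x ++ c :: z) := by simp [plug]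

theorem plug_eq_sum (β : Cochain S κ) (x z : List (Option κ)) (a : Avs κ S) :
    plug β x z a = a.sum fun c r => r • β (x ++ c :: z) := by simp [plug]

theorem plug_eq_zero_of_forall {β : Cochain S κ} {x z : List (Option κ)}
    (h : ∀ c, β (x ++ c :: z) = 0) (a : Avs κ S) : plug β x z a = 0 := by
  rw [plug_eq_sum]
  exact Finset.sum_eq_zero fun c _ => by beta_reduce; rw [h, smul_zero]

/-- The brace `β{φ}`, with value `Σ ± β(x, φ(y), z)` on `w = x ++ y ++ z`, for `φ` of
degree `d`. -/
noncomputable def brace (β : Cochain S κ) (d : ℤ) (φ : Cochain S κ) : Cochain S κ :=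
  splitSum fun x r => splitSum (fun y z => sgn S (d * epsO dg x) • plug β x z (φ y)) r

theorem components_mul_coderOf (F : Module.End S (BW κ S)) (d : ℤ) (φ : Cochain S κ) :
    components (F * coderOf dg d φ) = brace dg (components F) d φ := by
  have hplug : ∀ x z a, proj1 S (F (surround x z a)) = plug (components F) x z a := fun x z a =>
    LinearMap.congr_fun (f := proj1 S ∘ₗ F ∘ₗ surround x z) (Avs.hom_ext fun c => by
      rw [plug_single, LinearMap.comp_apply, LinearMap.comp_apply, surround_single, components]) a
  funext w
  rw [components, Module.End.mul_apply, coderOf_single, brace]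
  simp only [map_splitSum, map_smul, hplug]

/-- The part of `β{φ}(u ++ 1_A :: v)` where the word fed to `φ` lies to the left of the
displayed unit. -/
noncomputable def braceLeft (β : Cochain S κ) (d : ℤ) (φ : Cochain S κ)
    (u v : List (Option κ)) : Avs κ S :=
  splitSum (fun x r => splitSum
    (fun y z => sgn S (d * epsO dg x) • plug β x (z ++ none :: v) (φ y)) r) u

/-- The part of `β{φ}(u ++ 1_A :: v)` where the word fed to `φ` contains the displayed unit. -/
noncomputable def braceAcross (β : Cochain S κ) (d : ℤ) (φ : Cochain S κ)
    (u v : List (Option κ)) : Avs κ S :=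
  splitSum (fun x y => splitSum
    (fun y' z => sgn S (d * epsO dg x) • plug β x z (φ (y ++ none :: y'))) v) u

/-- The part of `β{φ}(u ++ 1_A :: v)` where the word fed to `φ` lies to the right of the
displayed unit. -/
noncomputable def braceRight (β : Cochain S κ) (d : ℤ) (φ : Cochain S κ)
    (u v : List (Option κ)) : Avs κ S :=
  splitSum (fun x r => splitSum (fun y z => sgn S (d * epsO dg (u ++ none :: x)) •
    plug β (u ++ none :: x) z (φ y)) r) v

theorem brace_append_none_cons (β : Cochain S κ) (d : ℤ) (φ : Cochain S κ)
    (u v : List (Option κ)) :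
    brace dg β d φ (u ++ none :: v) =
      braceLeft dg β d φ u v + braceAcross dg β d φ u v + braceRight dg β d φ u v := by
  rw [brace, braceLeft, braceAcross, braceRight, splitSum_append_cons, ← splitSum_add]
  congr 1
  exact splitSum_congr fun p q _ => by rw [splitSum_append_cons]

/-- The unit axioms for the components of a curved A∞-structure. -/
structure IsUnital (β : Cochain S κ) : Prop where
  unit : β [none] = 0
  right_unit : ∀ x, β [x, none] = sgn S (dgO dg x) • single x 1
  left_unit : ∀ x, β [none, x] = single x 1
  higher : ∀ ls : List (Option κ), 3 ≤ ls.length → none ∈ ls → β ls = 0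

theorem isUnital_components_iff {D : Module.End S (BW κ S)} :
    IsUnital dg (components D) ↔ UnitAxioms S dg D :=
  ⟨fun h => ⟨h.unit, h.right_unit, h.left_unit, h.higher⟩,
    fun h => ⟨h.1, h.2.1, h.2.2.1, h.2.2.2⟩⟩

variable {dg} {β φ : Cochain S κ}

theorem IsUnital.plug_eq_zero (hβ : IsUnital dg β) {x z : List (Option κ)}
    (hlen : 2 ≤ (x ++ z).length) (hmem : none ∈ x ++ z) (a : Avs κ S) : plug β x z a = 0 := by
  refine plug_eq_zero_of_forall (fun c => hβ.higher _ ?_ ?_) a <;>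
  · simp only [List.length_append, List.length_cons, List.mem_append, List.mem_cons] at *
    grind

theorem IsUnital.plug_nil_unit (hβ : IsUnital dg β) {e : ℤ} {a : Avs κ S}
    (ha : ∀ c, a c ≠ 0 → dgO dg c - 1 = e) : plug β [] [none] a = sgn S (e + 1) • a := by
  rw [plug_eq_sum]
  conv_rhs => rw [← Finsupp.sum_single a, Finsupp.smul_sum]
  refine Finsupp.sum_congr fun c hc => ?_
  rw [List.nil_append, hβ.right_unit, ← ha c (Finsupp.mem_support_iff.1 hc), sub_add_cancel]
  simp [mul_comm]

theorem IsUnital.plug_unit_nil (hβ : IsUnital dg β) (a : Avs κ S) : plug β [none] [] a = a := by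
  rw [plug_eq_sum]
  conv_rhs => rw [← Finsupp.sum_single a]
  refine Finsupp.sum_congr fun c _ => ?_
  rw [List.singleton_append, hβ.left_unit]
  simp

theorem IsUnital.braceLeft_eq (hβ : IsUnital dg β) {d : ℤ} (hφ : HomogCochain dg d φ)
    (u v : List (Option κ)) :
    braceLeft dg β d φ u v = if v = [] then sgn S (epsO dg u + d + 1) • φ u else 0 := by
  rw [braceLeft, splitSum_eq_nil_left, splitSum_eq_nil_right]
  · rw [epsO_nil, mul_zero, sgn_zero, one_smul]
    split_ifs with h
    · subst h
      exact hβ.plug_nil_unit (hφ u)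
    · exact hβ.plug_eq_zero (by grind [List.length_pos_iff]) (by simp) _
  · intro p q _ hq
    rw [hβ.plug_eq_zero (by grind [List.length_pos_iff]) (by simp), smul_zero]
  · intro p q _ hp
    refine splitSum_eq_zero fun y z _ => ?_
    rw [hβ.plug_eq_zero (by grind [List.length_pos_iff]) (by simp), smul_zero]

theorem IsUnital.braceRight_eq (hβ : IsUnital dg β) (d : ℤ) (u v : List (Option κ)) :
    braceRight dg β d φ u v = if u = [] then sgn S d • φ v else 0 := by
  rw [braceRight, splitSum_eq_nil_left, splitSum_eq_nil_right]
  · split_ifs with h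
    · subst h
      rw [List.nil_append, hβ.plug_unit_nil, epsO_cons, dgO_none, epsO_nil]
      simp [sgn_neg]
    · rw [hβ.plug_eq_zero (by grind [List.length_pos_iff]) (by simp), smul_zero]
  · intro p q _ hq
    rw [hβ.plug_eq_zero (by grind [List.length_pos_iff]) (by simp), smul_zero]
  · intro p q _ hp
    refine splitSum_eq_zero fun y z _ => ?_
    rw [hβ.plug_eq_zero (by grind [List.length_pos_iff]) (by simp), smul_zero]

theorem IsUnital.splitSum_plug_append_unit (hβ : IsUnital dg β) (φ : Cochain S κ)
    (u v : List (Option κ)) :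
    splitSum (fun x y => sgn S (1 * epsO dg x) • plug φ x v (β (y ++ [none]))) u =
      if u = [] then 0 else -(sgn S (epsO dg u) • φ (u ++ v)) := by
  rcases List.eq_nil_or_concat u with rfl | ⟨u', a, rfl⟩
  · rw [splitSum_nil]
    simp [hβ.unit]
  · rw [List.concat_eq_append, splitSum_append_cons, splitSum_nil, splitSum_eq_nil_right]
    · simp only [List.nil_append, hβ.unit, map_zero, smul_zero, add_zero, one_mul]
      rw [show [a] ++ [none] = [a, none] from rfl, hβ.right_unit, map_smul, plug_single,
        epsO_append, epsO_cons, epsO_nil, sgn_add, add_zero, sgn_sub, sgn_one, smul_smul]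
      simp
    · intro p q _ hq
      rw [hβ.higher _ (by grind [List.length_pos_iff]) (by simp), map_zero, smul_zero]

theorem IsUnital.splitSum_plug_unit_cons (hβ : IsUnital dg β) (φ : Cochain S κ)
    (u : List (Option κ)) (c : Option κ) (v : List (Option κ)) :
    splitSum (fun x y => splitSum (fun y' z => sgn S (1 * epsO dg x) •
      plug φ x z (β (y ++ none :: c :: y'))) v) u = sgn S (epsO dg u) • φ (u ++ c :: v) := by
  rw [splitSum_eq_nil_right, splitSum_eq_nil_left]
  · rw [List.nil_append, hβ.left_unit, plug_single, one_mul]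
  · intro p q _ hp
    rw [hβ.higher _ (by grind [List.length_pos_iff]) (by simp), map_zero, smul_zero]
  · intro p q _ hq
    refine splitSum_eq_zero fun y z _ => ?_
    rw [hβ.higher _ (by grind [List.length_pos_iff]) (by simp), map_zero, smul_zero]

theorem IsUnital.braceAcross_eq (hβ : IsUnital dg β) (φ : Cochain S κ)
    (u v : List (Option κ)) :
    braceAcross dg φ 1 β u v = sgn S (epsO dg u) • ((if v = [] then 0 else φ (u ++ v)) -
      (if u = [] then 0 else φ (u ++ v))) := by
  cases v with
  | nil =>
    simp only [braceAcross, splitSum_nil]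
    rw [hβ.splitSum_plug_append_unit]
    by_cases h : u = [] <;> simp [h]
  | cons c v =>
    simp only [braceAcross, splitSum_cons]
    rw [splitSum_add, hβ.splitSum_plug_append_unit, hβ.splitSum_plug_unit_cons]
    by_cases h : u = [] <;> simp [h]

end Brace

section Differential

variable {S : Type} [CommRing S] {κ : Type} (dg : κ → ℤ)

/-- The Hochschild differential `[β, φ] = β{φ} − (−1)^d φ{β}` of a cochain `φ` of degree `d`. -/
noncomputable def hochschildDiff (β : Cochain S κ) (d : ℤ) (φ : Cochain S κ) : Cochain S κ :=
  brace dg β d φ - sgn S d • brace dg φ 1 β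

theorem hochschildDiff_append_none_cons (β : Cochain S κ) (d : ℤ) (φ : Cochain S κ)
    (u v : List (Option κ)) :
    hochschildDiff dg β d φ (u ++ none :: v) =
      braceLeft dg β d φ u v + braceAcross dg β d φ u v + braceRight dg β d φ u v -
      sgn S d • (braceLeft dg φ 1 β u v + braceAcross dg φ 1 β u v + braceRight dg φ 1 β u v) := by
  rw [hochschildDiff, Pi.sub_apply, Pi.smul_apply, brace_append_none_cons, brace_append_none_cons]

variable {dg} {β φ : Cochain S κ}

/- The surviving terms are those where `m₂` multiplies a value of `φ` by the unit, and they cancel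
against those where it multiplies an argument of `φ` by the unit. -/
theorem IsUnital.hochschildDiff_eq_zero (hβ : IsUnital dg β) {d : ℤ} (hφ : HomogCochain dg d φ)
    {u v : List (Option κ)} (hleft : braceLeft dg φ 1 β u v = 0)
    (hacross : braceAcross dg β d φ u v = 0) (hright : braceRight dg φ 1 β u v = 0) :
    hochschildDiff dg β d φ (u ++ none :: v) = 0 := by
  rw [hochschildDiff_append_none_cons, hleft, hacross, hright, hβ.braceLeft_eq hφ,
    hβ.braceRight_eq, hβ.braceAcross_eq, sgn_add, sgn_add, sgn_one]
  by_cases hu : u = [] <;> by_cases hv : v = [] <;>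
    simp [hu, hv, epsO_nil, sgn_zero, mul_comm, mul_smul]

theorem IsUnital.hochschildDiff_normalized (hβ : IsUnital dg β) {d : ℤ}
    (hφ : HomogCochain dg d φ) (h : ∀ w, none ∈ w → φ w = 0) {w : List (Option κ)}
    (hw : none ∈ w) : hochschildDiff dg β d φ w = 0 := by
  obtain ⟨u, v, rfl⟩ := List.append_of_mem hw
  refine hβ.hochschildDiff_eq_zero hφ ?_ ?_ ?_
  · refine splitSum_eq_zero fun x r _ => splitSum_eq_zero fun y z _ => ?_
    rw [plug_eq_zero_of_forall (fun c => h _ (by simp)), smul_zero]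
  · refine splitSum_eq_zero fun x r _ => splitSum_eq_zero fun y z _ => ?_
    rw [h _ (by simp), map_zero, smul_zero]
  · refine splitSum_eq_zero fun x r _ => splitSum_eq_zero fun y z _ => ?_
    rw [plug_eq_zero_of_forall (fun c => h _ (by simp)), smul_zero]

/-- The cochain `φ` vanishes when one of its first `j` arguments is the unit. -/
def VanishesOnUnitBefore (j : ℕ) (φ : Cochain S κ) : Prop :=
  ∀ u v, u.length < j → φ (u ++ none :: v) = 0

theorem VanishesOnUnitBefore.hochschildDiff {j : ℕ} (h : VanishesOnUnitBefore j φ)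
    (hβ : IsUnital dg β) (hβ0 : β [] = 0) {d : ℤ} (hφ : HomogCochain dg d φ) :
    VanishesOnUnitBefore j (hochschildDiff dg β d φ) := by
  intro u v hu
  refine hβ.hochschildDiff_eq_zero hφ ?_ ?_ ?_
  · refine splitSum_eq_zero fun x r hxr => splitSum_eq_zero fun y z hyz => ?_
    cases y with
    | nil => rw [hβ0, map_zero, smul_zero]
    | cons a y =>
      rw [plug_eq_zero_of_forall, smul_zero]
      intro c
      have := h (x ++ c :: z) v (by grind)
      simpa using this
  · refine splitSum_eq_zero fun x r hxr => splitSum_eq_zero fun y z _ => ?_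
    rw [h _ _ (by grind), map_zero, smul_zero]
  · refine splitSum_eq_zero fun x r _ => splitSum_eq_zero fun y z _ => ?_
    rw [plug_eq_zero_of_forall, smul_zero]
    intro c
    have := h u (x ++ c :: z) hu
    simpa using this

variable (dg) in
/-- The cochain `± φ(a₁, …, a_j, 1_A, a_{j+1}, …, a_n)`; it is zero on words shorter than `j`. -/
noncomputable def insertUnit (j : ℕ) (φ : Cochain S κ) : Cochain S κ := fun w =>
  if j ≤ w.length then sgn S (epsO dg (w.take j)) • φ (w.take j ++ none :: w.drop j) else 0

theorem insertUnit_append {j : ℕ} {u : List (Option κ)} (hu : u.length = j) (φ : Cochain S κ)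
    (t : List (Option κ)) :
    insertUnit dg j φ (u ++ t) = sgn S (epsO dg u) • φ (u ++ none :: t) := by
  simp [insertUnit, ← hu]

theorem VanishesOnUnitBefore.insertUnit {j : ℕ} (h : VanishesOnUnitBefore j φ) :
    VanishesOnUnitBefore j (insertUnit dg j φ) := by
  intro u v hu
  unfold NCB.insertUnit
  split_ifs with hl
  · obtain ⟨n, hn⟩ : ∃ n, j - u.length = n + 1 := ⟨j - u.length - 1, by omega⟩
    have htake : (u ++ none :: v).take j = u ++ none :: v.take n := by
      rw [List.take_append, List.take_of_length_le hu.le, hn, List.take_succ_cons]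
    rw [htake, List.append_assoc, List.cons_append, h _ _ hu, smul_zero]
  · rfl

theorem HomogCochain.insertUnit {j : ℕ} {d : ℤ} (h : HomogCochain dg d φ) :
    HomogCochain dg (d - 1) (insertUnit dg j φ) := by
  intro w c hc
  unfold NCB.insertUnit at hc
  split_ifs at hc with hl
  · rw [h _ c fun h0 => hc (by rw [Finsupp.smul_apply, h0, smul_zero]), epsO_append, epsO_cons,
      dgO_none]
    conv_rhs => rw [← List.take_append_drop j w, epsO_append]
    ring
  · simp at hc

theorem braceLeft_insertUnit {j : ℕ} (hβ1 : HomogCochain dg 1 β) (hβ0 : β [] = 0)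
    (h : VanishesOnUnitBefore j φ) {u : List (Option κ)} (hu : u.length = j)
    (v : List (Option κ)) :
    braceLeft dg (insertUnit dg j φ) 1 β u v =
      -(sgn S (epsO dg u) • braceLeft dg φ 1 β u (none :: v)) := by
  rw [braceLeft, braceLeft, smul_splitSum, ← splitSum_neg]
  refine splitSum_congr fun x r hxr => ?_
  rw [smul_splitSum, ← splitSum_neg]
  refine splitSum_congr fun y z hyz => ?_
  match y with
  | [] => simp [hβ0]
  | a :: b :: t =>
    have hlen (c : Option κ) : (x ++ c :: z).length < j := by grind
    rw [plug_eq_zero_of_forall fun c => by simpa using h.insertUnit (x ++ c :: z) v (hlen c),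
      plug_eq_zero_of_forall fun c => by simpa using h (x ++ c :: z) (none :: v) (hlen c)]
    simp
  | [a] =>
    rw [smul_comm, ← smul_neg]
    congr 1
    rw [plug_eq_sum, plug_eq_sum, Finsupp.smul_sum, ← Finsupp.sum_neg]
    refine Finsupp.sum_congr fun c hc => ?_
    have hdeg := hβ1 [a] c (Finsupp.mem_support_iff.1 hc)
    have happ := insertUnit_append (dg := dg) (j := j) (u := x ++ c :: z) (by grind) φ (none :: v)
    have hsgn : sgn S (epsO dg (x ++ c :: z)) = -sgn S (epsO dg u) := by
      have heps : epsO dg (x ++ c :: z) = epsO dg u + 1 := by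
        rw [← hxr, ← hyz, epsO_append, epsO_cons, hdeg, epsO_append, epsO_append]
        ring
      rw [heps, sgn_add, sgn_one, mul_neg_one]
    rw [List.append_assoc, List.cons_append] at happ
    rw [happ, hsgn, smul_comm, neg_smul]
    simp

theorem braceRight_insertUnit {j : ℕ} {u : List (Option κ)} (hu : u.length = j)
    (v : List (Option κ)) :
    braceRight dg (insertUnit dg j φ) 1 β u v =
      -(sgn S (epsO dg u) • braceRight dg φ 1 β (u ++ [none]) v) := by
  rw [braceRight, braceRight, smul_splitSum, ← splitSum_neg]
  refine splitSum_congr fun x r _ => ?_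
  rw [smul_splitSum, ← splitSum_neg]
  refine splitSum_congr fun y z _ => ?_
  have hplug : plug (insertUnit dg j φ) (u ++ none :: x) z (β y) =
      sgn S (epsO dg u) • plug φ (u ++ [none] ++ none :: x) z (β y) := by
    rw [plug_eq_sum, plug_eq_sum, Finsupp.smul_sum]
    refine Finsupp.sum_congr fun c _ => ?_
    have := insertUnit_append (dg := dg) hu φ (none :: x ++ c :: z)
    rw [← List.append_assoc] at this
    rw [this, smul_comm]
    simp
  rw [hplug, smul_comm, ← smul_neg, ← neg_smul]
  congr 2
  simp only [epsO_append, epsO_cons, epsO_nil, dgO_none, sgn_add, sgn_sub, sgn_one, sgn_zero,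
    one_mul]
  ring

theorem IsUnital.braceRight_none_cons (hβ : IsUnital dg β) (hβ0 : β [] = 0)
    (u v : List (Option κ)) :
    braceRight dg φ 1 β u (none :: v) =
      (if v = [] then 0 else -(sgn S (epsO dg u) • φ (u ++ none :: v))) +
      braceRight dg φ 1 β (u ++ [none]) v := by
  rw [braceRight, splitSum_cons, braceRight]
  congr 1
  · rw [splitSum_cons, hβ0, map_zero, smul_zero, zero_add]
    cases v with
    | nil => simp [splitSum_nil, hβ.unit]
    | cons c v =>
      rw [splitSum_cons, hβ.unit, map_zero, smul_zero, zero_add, splitSum_eq_nil_left]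
      · rw [hβ.left_unit, plug_single, epsO_append, epsO_cons, epsO_nil, dgO_none, one_mul,
          sgn_add]
        simp [sgn_neg, sgn_one]
      · intro p q _ hp
        rw [hβ.higher _ (by grind [List.length_pos_iff]) (by simp), map_zero, smul_zero]
  · simp only [List.append_assoc, List.singleton_append]

theorem IsUnital.braceAcross_insertUnit (hβ : IsUnital dg β) {j : ℕ} (hφ : HomogCochain dg 0 φ)
    (h : VanishesOnUnitBefore j φ) {u : List (Option κ)} (hu : u.length = j)
    (v : List (Option κ)) :
    braceAcross dg β (-1) (insertUnit dg j φ) u v =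
      sgn S (epsO dg u) • braceAcross dg β 0 φ u (none :: v) -
      if v = [] then φ (u ++ [none]) else 0 := by
  have hunit : plug β [] (none :: v) (φ (u ++ [none])) =
      sgn S (epsO dg u) • if v = [] then φ (u ++ [none]) else 0 := by
    split_ifs with hv
    · subst hv
      rw [hβ.plug_nil_unit (hφ _), epsO_append, epsO_cons, epsO_nil, dgO_none]
      simp
    · rw [hβ.plug_eq_zero (by grind [List.length_pos_iff]) (by simp), smul_zero]
  rw [braceAcross, braceAcross, splitSum_eq_nil_left (w := u),
    splitSum_eq_nil_left (w := u), splitSum_cons]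
  · simp only [epsO_nil, mul_zero, sgn_zero, one_smul, insertUnit_append hu, map_smul,
      ← smul_splitSum, hunit, smul_add, smul_smul, one_mul, sgn_mul_self]
    abel
  · intro x y hxy hx
    refine splitSum_eq_zero fun y' z _ => ?_
    rw [h _ _ (by grind [List.length_pos_iff]), map_zero, smul_zero]
  · intro x y hxy hx
    refine splitSum_eq_zero fun y' z _ => ?_
    rw [h.insertUnit _ _ (by grind [List.length_pos_iff]), map_zero, smul_zero]

theorem IsUnital.hochschildDiff_insertUnit (hβ : IsUnital dg β) (hβ1 : HomogCochain dg 1 β)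
    (hβ0 : β [] = 0) {j : ℕ} (hφ : HomogCochain dg 0 φ) (h : VanishesOnUnitBefore j φ)
    {u : List (Option κ)} (hu : u.length = j) (v : List (Option κ)) :
    hochschildDiff dg β (-1) (insertUnit dg j φ) (u ++ none :: v) =
      sgn S (epsO dg u) • hochschildDiff dg β 0 φ (u ++ none :: none :: v) -
      φ (u ++ none :: v) := by
  have hψ : HomogCochain dg (-1) (insertUnit dg j φ) := hφ.insertUnit
  have hu' : insertUnit dg j φ u = sgn S (epsO dg u) • φ (u ++ [none]) := by
    simpa using insertUnit_append (dg := dg) hu φ []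
  have hv' : (if u = [] then sgn S (-1) • insertUnit dg j φ v else 0) =
      if u = [] then -φ (none :: v) else 0 := by
    split_ifs with hu0
    · subst hu0
      simpa [epsO_nil, sgn_neg, sgn_one, sgn_zero] using insertUnit_append (dg := dg) hu φ v
    · rfl
  rw [hochschildDiff_append_none_cons, hochschildDiff_append_none_cons,
    braceLeft_insertUnit hβ1 hβ0 h hu, braceRight_insertUnit hu,
    hβ.braceAcross_insertUnit hφ h hu, hβ.braceRight_none_cons hβ0, hβ.braceLeft_eq hψ,
    hβ.braceLeft_eq hφ, hβ.braceRight_eq, hv', hβ.braceRight_eq, hβ.braceAcross_eq,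
    hβ.braceAcross_eq, insertUnit_append hu, hu', sgn_neg, sgn_one, sgn_zero,
    neg_add_cancel_right]
  have hs := sgn_mul_self S (epsO dg u)
  by_cases hu0 : u = [] <;> by_cases hv0 : v = [] <;>
    simp [hu0, hv0, smul_add, smul_sub, smul_smul, hs, epsO_nil, sgn_zero] <;> abel

end Differential

section Additivity

variable {S : Type} [CommRing S] {κ : Type} (dg : κ → ℤ)

theorem HomogCochain.add {d : ℤ} {φ φ' : Cochain S κ} (h : HomogCochain dg d φ)
    (h' : HomogCochain dg d φ') : HomogCochain dg d (φ + φ') := by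
  intro w c hc
  by_cases h0 : φ w c = 0
  · exact h' w c (by simpa [h0] using hc)
  · exact h w c h0

theorem plug_add (β β' : Cochain S κ) (x z : List (Option κ)) :
    plug (β + β') x z = plug β x z + plug β' x z :=
  Avs.hom_ext fun c => by
    rw [plug_single, LinearMap.add_apply, plug_single, plug_single, Pi.add_apply]

theorem brace_add_left (β β' : Cochain S κ) (d : ℤ) (φ : Cochain S κ) :
    brace dg (β + β') d φ = brace dg β d φ + brace dg β' d φ := by
  funext w
  rw [Pi.add_apply, brace, brace, brace, ← splitSum_add]
  refine splitSum_congr fun x r _ => ?_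
  rw [← splitSum_add]
  refine splitSum_congr fun y z _ => ?_
  rw [plug_add, LinearMap.add_apply, smul_add]

theorem brace_add_right (β : Cochain S κ) (d : ℤ) (φ φ' : Cochain S κ) :
    brace dg β d (φ + φ') = brace dg β d φ + brace dg β d φ' := by
  funext w
  rw [Pi.add_apply, brace, brace, brace, ← splitSum_add]
  refine splitSum_congr fun x r _ => ?_
  rw [← splitSum_add]
  refine splitSum_congr fun y z _ => ?_
  rw [Pi.add_apply, map_add, smul_add]

theorem hochschildDiff_add (β : Cochain S κ) (d : ℤ) (φ φ' : Cochain S κ) :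
    hochschildDiff dg β d (φ + φ') = hochschildDiff dg β d φ + hochschildDiff dg β d φ' := by
  rw [hochschildDiff, brace_add_left, brace_add_right, smul_add, add_sub_add_comm]
  rfl

theorem insertUnit_add (j : ℕ) (φ φ' : Cochain S κ) :
    insertUnit dg j (φ + φ') = insertUnit dg j φ + insertUnit dg j φ' := by
  funext w
  simp only [insertUnit, Pi.add_apply]
  split_ifs
  · rw [smul_add]
  · rw [add_zero]

variable (κ) in
/-- The vectors of `A ⊗ S` with coordinates in the ideal `J`. -/
noncomputable def vectorsIn (J : Ideal S) : Submodule S (Avs κ S) :=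
  Finsupp.submodule fun _ => J

variable {J : Ideal S}

theorem plug_mem_of_arg_mem (β : Cochain S κ) (x z : List (Option κ)) {a : Avs κ S}
    (ha : a ∈ vectorsIn κ J) : plug β x z a ∈ vectorsIn κ J := by
  rw [plug_eq_sum]
  exact Submodule.sum_mem _ fun c _ c' => J.mul_mem_right _ (ha c)

theorem plug_mem {β : Cochain S κ} (h : ∀ w, β w ∈ vectorsIn κ J) (x z : List (Option κ))
    (a : Avs κ S) : plug β x z a ∈ vectorsIn κ J := by
  rw [plug_eq_sum]
  exact Submodule.sum_mem _ fun c _ => Submodule.smul_mem _ _ (h _)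

theorem hochschildDiff_mem (β : Cochain S κ) (d : ℤ) {φ : Cochain S κ}
    (h : ∀ w, φ w ∈ vectorsIn κ J) (w : List (Option κ)) :
    hochschildDiff dg β d φ w ∈ vectorsIn κ J := by
  refine Submodule.sub_mem _ ?_ (Submodule.smul_mem _ _ ?_)
  · exact splitSum_mem _ fun _ _ _ => splitSum_mem _ fun _ _ _ =>
      Submodule.smul_mem _ _ (plug_mem_of_arg_mem _ _ _ (h _))
  · exact splitSum_mem _ fun _ _ _ => splitSum_mem _ fun _ _ _ =>
      Submodule.smul_mem _ _ (plug_mem h _ _ _)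

theorem insertUnit_mem (j : ℕ) {φ : Cochain S κ} (h : ∀ w, φ w ∈ vectorsIn κ J)
    (w : List (Option κ)) : insertUnit dg j φ w ∈ vectorsIn κ J := by
  unfold insertUnit
  split_ifs
  · exact Submodule.smul_mem _ _ (h _)
  · exact Submodule.zero_mem _

end Additivity

section Bracket

variable {S : Type} [CommRing S] {κ : Type} {dg : κ → ℤ} {D : Module.End S (BW κ S)}

theorem components_mul (F : Module.End S (BW κ S)) {d : ℤ} {G : Module.End S (BW κ S)}
    (hG : IsCoder S dg d G) : components (F * G) = brace dg (components F) d (components G) := by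
  conv_lhs => rw [hG.eq_coderOf]
  exact components_mul_coderOf dg F d _

theorem components_smul (r : S) (F : Module.End S (BW κ S)) :
    components (r • F) = r • components F :=
  funext fun w => map_smul (proj1 S) r (F (single w 1))

theorem components_bracket (hD : IsCoder S dg 1 D) {d : ℤ} {F : Module.End S (BW κ S)}
    (hF : IsCoder S dg d F) :
    components (D * F - sgn S d • (F * D)) = hochschildDiff dg (components D) d (components F) := by
  rw [components_sub, components_smul, components_mul D hF, components_mul F hD, hochschildDiff]

theorem HomogEnd.bracket {a b : ℤ} {F G : Module.End S (BW κ S)} (hF : HomogEnd S dg a F)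
    (hG : HomogEnd S dg b G) (r : S) : HomogEnd S dg (a + b) (F * G - r • (G * F)) :=
  Submodule.sub_mem (homogSubmodule S dg (a + b)) (x := F * G) (y := r • (G * F)) (hF.mul hG)
    (Submodule.smul_mem _ r (add_comm b a ▸ hG.mul hF))

theorem bracket_bracket_self {𝔄 : Type*} [Ring 𝔄] [Algebra S 𝔄] {D : 𝔄} (hD : D * D = 0) (s : S)
    (F : 𝔄) : D * (D * F - s • (F * D)) - -s • ((D * F - s • (F * D)) * D) = 0 := by
  rw [mul_sub, sub_mul, ← mul_assoc, hD, zero_mul, zero_sub, mul_smul_comm, smul_mul_assoc,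
    mul_assoc F, hD, mul_zero, smul_zero, sub_zero, mul_assoc, neg_smul, sub_neg_eq_add,
    neg_add_cancel]

theorem HomogCochain.hochschildDiff (hD : IsCoder S dg 1 D) (hD' : HomogEnd S dg 1 D) {d : ℤ}
    {φ : Cochain S κ} (hφ : HomogCochain dg d φ) :
    HomogCochain dg (1 + d) (hochschildDiff dg (components D) d φ) := by
  have h := components_bracket hD (isCoder_coderOf dg d φ)
  rw [components_coderOf] at h
  exact h ▸ (hD'.bracket hφ.homogEnd_coderOf _).homogCochain

theorem hochschildDiff_hochschildDiff (hD : IsCoder S dg 1 D) (hD' : HomogEnd S dg 1 D)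
    (hDD : D * D = 0) {d : ℤ} {φ : Cochain S κ} (hφ : HomogCochain dg d φ) :
    hochschildDiff dg (components D) (1 + d) (hochschildDiff dg (components D) d φ) = 0 := by
  have hbracket := hD.bracket (isCoder_coderOf dg d φ) hD' hφ.homogEnd_coderOf
  have h := components_bracket hD (isCoder_coderOf dg d φ)
  rw [components_coderOf] at h
  rw [one_mul] at hbracket
  rw [← h, ← components_bracket hD hbracket, sgn_add, sgn_one, neg_one_mul]
  refine (congrArg components (bracket_bracket_self hDD (sgn S d) (coderOf dg d φ))).trans ?_
  exact funext fun _ => map_zero (proj1 S)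

end Bracket

section Acyclicity

variable {S : Type} [CommRing S] {κ : Type} {dg : κ → ℤ}

/-- The coderivation `D` is a curved A∞-structure with unit `1_A`. -/
structure IsUnitalAInfinity (dg : κ → ℤ) (D : Module.End S (BW κ S)) : Prop where
  isCoder : IsCoder S dg 1 D
  homogEnd : HomogEnd S dg 1 D
  mul_self : D * D = 0
  unital : IsUnital dg (components D)

/-- The cochain `φ` takes values in `J` when one of its first `n` arguments is the unit. -/
def UnitBeforeMem (J : Ideal S) (n : ℕ) (φ : Cochain S κ) : Prop :=
  ∀ u v, u.length < n → φ (u ++ none :: v) ∈ vectorsIn κ J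

/-- The cochain `φ` with its values on words with a unit among the first `n` letters replaced
by zero. -/
noncomputable def truncateUnit (n : ℕ) (φ : Cochain S κ) : Cochain S κ := fun w =>
  if none ∈ w.take n then 0 else φ w

theorem HomogCochain.truncateUnit {d : ℤ} {φ : Cochain S κ} (h : HomogCochain dg d φ) (n : ℕ) :
    HomogCochain dg d (truncateUnit n φ) := by
  intro w c hc
  unfold NCB.truncateUnit at hc
  split_ifs at hc
  · simp at hc
  · exact h w c hc

theorem vanishesOnUnitBefore_truncateUnit (n : ℕ) (φ : Cochain S κ) :
    VanishesOnUnitBefore n (truncateUnit n φ) := by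
  intro u v hu
  obtain ⟨t, ht⟩ : ∃ t, n - u.length = t + 1 := ⟨n - u.length - 1, by omega⟩
  exact if_pos (by simp [List.take_append, ht])

theorem UnitBeforeMem.sub_truncateUnit_mem {J : Ideal S} {n : ℕ} {φ : Cochain S κ}
    (h : UnitBeforeMem J n φ) (w : List (Option κ)) :
    (φ - truncateUnit n φ) w ∈ vectorsIn κ J := by
  rw [Pi.sub_apply, truncateUnit]
  split_ifs with hw
  · obtain ⟨u, v, huv⟩ := List.append_of_mem hw
    have hlen : u.length < n := by
      have := congrArg List.length huv
      simp only [List.length_take, List.length_append, List.length_cons] at this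
      omega
    have hmem := h u (v ++ w.drop n) hlen
    rw [← List.cons_append, ← List.append_assoc, ← huv, List.take_append_drop] at hmem
    rwa [sub_zero]
  · rw [sub_self]
    exact Submodule.zero_mem _

variable {D : Module.End S (BW κ S)} {I J : Ideal S} {φ : Cochain S κ}

theorem IsUnitalAInfinity.unitBeforeMem_succ (hD : IsUnitalAInfinity dg D)
    (h0 : components D [] = 0) (hφ : HomogCochain dg 0 φ)
    (hdφ : ∀ w, none ∈ w → hochschildDiff dg (components D) 0 φ w ∈ vectorsIn κ J) {n : ℕ}
    (hn : UnitBeforeMem J n φ) :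
    UnitBeforeMem J (n + 1)
      (φ + hochschildDiff dg (components D) (-1) (insertUnit dg n φ)) := by
  intro u v hu
  set χ := truncateUnit n φ
  set δ := φ - χ
  have hδ : ∀ w, δ w ∈ vectorsIn κ J := hn.sub_truncateUnit_mem
  have hsplit : φ = χ + δ := (add_sub_cancel χ φ).symm
  have hχ : VanishesOnUnitBefore n χ := vanishesOnUnitBefore_truncateUnit n φ
  have hχ0 : HomogCochain dg 0 χ := hφ.truncateUnit n
  have hδ' := hochschildDiff_mem dg (components D) (-1) (insertUnit_mem dg n hδ) (u ++ none :: v)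
  rw [hsplit, insertUnit_add, hochschildDiff_add]
  simp only [Pi.add_apply]
  rcases Nat.lt_or_ge u.length n with h | h
  · have hins : HomogCochain dg (-1) (insertUnit dg n χ) := hχ0.insertUnit
    rw [hχ u v h, hχ.insertUnit.hochschildDiff hD.unital h0 hins u v h,
      zero_add, zero_add]
    exact Submodule.add_mem _ (hδ _) hδ'
  · have hdχ : hochschildDiff dg (components D) 0 χ (u ++ none :: none :: v) ∈ vectorsIn κ J := by
      have hsum := hdφ (u ++ none :: none :: v) (by simp)
      rw [hsplit, hochschildDiff_add] at hsum
      exact (Submodule.add_mem_iff_left _ (hochschildDiff_mem dg _ 0 hδ _)).1 hsum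
    rw [hD.unital.hochschildDiff_insertUnit hD.homogEnd.homogCochain h0 hχ0 hχ (by omega)]
    convert Submodule.add_mem _ (Submodule.add_mem _ (hδ (u ++ none :: v)) hδ')
      (Submodule.smul_mem _ (sgn S (epsO dg u)) hdχ) using 1
    abel

variable (dg) in
/-- The cochains `ψ_n` of a homotopy killing `φ` on words with a unit among the first `n`
letters. -/
noncomputable def unitHomotopy (β φ : Cochain S κ) : ℕ → Cochain S κ
  | 0 => 0
  | n + 1 => unitHomotopy β φ n +
      insertUnit dg n (φ + hochschildDiff dg β (-1) (unitHomotopy β φ n))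

theorem unitHomotopy_mem (β : Cochain S κ) (hI : ∀ w, φ w ∈ vectorsIn κ I) (n : ℕ) :
    ∀ w, unitHomotopy dg β φ n w ∈ vectorsIn κ I := by
  induction n with
  | zero => exact fun _ => Submodule.zero_mem _
  | succ n ih =>
    exact fun w => Submodule.add_mem _ (ih w) (insertUnit_mem dg n
      (fun w => Submodule.add_mem _ (hI w) (hochschildDiff_mem dg β _ ih w)) w)

theorem HomogCochain.unitHomotopy (hφ : HomogCochain dg 0 φ) (hD : IsCoder S dg 1 D)
    (hD' : HomogEnd S dg 1 D) (n : ℕ) :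
    HomogCochain dg (-1) (unitHomotopy dg (components D) φ n) := by
  induction n with
  | zero => exact fun w c h => by simp [NCB.unitHomotopy] at h
  | succ n ih => exact ih.add dg (hφ.add dg (ih.hochschildDiff hD hD')).insertUnit

theorem IsUnitalAInfinity.unitBeforeMem_unitHomotopy (hD : IsUnitalAInfinity dg D)
    (h0 : components D [] = 0) (hφ : HomogCochain dg 0 φ)
    (hdφ : ∀ w, none ∈ w → hochschildDiff dg (components D) 0 φ w ∈ vectorsIn κ J) (n : ℕ) :
    UnitBeforeMem J n (φ + hochschildDiff dg (components D) (-1)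
      (unitHomotopy dg (components D) φ n)) := by
  induction n with
  | zero => exact fun u v h => absurd h (Nat.not_lt_zero _)
  | succ n ih =>
    have hψ := hφ.unitHomotopy hD.isCoder hD.homogEnd n
    have hd := hochschildDiff_hochschildDiff hD.isCoder hD.homogEnd hD.mul_self hψ
    rw [unitHomotopy, hochschildDiff_add, ← add_assoc]
    refine hD.unitBeforeMem_succ h0 (hφ.add dg (hψ.hochschildDiff hD.isCoder hD.homogEnd))
      (fun w hw => ?_) ih
    rw [hochschildDiff_add, Pi.add_apply]
    exact Submodule.add_mem _ (hdφ w hw) ((congrFun hd w).symm ▸ Submodule.zero_mem _)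

theorem unitHomotopy_eq_of_length_lt (β φ : Cochain S κ) {w : List (Option κ)} {n : ℕ}
    (h : w.length < n) : unitHomotopy dg β φ n w = unitHomotopy dg β φ (w.length + 1) w := by
  induction n, h using Nat.le_induction with
  | base => rfl
  | succ n hn ih =>
    rw [unitHomotopy, Pi.add_apply, ih, insertUnit, if_neg (by omega), add_zero]

theorem hochschildDiff_congr {β : Cochain S κ} (hβ0 : β [] = 0) (d : ℤ) {φ φ' : Cochain S κ}
    {w : List (Option κ)} (h : ∀ v : List (Option κ), v.length ≤ w.length → φ v = φ' v) :
    hochschildDiff dg β d φ w = hochschildDiff dg β d φ' w := by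
  simp only [hochschildDiff, Pi.sub_apply, Pi.smul_apply, brace]
  refine congrArg₂ (fun a b => a - sgn S d • b) ?_ ?_
  · refine splitSum_congr fun x r hx => splitSum_congr fun y z hy => ?_
    rw [h y (by grind)]
  · refine splitSum_congr fun x r hx => splitSum_congr fun y z hy => ?_
    cases y with
    | nil => simp [hβ0]
    | cons a y =>
      rw [plug_eq_sum, plug_eq_sum]
      exact congrArg _ (Finsupp.sum_congr fun c _ => by rw [h (x ++ c :: z) (by grind)])

theorem IsUnitalAInfinity.exists_add_hochschildDiff_mem (hD : IsUnitalAInfinity dg D)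
    (h0 : components D [] = 0) (hφ : HomogCochain dg 0 φ) (hI : ∀ w, φ w ∈ vectorsIn κ I)
    (hdφ : ∀ w, none ∈ w → hochschildDiff dg (components D) 0 φ w ∈ vectorsIn κ J) :
    ∃ ψ : Cochain S κ, HomogCochain dg (-1) ψ ∧ (∀ w, ψ w ∈ vectorsIn κ I) ∧
      ∀ w, none ∈ w → (φ + hochschildDiff dg (components D) (-1) ψ) w ∈ vectorsIn κ J := by
  refine ⟨fun w => unitHomotopy dg (components D) φ (w.length + 1) w, fun w => ?_, fun w => ?_,
    fun w hw => ?_⟩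
  · exact hφ.unitHomotopy hD.isCoder hD.homogEnd _ w
  · exact unitHomotopy_mem _ hI _ w
  · obtain ⟨u, v, rfl⟩ := List.append_of_mem hw
    rw [Pi.add_apply, hochschildDiff_congr h0 (-1) fun w' hw' =>
      (unitHomotopy_eq_of_length_lt (components D) φ (Nat.lt_succ_of_le hw')).symm]
    exact hD.unitBeforeMem_unitHomotopy h0 hφ hdφ _ u v (by simp)

end Acyclicity

/-- A decreasing multiplicative filtration `𝔄 = F⁰ ⊇ F¹ ⊇ ⋯ ⊇ Fᴺ = 0` of a `ℚ`-algebra. -/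
structure NilpotentFiltration (𝔄 : Type*) [Ring 𝔄] [Algebra ℚ 𝔄] (N : ℕ) where
  part : ℕ → Submodule ℚ 𝔄
  part_zero : part 0 = ⊤
  mul_mem : ∀ {i j a b}, a ∈ part i → b ∈ part j → a * b ∈ part (i + j)
  antitone : Antitone part
  part_length : part N = ⊥

namespace NilpotentFiltration

variable {𝔄 : Type*} [Ring 𝔄] [Algebra ℚ 𝔄] {N : ℕ} (Φ : NilpotentFiltration 𝔄 N)

theorem mul_mem_left {i : ℕ} (a : 𝔄) {b : 𝔄} (hb : b ∈ Φ.part i) : a * b ∈ Φ.part i :=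
  zero_add i ▸ Φ.mul_mem (Φ.part_zero ▸ Submodule.mem_top) hb

theorem mul_mem_right {i : ℕ} {a : 𝔄} (ha : a ∈ Φ.part i) (b : 𝔄) : a * b ∈ Φ.part i :=
  Φ.mul_mem ha (j := 0) (Φ.part_zero ▸ Submodule.mem_top)

theorem mul_mem_succ_left {i : ℕ} {a b : 𝔄} (ha : a ∈ Φ.part 1) (hb : b ∈ Φ.part i) :
    a * b ∈ Φ.part (i + 1) :=
  add_comm 1 i ▸ Φ.mul_mem ha hb

theorem eq_zero_of_mem {i : ℕ} (hi : N ≤ i) {a : 𝔄} (ha : a ∈ Φ.part i) : a = 0 :=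
  (Submodule.mem_bot ℚ).1 (Φ.part_length ▸ Φ.antitone hi ha)

theorem pow_mem {a : 𝔄} (ha : a ∈ Φ.part 1) (n : ℕ) : a ^ n ∈ Φ.part n := by
  induction n with
  | zero => exact Φ.part_zero ▸ Submodule.mem_top
  | succ n ih => exact pow_succ a n ▸ Φ.mul_mem ih ha

theorem pow_eq_zero {a : 𝔄} (ha : a ∈ Φ.part 1) {n : ℕ} (hn : N ≤ n) : a ^ n = 0 :=
  Φ.eq_zero_of_mem hn (Φ.pow_mem ha n)

theorem isNilpotent {a : 𝔄} (ha : a ∈ Φ.part 1) : IsNilpotent a :=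
  ⟨N, Φ.pow_eq_zero ha le_rfl⟩

theorem add_pow_sub_pow_mem {i : ℕ} (hi : 1 ≤ i) {a b : 𝔄} (ha : a ∈ Φ.part 1)
    (hb : b ∈ Φ.part i) (n : ℕ) : (a + b) ^ (n + 2) - a ^ (n + 2) ∈ Φ.part (i + 1) := by
  have hab : a + b ∈ Φ.part 1 := Submodule.add_mem _ ha (Φ.antitone hi hb)
  have key : ∀ n, (a + b) ^ (n + 1) - a ^ (n + 1) ∈ Φ.part i →
      (a + b) ^ (n + 2) - a ^ (n + 2) ∈ Φ.part (i + 1) := by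
    intro n hn
    have hsplit : (a + b) ^ (n + 2) - a ^ (n + 2) =
        (a + b) * ((a + b) ^ (n + 1) - a ^ (n + 1)) + b * (a * a ^ n) := by
      rw [pow_succ' (a + b) (n + 1), pow_succ' a (n + 1), pow_succ' a n]
      noncomm_ring
    rw [hsplit]
    exact Submodule.add_mem _ (Φ.mul_mem_succ_left hab hn)
      (Φ.mul_mem hb (Φ.mul_mem_right ha _))
  induction n with
  | zero => exact key 0 (by simpa using hb)
  | succ n ih => exact key _ (Φ.antitone (Nat.le_succ i) ih)

theorem exp_add_sub_mem {i : ℕ} (hi : 1 ≤ i) {a b : 𝔄} (ha : a ∈ Φ.part 1)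
    (hb : b ∈ Φ.part i) :
    IsNilpotent.exp (a + b) - (IsNilpotent.exp a + b) ∈ Φ.part (i + 1) := by
  have hab : a + b ∈ Φ.part 1 := Submodule.add_mem _ ha (Φ.antitone hi hb)
  have hsum : ∑ n ∈ Finset.range N, ((n + 1 + 1).factorial : ℚ)⁻¹ •
      ((a + b) ^ (n + 2) - a ^ (n + 2)) ∈ Φ.part (i + 1) :=
    Submodule.sum_mem _ fun n _ => Submodule.smul_mem _ _ (Φ.add_pow_sub_pow_mem hi ha hb n)
  rw [IsNilpotent.exp_eq_sum (Φ.pow_eq_zero hab (Nat.le_add_right N 2)),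
    IsNilpotent.exp_eq_sum (Φ.pow_eq_zero ha (Nat.le_add_right N 2)), Finset.sum_range_succ',
    Finset.sum_range_succ', Finset.sum_range_succ' _ (N + 1), Finset.sum_range_succ' _ N]
  convert hsum using 1
  simp only [smul_sub, Finset.sum_sub_distrib, zero_add, Nat.factorial_zero, Nat.factorial_one,
    Nat.cast_one, inv_one, one_smul, pow_zero, pow_one]
  abel

theorem exp_sub_one_sub_mem {i : ℕ} (hi : 1 ≤ i) {a : 𝔄} (ha : a ∈ Φ.part i) :
    IsNilpotent.exp a - (1 + a) ∈ Φ.part (i + 1) := by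
  simpa only [zero_add, IsNilpotent.exp_zero] using
    Φ.exp_add_sub_mem hi (Submodule.zero_mem _) ha

theorem exp_sub_one_mem {a : 𝔄} (ha : a ∈ Φ.part 1) : IsNilpotent.exp a - 1 ∈ Φ.part 1 := by
  have h := Submodule.add_mem _ (Φ.antitone one_le_two (Φ.exp_sub_one_sub_mem le_rfl ha)) ha
  rwa [← sub_sub, sub_add_cancel] at h

theorem exp_mul_sub_exp_add_mem {i : ℕ} (hi : 1 ≤ i) {d θ ε η : 𝔄} (hd : d ∈ Φ.part 1)
    (hθ : θ ∈ Φ.part i) (hε : ε ∈ Φ.part i) (hη : η ∈ Φ.part i)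
    (h : ε + η - θ ∈ Φ.part (i + 1)) :
    IsNilpotent.exp η * ((1 + ε) * IsNilpotent.exp d) - IsNilpotent.exp (d + θ) ∈
      Φ.part (i + 1) := by
  have hη' := Φ.exp_sub_one_sub_mem hi hη
  have hdθ := Φ.exp_add_sub_mem hi hd hθ
  have hd' := Φ.exp_sub_one_mem hd
  set E := IsNilpotent.exp d
  set X := IsNilpotent.exp η
  set Y := IsNilpotent.exp (d + θ)
  have hsplit : X * ((1 + ε) * E) - Y = (X - (1 + η)) * ((1 + ε) * E) - (Y - (E + θ))
      + (ε + η) * (E - 1) + η * (ε * E) + (ε + η - θ) := by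
    noncomm_ring
  rw [hsplit]
  refine Submodule.add_mem _ (Submodule.add_mem _ (Submodule.add_mem _ (Submodule.sub_mem _
    (Φ.mul_mem_right hη' _) hdθ) (Φ.mul_mem (Submodule.add_mem _ hε hη) hd')) ?_) h
  exact Φ.antitone (Nat.add_le_add_left hi i) (Φ.mul_mem hη (Φ.mul_mem_right hε _))

theorem sub_add_commutator_mem {i : ℕ} {B D D' ε ε' : 𝔄} (hD : D - B ∈ Φ.part 1)
    (hD' : D' - B ∈ Φ.part 1) (hε : ε ∈ Φ.part i) (hε' : ε - ε' ∈ Φ.part (i + 1))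
    (h : (1 + ε) * D = D' * (1 + ε)) : (D' - D) + (B * ε' - ε' * B) ∈ Φ.part (i + 1) := by
  have hsub : D' - D = ε * D - D' * ε := by
    rw [add_mul, mul_add, one_mul, mul_one] at h
    rw [sub_eq_sub_iff_add_eq_add, ← h, add_comm]
  have hsplit : (D' - D) + (B * ε' - ε' * B) =
      ε * (D - B) - (D' - B) * ε + (ε - ε') * B - B * (ε - ε') := by
    rw [hsub]
    noncomm_ring
  rw [hsplit]
  exact Submodule.sub_mem _ (Submodule.add_mem _ (Submodule.sub_mem _ (Φ.mul_mem hε hD)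
    (Φ.mul_mem_succ_left hD' hε)) (Φ.mul_mem_right hε' _)) (Φ.mul_mem_left _ hε')

theorem iterate_commutator_mem {a : 𝔄} (ha : a ∈ Φ.part 1) (X : 𝔄) (i : ℕ) :
    (fun y => a * y - y * a)^[i] X ∈ Φ.part i := by
  induction i with
  | zero => exact Φ.part_zero ▸ Submodule.mem_top
  | succ i ih =>
    rw [Function.iterate_succ_apply']
    exact Submodule.sub_mem _ (Φ.mul_mem_succ_left ha ih) (Φ.mul_mem ih ha)

end NilpotentFiltration

section Conjugation

variable {𝔄 : Type*} [Ring 𝔄] [Algebra ℚ 𝔄]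

theorem exp_mulLeft {a : 𝔄} (ha : IsNilpotent a) :
    IsNilpotent.exp (LinearMap.mulLeft ℚ a) = LinearMap.mulLeft ℚ (IsNilpotent.exp a) := by
  obtain ⟨n, hn⟩ := ha
  have hn' : LinearMap.mulLeft ℚ a ^ n = 0 := by
    rw [LinearMap.pow_mulLeft, hn, LinearMap.mulLeft_zero_eq_zero]
  rw [IsNilpotent.exp_eq_sum hn', IsNilpotent.exp_eq_sum hn]
  ext y
  simp [LinearMap.pow_mulLeft, Finset.sum_mul]

theorem exp_mulRight {a : 𝔄} (ha : IsNilpotent a) :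
    IsNilpotent.exp (LinearMap.mulRight ℚ a) = LinearMap.mulRight ℚ (IsNilpotent.exp a) := by
  obtain ⟨n, hn⟩ := ha
  have hn' : LinearMap.mulRight ℚ a ^ n = 0 := by
    rw [LinearMap.pow_mulRight, hn, LinearMap.mulRight_zero_eq_zero]
  rw [IsNilpotent.exp_eq_sum hn', IsNilpotent.exp_eq_sum hn]
  ext y
  simp [LinearMap.pow_mulRight, Finset.mul_sum]

theorem exp_mul_mul_exp_neg {a : 𝔄} (ha : IsNilpotent a) (X : 𝔄) {n : ℕ}
    (h : (fun y => a * y - y * a)^[n] X = 0) :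
    IsNilpotent.exp a * X * IsNilpotent.exp (-a) =
      ∑ i ∈ Finset.range n, (i.factorial : ℚ)⁻¹ • (fun y => a * y - y * a)^[i] X := by
  set L := LinearMap.mulLeft ℚ a
  set R := LinearMap.mulRight ℚ (-a)
  have hiter : ∀ i, (fun y => a * y - y * a)^[i] X = ((L + R) ^ i) X := by
    intro i
    rw [Module.End.pow_apply]
    refine congrFun (congrArg (·^[i]) (funext fun y => ?_)) X
    simp [L, R, sub_eq_add_neg]
  have hL : IsNilpotent L := ha.map (Algebra.lmul ℚ 𝔄)
  have hR : IsNilpotent R := by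
    obtain ⟨n, hn⟩ := ha.neg
    exact ⟨n, by rw [LinearMap.pow_mulRight, hn, LinearMap.mulRight_zero_eq_zero]⟩
  have hLR : Commute L R := LinearMap.commute_mulLeft_right _ _
  have hexp := IsNilpotent.exp_smul_eq_sum (M := 𝔄) (a := L + R) (m := X) (k := n)
    (by rw [Module.End.smul_def, ← hiter, h]) (hLR.isNilpotent_add hL hR)
  rw [IsNilpotent.exp_add_of_commute hLR hL hR, exp_mulLeft ha, exp_mulRight ha.neg] at hexp
  simp only [Module.End.smul_def, ← hiter] at hexp
  rw [← hexp, Module.End.mul_apply, LinearMap.mulRight_apply, LinearMap.mulLeft_apply, mul_assoc]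

theorem NilpotentFiltration.exp_mul_mul_exp_neg_eq {N : ℕ} (Φ : NilpotentFiltration 𝔄 N) {a : 𝔄}
    (ha : a ∈ Φ.part 1) (X : 𝔄) :
    IsNilpotent.exp a * X * IsNilpotent.exp (-a) = X + ∑ i ∈ Finset.range N,
      ((i + 1).factorial : ℚ)⁻¹ • (fun y => a * y - y * a)^[i + 1] X := by
  rw [exp_mul_mul_exp_neg (Φ.isNilpotent ha) X (n := N + 1)
    (Φ.eq_zero_of_mem (Nat.le_succ N) (Φ.iterate_commutator_mem ha X _)),
    Finset.sum_range_succ', add_comm]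
  simp

end Conjugation

section Coefficients

variable {S : Type} [CommRing S] {κ : Type}

theorem apply_eq_sum (F : Module.End S (BW κ S)) (v : BW κ S) :
    F v = v.sum fun w r => r • F (single w 1) := by
  conv_lhs => rw [← Finsupp.sum_single v]
  rw [map_finsuppSum]
  exact Finsupp.sum_congr fun w _ => by rw [← map_smul, smul_single_one]

theorem mul_mem_coeffSubmodule {I J : Ideal S} {F G : Module.End S (BW κ S)}
    (hF : F ∈ coeffSubmodule κ I) (hG : G ∈ coeffSubmodule κ J) :
    F * G ∈ coeffSubmodule κ (I * J) := by
  intro w v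
  rw [Module.End.mul_apply, apply_eq_sum, Finsupp.sum_apply]
  refine Submodule.sum_mem _ fun u _ => ?_
  rw [mul_comm I J]
  exact Ideal.mul_mem_mul (hG w u) (hF u v)

/-- The filtration of the endomorphisms of `BA ⊗ S` by the powers of a nilpotent ideal `m`
containing their matrix coefficients. -/
noncomputable def adicFiltration [Algebra ℚ S] (κ : Type) {m : Ideal S} {N : ℕ}
    (hN : m ^ N = ⊥) : NilpotentFiltration (Module.End S (BW κ S)) N where
  part i := (coeffSubmodule κ (m ^ i)).restrictScalars ℚ
  part_zero := by
    refine (Submodule.eq_top_iff').2 fun F w v => ?_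
    rw [pow_zero, Ideal.one_eq_top]
    exact Submodule.mem_top
  mul_mem {i j} F G hF hG := by
    rw [pow_add]
    exact mul_mem_coeffSubmodule hF hG
  antitone _ _ hij _ hF w v := Ideal.pow_le_pow_right hij (hF w v)
  part_length := by
    rw [hN, coeffSubmodule_bot]
    rfl

theorem mem_adicFiltration_one [Algebra ℚ S] {m : Ideal S} {N : ℕ} {hN : m ^ N = ⊥}
    {F : Module.End S (BW κ S)} : F ∈ (adicFiltration κ hN).part 1 ↔ CoeffIn S m F := by
  change CoeffIn S (m ^ 1) F ↔ _
  rw [pow_one]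

end Coefficients

section CoalgebraMorphisms

variable {S : Type} [CommRing S] {κ : Type} {dg : κ → ℤ}

theorem counit_apply (v : BW κ S) : counit S v = v [] := by
  have h : counit S = (Finsupp.lapply [] : BW κ S →ₗ[S] S) :=
    BW.hom_ext fun w => by
      rcases eq_or_ne w [] with rfl | hw
      · simpa [counit] using fun h => h.symm
      · simp [counit, hw]
  exact LinearMap.congr_fun h v

theorem IsCoder.counit_comp {d : ℤ} {F : Module.End S (BW κ S)} (hF : IsCoder S dg d F) :
    counit S ∘ₗ F = 0 :=
  BW.hom_ext fun w => (counit_apply _).trans <| by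
    simpa using (hF.isCoderMod (⊥ : Ideal S)).apply_nil_mem w

/-- Morphisms of the graded coalgebra `BA ⊗ S`. -/
structure IsGradedCoalgMor (dg : κ → ℤ) (F : Module.End S (BW κ S)) : Prop where
  isCoalgMor : IsCoalgMor S F
  homogEnd : HomogEnd S dg 0 F

theorem commute_tensL_tensR {F : Module.End S (BW κ S)} (hF : HomogEnd S dg 0 F)
    (G : Module.End S (BW κ S)) : Commute (tensL S F) (tensR S dg 0 G) := by
  have h := tensR_mul_tensL dg 0 0 F G hF
  rw [zero_mul, sgn_zero, one_smul] at h
  exact h.symm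

theorem tens2_mul (F F' : Module.End S (BW κ S)) {G G' : Module.End S (BW κ S)}
    (hG : HomogEnd S dg 0 G) : tens2 S (F * G) (F' * G') = tens2 S F F' * tens2 S G G' := by
  have hR := tensR_mul dg 0 0 F' G'
  rw [add_zero] at hR
  rw [tens2_eq_tensL_mul_tensR dg, tens2_eq_tensL_mul_tensR dg, tens2_eq_tensL_mul_tensR dg,
    tensL_mul, hR, mul_assoc, mul_assoc, ← mul_assoc (tensL S G),
    (commute_tensL_tensR hG F').eq, mul_assoc]

theorem IsGradedCoalgMor.mul {F G : Module.End S (BW κ S)} (hF : IsGradedCoalgMor dg F)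
    (hG : IsGradedCoalgMor dg G) : IsGradedCoalgMor dg (F * G) := by
  refine ⟨⟨?_, ?_⟩, hF.homogEnd.mul hG.homogEnd⟩
  · calc comul S ∘ₗ (F * G) = (comul S ∘ₗ F) ∘ₗ G := rfl
      _ = tens2 S F F ∘ₗ (comul S ∘ₗ G) := by rw [hF.isCoalgMor.1, LinearMap.comp_assoc]
      _ = tens2 S (F * G) (F * G) ∘ₗ comul S := by
        rw [hG.isCoalgMor.1, tens2_mul F F hG.homogEnd]
        rfl
  · calc counit S ∘ₗ (F * G) = (counit S ∘ₗ F) ∘ₗ G := rfl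
      _ = counit S := by rw [hF.isCoalgMor.2, hG.isCoalgMor.2]

theorem tens2_comul_apply_mem (F G : Module.End S (BW κ S)) {I J : Ideal S}
    (hF : CoeffIn S I F) (hG : CoeffIn S J G) (w p q : List (Option κ)) :
    tens2 S F G (comul S (single w 1)) (p, q) ∈ I * J := by
  rw [comul_single, map_splitSum]
  change Finsupp.lapply (R := S) (p, q) _ ∈ _
  rw [map_splitSum]
  refine splitSum_mem (I * J) fun a b _ => ?_
  rw [tens2_eq_tensL_mul_tensR (fun _ => 0), Module.End.mul_apply, tensR_single, zero_mul,
    sgn_zero, one_smul, tensL_wordTmul, map_finsuppSum]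
  refine Submodule.sum_mem _ fun p' _ => ?_
  change lapply (R := S) (p, q) (_ • _) ∈ _
  rw [map_smul, lapply_apply, wordTmul_apply]
  refine Ideal.mul_mem_mul (hF a p') ?_
  split_ifs
  exacts [hG b q, J.zero_mem]

theorem IsCoalgMor.isCoderMod_of_one_add {ε : Module.End S (BW κ S)}
    (hε : IsCoalgMor S (1 + ε)) {I J : Ideal S} (hIJ : I * I ≤ J) (hI : CoeffIn S I ε) :
    IsCoderMod dg J 0 ε := by
  intro w p q
  have h := LinearMap.congr_fun hε.1 (single w 1)
  rw [tens2_eq_tensL_mul_tensR dg, tensL_add, tensR_add, tensL_one, tensR_one] at h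
  simp only [LinearMap.comp_apply, LinearMap.add_apply, Module.End.mul_apply,
    Module.End.one_apply, map_add] at h
  have hdefect : comul S (ε (single w 1)) - tensL S ε (comul S (single w 1)) -
      tensR S dg 0 ε (comul S (single w 1)) = tens2 S ε ε (comul S (single w 1)) := by
    rw [tens2_eq_tensL_mul_tensR dg, Module.End.mul_apply, eq_sub_of_add_eq' h]
    abel
  rw [hdefect]
  exact hIJ (tens2_comul_apply_mem ε ε hI hI w p q)

variable (dg) in
theorem IsCoalgMor.sub_coderOf_mem {ε : Module.End S (BW κ S)} (hε : IsCoalgMor S (1 + ε))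
    {I J : Ideal S} (hIJ : I * I ≤ J) (hI : CoeffIn S I ε) :
    ε - coderOf dg 0 (components ε) ∈ coeffSubmodule κ J := by
  have hmod : IsCoderMod dg J 0 (ε - coderOf dg 0 (components ε)) := by
    intro w p q
    have h := J.sub_mem (hε.isCoderMod_of_one_add (dg := dg) hIJ hI w p q)
      ((isCoder_coderOf dg 0 (components ε)).isCoderMod J w p q)
    rw [← Finsupp.sub_apply] at h
    rw [tensL_sub, tensR_sub]
    simp only [LinearMap.sub_apply, map_sub]
    convert h using 2
    abel
  refine hmod.coeffIn fun w c => ?_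
  rw [components_sub, components_coderOf, sub_self]
  exact J.zero_mem

/-- The ring homomorphism `F ↦ F ⊗ 1`. -/
noncomputable def tensLHom : Module.End S (BW κ S) →+* Module.End S (BW2 κ S) where
  toFun := tensL S
  map_one' := tensL_one
  map_mul' := tensL_mul
  map_zero' := by simpa only [zero_smul] using tensL_smul 0 (0 : Module.End S (BW κ S))
  map_add' := tensL_add

variable (dg) in
/-- The ring homomorphism `F ↦ 1 ⊗ F`, without signs as for `F` of degree `0`. -/
noncomputable def tensRHom : Module.End S (BW κ S) →+* Module.End S (BW2 κ S) where
  toFun := tensR S dg 0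
  map_one' := tensR_one dg
  map_mul' := tensR_mul dg 0 0
  map_zero' := by simpa only [zero_smul] using tensR_smul dg 0 0 (0 : Module.End S (BW κ S))
  map_add' := tensR_add dg 0

variable [Algebra ℚ S] {d : Module.End S (BW κ S)}

theorem HomogEnd.exp (hd : HomogEnd S dg 0 d) (hn : IsNilpotent d) :
    HomogEnd S dg 0 (IsNilpotent.exp d) := by
  obtain ⟨n, hn⟩ := hn
  have hpow : ∀ i, HomogEnd S dg 0 (d ^ i) := by
    intro i
    induction i with
    | zero => exact homogEnd_one
    | succ i ih => exact pow_succ d i ▸ ih.mul hd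
  rw [IsNilpotent.exp_eq_sum hn]
  refine Submodule.sum_mem ((homogSubmodule S dg 0).restrictScalars ℚ) fun i _ => ?_
  exact Submodule.smul_mem ((homogSubmodule S dg 0).restrictScalars ℚ) _ (hpow i)

theorem comul_comp_exp (hc : IsCoder S dg 0 d) (hd : HomogEnd S dg 0 d) (hn : IsNilpotent d) :
    comul S ∘ₗ IsNilpotent.exp d =
      tens2 S (IsNilpotent.exp d) (IsNilpotent.exp d) ∘ₗ comul S := by
  have hL : IsNilpotent (tensL S d) := hn.map (tensLHom (S := S) (κ := κ))
  have hR : IsNilpotent (tensR S dg 0 d) := hn.map (tensRHom (S := S) dg)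
  have hcomm := commute_tensL_tensR hd d
  have hexpL : tensL S (IsNilpotent.exp d) = IsNilpotent.exp (tensL S d) :=
    IsNilpotent.map_exp hn (tensLHom (S := S) (κ := κ))
  have hexpR : tensR S dg 0 (IsNilpotent.exp d) = IsNilpotent.exp (tensR S dg 0 d) :=
    IsNilpotent.map_exp hn (tensRHom (S := S) dg)
  rw [tens2_eq_tensL_mul_tensR dg, hexpL, hexpR, ← IsNilpotent.exp_add_of_commute hcomm hL hR]
  exact (Module.End.commute_exp_left_of_commute hn (hcomm.isNilpotent_add hL hR)
    (g := comul S) hc.symm).symm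

theorem IsCoder.isGradedCoalgMor_exp (hc : IsCoder S dg 0 d) (hd : HomogEnd S dg 0 d)
    (hn : IsNilpotent d) : IsGradedCoalgMor dg (IsNilpotent.exp d) := by
  refine ⟨⟨comul_comp_exp hc hd hn, ?_⟩, hd.exp hn⟩
  have h := Module.End.commute_exp_left_of_commute hn
    (IsNilpotent.zero : IsNilpotent (0 : Module.End S S)) (g := counit S)
    (by rw [hc.counit_comp, LinearMap.zero_comp])
  rw [← h, IsNilpotent.exp_zero]
  rfl

end CoalgebraMorphisms

section NormalizedCoderivations

variable {S : Type} [CommRing S] {κ : Type} {dg : κ → ℤ}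

variable (S dg) in
/-- The degree `d` part of the graded Lie algebra of coderivations of `BA ⊗ S`. -/
noncomputable def coderivation (d : ℤ) : Submodule S (Module.End S (BW κ S)) :=
  coderSubmodule S dg d ⊓ homogSubmodule S dg d

variable (S κ) in
/-- The endomorphisms of `BA ⊗ S` with normalized components. -/
def normalizedSubmodule : Submodule S (Module.End S (BW κ S)) where
  carrier := {F | NormalizedEnd S F}
  zero_mem' _ _ := map_zero _
  add_mem' {F G} hF hG w hw := by
    rw [LinearMap.add_apply, map_add, hF w hw, hG w hw, add_zero]
  smul_mem' r F hF w hw := by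
    rw [LinearMap.smul_apply, map_smul, hF w hw, smul_zero]

variable (S dg) in
/-- The degree `d` part of the graded Lie algebra `C̄^•(A)[1] ⊗ S` of normalized coderivations. -/
noncomputable def normalizedCoderivation (d : ℤ) : Submodule S (Module.End S (BW κ S)) :=
  coderivation S dg d ⊓ normalizedSubmodule S κ

theorem IsUnitalAInfinity.mem_coderivation {D : Module.End S (BW κ S)}
    (hD : IsUnitalAInfinity dg D) : D ∈ coderivation S dg 1 :=
  ⟨hD.isCoder, hD.homogEnd⟩

theorem commutator_mem_coderivation {d F : Module.End S (BW κ S)} {a : ℤ}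
    (hd : d ∈ coderivation S dg 0) (hF : F ∈ coderivation S dg a) :
    d * F - F * d ∈ coderivation S dg a := by
  have hcoder := IsCoder.bracket hd.1 hF.1 hd.2 hF.2
  have hhomog := HomogEnd.bracket hd.2 hF.2 (1 : S)
  rw [zero_mul, sgn_zero, one_smul, zero_add] at hcoder
  rw [one_smul, zero_add] at hhomog
  exact ⟨hcoder, hhomog⟩

theorem brace_eq_zero_of_normalized {β φ : Cochain S κ} (hβ : ∀ w, none ∈ w → β w = 0)
    (hφ : ∀ w, none ∈ w → φ w = 0) (d : ℤ) {w : List (Option κ)} (hw : none ∈ w) :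
    brace dg β d φ w = 0 := by
  refine splitSum_eq_zero fun x r hxr => splitSum_eq_zero fun y z hyz => ?_
  by_cases hy : none ∈ y
  · rw [hφ y hy, map_zero, smul_zero]
  · rw [plug_eq_zero_of_forall, smul_zero]
    intro c
    subst hxr hyz
    exact hβ _ (by grind)

theorem commutator_mem_normalizedCoderivation {d x : Module.End S (BW κ S)} {a : ℤ}
    (hd : d ∈ normalizedCoderivation S dg 0) (hx : x ∈ normalizedCoderivation S dg a) :
    d * x - x * d ∈ normalizedCoderivation S dg a := by
  refine ⟨commutator_mem_coderivation hd.1 hx.1, fun w hw => ?_⟩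
  change components (d * x - x * d) w = 0
  rw [components_sub, components_mul d hx.1.1, components_mul x hd.1.1, Pi.sub_apply,
    brace_eq_zero_of_normalized (β := components d) (φ := components x) hd.2 hx.2 a hw,
    brace_eq_zero_of_normalized (β := components x) (φ := components d) hx.2 hd.2 0 hw, sub_zero]

theorem IsUnital.commutator_mem {d D : Module.End S (BW κ S)} (hD : D ∈ coderivation S dg 1)
    (hu : IsUnital dg (components D)) (hd : d ∈ normalizedCoderivation S dg 0) :
    d * D - D * d ∈ normalizedCoderivation S dg 1 := by
  refine ⟨commutator_mem_coderivation hd.1 hD, fun w hw => ?_⟩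
  have hdiff := components_bracket hD.1 hd.1.1
  rw [sgn_zero, one_smul] at hdiff
  change components (d * D - D * d) w = 0
  rw [← neg_sub (D * d) (d * D), ← neg_one_smul S, components_smul, hdiff, Pi.smul_apply,
    hu.hochschildDiff_normalized hd.1.2.homogCochain hd.2 hw, smul_zero]

theorem IsUnital.iterate_commutator_mem {d D : Module.End S (BW κ S)}
    (hD : D ∈ coderivation S dg 1) (hu : IsUnital dg (components D))
    (hd : d ∈ normalizedCoderivation S dg 0) (i : ℕ) :
    (fun y => d * y - y * d)^[i + 1] D ∈ normalizedCoderivation S dg 1 := by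
  induction i with
  | zero => exact hu.commutator_mem hD hd
  | succ i ih =>
    rw [Function.iterate_succ_apply']
    exact commutator_mem_normalizedCoderivation hd ih

theorem IsUnital.add {β γ : Cochain S κ} (h : IsUnital dg β)
    (hγ : ∀ w, none ∈ w → γ w = 0) : IsUnital dg (β + γ) where
  unit := by rw [Pi.add_apply, h.unit, hγ _ (by simp), add_zero]
  right_unit x := by rw [Pi.add_apply, h.right_unit, hγ _ (by simp), add_zero]
  left_unit x := by rw [Pi.add_apply, h.left_unit, hγ _ (by simp), add_zero]
  higher w hw hw' := by rw [Pi.add_apply, h.higher w hw hw', hγ _ hw', add_zero]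

theorem IsUnital.eq_of_mem {β γ : Cochain S κ} (hβ : IsUnital dg β) (hγ : IsUnital dg γ)
    {w : List (Option κ)} (hw : none ∈ w) : β w = γ w := by
  match w with
  | [x] =>
    obtain rfl : none = x := by simpa using hw
    rw [hβ.unit, hγ.unit]
  | [x, y] =>
    rcases (by simpa using hw : none = x ∨ none = y) with rfl | rfl
    · rw [hβ.left_unit, hγ.left_unit]
    · rw [hβ.right_unit, hγ.right_unit]
  | a :: b :: c :: l => rw [hβ.higher _ (by simp) hw, hγ.higher _ (by simp) hw]

theorem IsUnital.sub_normalizedEnd {D D' : Module.End S (BW κ S)}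
    (hD : IsUnital dg (components D)) (hD' : IsUnital dg (components D')) :
    NormalizedEnd S (D' - D) := by
  intro w hw
  change components (D' - D) w = 0
  rw [components_sub, Pi.sub_apply, hD'.eq_of_mem hD hw, sub_self]

variable [Algebra ℚ S]

theorem IsUnital.exp_mul_mul_exp_neg_sub_mem {m : Ideal S} {N : ℕ} (hN : m ^ N = ⊥)
    {d D : Module.End S (BW κ S)} (hD : D ∈ coderivation S dg 1)
    (hu : IsUnital dg (components D)) (hd : d ∈ normalizedCoderivation S dg 0)
    (hdm : CoeffIn S m d) :
    IsNilpotent.exp d * D * IsNilpotent.exp (-d) - D ∈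
      normalizedCoderivation S dg 1 ⊓ coeffSubmodule κ m := by
  have hd1 := mem_adicFiltration_one (hN := hN).2 hdm
  rw [(adicFiltration κ hN).exp_mul_mul_exp_neg_eq hd1,
    add_sub_cancel_left (G := Module.End S (BW κ S))]
  refine Submodule.sum_mem ((normalizedCoderivation S dg 1 ⊓
    coeffSubmodule κ m).restrictScalars ℚ) fun i _ => Submodule.smul_mem _ _ ⟨?_, ?_⟩
  · exact hu.iterate_commutator_mem hD hd i
  · exact mem_adicFiltration_one.1 ((adicFiltration κ hN).antitone (Nat.le_add_left 1 i)
      ((adicFiltration κ hN).iterate_commutator_mem hd1 D (i + 1)))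

theorem IsUnitalAInfinity.exp_mul_mul_exp_neg {m : Ideal S} {N : ℕ} (hN : m ^ N = ⊥)
    {d D : Module.End S (BW κ S)} (hD : IsUnitalAInfinity dg D)
    (hd : d ∈ normalizedCoderivation S dg 0) (hdm : CoeffIn S m d) :
    IsUnitalAInfinity dg (IsNilpotent.exp d * D * IsNilpotent.exp (-d)) := by
  have hdn : IsNilpotent d := (adicFiltration κ hN).isNilpotent (mem_adicFiltration_one.2 hdm)
  have hsub := (hD.unital.exp_mul_mul_exp_neg_sub_mem hN hD.mem_coderivation hd hdm).1
  obtain ⟨x, hx⟩ : ∃ x, IsNilpotent.exp d * D * IsNilpotent.exp (-d) = D + x :=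
    ⟨_, (add_sub_cancel (G := Module.End S (BW κ S)) D _).symm⟩
  have hmul : (D + x) * (D + x) = 0 := by
    rw [← hx]
    calc IsNilpotent.exp d * D * IsNilpotent.exp (-d) *
          (IsNilpotent.exp d * D * IsNilpotent.exp (-d)) =
        IsNilpotent.exp d * D * (IsNilpotent.exp (-d) * IsNilpotent.exp d) * D *
          IsNilpotent.exp (-d) := by simp only [mul_assoc]
      _ = 0 := by
        rw [IsNilpotent.exp_neg_mul_exp_self hdn, mul_one, mul_assoc _ D D, hD.mul_self,
          mul_zero, zero_mul]
  rw [hx, add_sub_cancel_left (G := Module.End S (BW κ S))] at hsub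
  rw [hx]
  have hadd := Submodule.add_mem _ hD.mem_coderivation hsub.1
  refine ⟨hadd.1, hadd.2, hmul, ?_⟩
  rw [components_add]
  exact hD.unital.add hsub.2

end NormalizedCoderivations

section Normalization

variable {S : Type} [CommRing S] {κ : Type} {dg : κ → ℤ}

theorem components_mem_vectorsIn {J : Ideal S} {F : Module.End S (BW κ S)} (hF : CoeffIn S J F)
    (w : List (Option κ)) : components F w ∈ vectorsIn κ J := by
  intro c
  rw [components, proj1_apply]
  exact hF w [c]

theorem IsCoder.coeffIn {J : Ideal S} {d : ℤ} {F : Module.End S (BW κ S)}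
    (hF : IsCoder S dg d F) (h : ∀ w, components F w ∈ vectorsIn κ J) : CoeffIn S J F :=
  (hF.isCoderMod J).coeffIn h

theorem coderOf_mem_coderivation {d : ℤ} {φ : Cochain S κ} (hφ : HomogCochain dg d φ) :
    coderOf dg d φ ∈ coderivation S dg d :=
  ⟨isCoder_coderOf dg d φ, hφ.homogEnd_coderOf⟩

theorem anticommutator_mem_coderivation {D Ψ : Module.End S (BW κ S)}
    (hD : D ∈ coderivation S dg 1) (hΨ : Ψ ∈ coderivation S dg (-1)) :
    D * Ψ + Ψ * D ∈ coderivation S dg 0 := by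
  have hcoder := IsCoder.bracket hD.1 hΨ.1 hD.2 hΨ.2
  have hhomog := HomogEnd.bracket hD.2 hΨ.2 (-1 : S)
  rw [one_mul, sgn_neg, sgn_one, neg_one_smul S (Ψ * D), sub_neg_eq_add] at hcoder
  rw [neg_one_smul S (Ψ * D), sub_neg_eq_add] at hhomog
  exact ⟨hcoder, hhomog⟩

theorem exists_normalizedCoderivation_sub_mem {d : ℤ} {G : Module.End S (BW κ S)}
    (hG : G ∈ coderivation S dg d) {I J : Ideal S} (hI : CoeffIn S I G)
    (hJ : ∀ w, none ∈ w → components G w ∈ vectorsIn κ J) :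
    ∃ Θ ∈ normalizedCoderivation S dg d, CoeffIn S I Θ ∧ CoeffIn S J (G - Θ) := by
  set θ : Cochain S κ := fun w => if none ∈ w then 0 else components G w with hθ
  have hθ_homog : HomogCochain dg d θ := by
    intro w c hc
    simp only [hθ] at hc
    split_ifs at hc with hw
    · exact absurd rfl hc
    · exact HomogEnd.homogCochain hG.2 w c hc
  have hΘ := coderOf_mem_coderivation hθ_homog
  have hsub : G - coderOf dg d θ ∈ coderivation S dg d :=
    Submodule.sub_mem (coderivation S dg d) (x := G) (y := coderOf dg d θ) hG hΘ
  refine ⟨coderOf dg d θ, ⟨hΘ, fun w hw => ?_⟩, hΘ.1.coeffIn fun w => ?_,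
    hsub.1.coeffIn fun w => ?_⟩
  · change components (coderOf dg d θ) w = 0
    rw [components_coderOf]
    exact if_pos hw
  · rw [components_coderOf]
    simp only [hθ]
    split_ifs
    exacts [Submodule.zero_mem _, components_mem_vectorsIn hI w]
  · rw [components_sub, components_coderOf, Pi.sub_apply]
    simp only [hθ]
    split_ifs with hw
    · rw [sub_zero]
      exact hJ w hw
    · rw [sub_self]
      exact Submodule.zero_mem _

theorem IsUnitalAInfinity.exists_normalizedCoderivation_add_sub_mem
    {B : Module.End S (BW κ S)} (hB : IsUnitalAInfinity dg B) (hB0 : components B [] = 0)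
    {F : Module.End S (BW κ S)} (hF : F ∈ coderivation S dg 0) {I J : Ideal S}
    (hI : CoeffIn S I F)
    (hJ : ∀ w, none ∈ w → components (B * F - F * B) w ∈ vectorsIn κ J) :
    ∃ Ψ ∈ coderivation S dg (-1), CoeffIn S I Ψ ∧
      ∃ Θ ∈ normalizedCoderivation S dg 0, CoeffIn S I Θ ∧
        CoeffIn S J (F + (B * Ψ + Ψ * B) - Θ) := by
  have hdiff := components_bracket hB.isCoder hF.1
  rw [sgn_zero, one_smul] at hdiff
  rw [hdiff] at hJ
  obtain ⟨ψ, hψ, hψI, hψJ⟩ := hB.exists_add_hochschildDiff_mem hB0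
    (HomogEnd.homogCochain hF.2) (components_mem_vectorsIn hI) hJ
  have hΨ := coderOf_mem_coderivation hψ
  have hΨI : CoeffIn S I (coderOf dg (-1) ψ) := hΨ.1.coeffIn fun w => by
    rw [components_coderOf]
    exact hψI w
  have hdΨ := components_bracket hB.isCoder hΨ.1
  rw [sgn_neg, sgn_one, neg_one_smul S (coderOf dg (-1) ψ * B), sub_neg_eq_add,
    components_coderOf] at hdΨ
  have hsum := Submodule.add_mem _ hF (anticommutator_mem_coderivation hB.mem_coderivation hΨ)
  refine ⟨_, hΨ, hΨI, exists_normalizedCoderivation_sub_mem hsum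
    (IsCoder.coeffIn hsum.1 fun w => ?_) fun w hw => ?_⟩
  · rw [components_add, hdΨ]
    exact Submodule.add_mem _ (components_mem_vectorsIn hI w) (hochschildDiff_mem dg _ _ hψI w)
  · rw [components_add, hdΨ]
    exact hψJ w hw

end Normalization

section Logarithm

theorem anticommutator_sub_anticommutator {𝔄 : Type*} [Ring 𝔄] (B D Ψ : 𝔄) :
    (D * Ψ + Ψ * D) - (B * Ψ + Ψ * B) = (D - B) * Ψ + Ψ * (D - B) := by
  noncomm_ring

theorem commute_anticommutator_of_mul_self {𝔄 : Type*} [Ring 𝔄] {D : 𝔄} (hD : D * D = 0)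
    (Ψ : 𝔄) : Commute (D * Ψ + Ψ * D) D := by
  change (D * Ψ + Ψ * D) * D = D * (D * Ψ + Ψ * D)
  rw [mul_add, add_mul, ← mul_assoc D D, hD, mul_assoc Ψ, hD, zero_mul, mul_zero, zero_add,
    add_zero, mul_assoc]

variable {S : Type} [CommRing S] [Algebra ℚ S] {κ : Type} {dg : κ → ℤ} {m : Ideal S} {N : ℕ}
  {B D D' : Module.End S (BW κ S)}

theorem IsUnital.components_commutator_mem (hN : m ^ N = ⊥) (hD : IsUnital dg (components D))
    (hD' : IsUnital dg (components D')) (hDB : CoeffIn S m (D - B)) (hDB' : CoeffIn S m (D' - B))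
    {i : ℕ} {ε ε' : Module.End S (BW κ S)} (hε : CoeffIn S (m ^ i) ε)
    (hε' : CoeffIn S (m ^ (i + 1)) (ε - ε')) (h : (1 + ε) * D = D' * (1 + ε))
    {w : List (Option κ)} (hw : none ∈ w) :
    components (B * ε' - ε' * B) w ∈ vectorsIn κ (m ^ (i + 1)) := by
  have hcomm := components_mem_vectorsIn ((adicFiltration κ hN).sub_add_commutator_mem
    (mem_adicFiltration_one.2 hDB) (mem_adicFiltration_one.2 hDB') hε hε' h) w
  rw [components_add, components_sub D', Pi.add_apply, Pi.sub_apply, hD'.eq_of_mem hD hw,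
    sub_self, zero_add] at hcomm
  exact hcomm

theorem anticommutator_sub_mem (hN : m ^ N = ⊥) (hDB : CoeffIn S m (D - B)) {i : ℕ}
    {Ψ : Module.End S (BW κ S)} (hΨ : CoeffIn S (m ^ i) Ψ) :
    CoeffIn S (m ^ (i + 1)) ((D * Ψ + Ψ * D) - (B * Ψ + Ψ * B)) := by
  rw [anticommutator_sub_anticommutator (𝔄 := Module.End S (BW κ S))]
  have hDB' := mem_adicFiltration_one (hN := hN).2 hDB
  exact Submodule.add_mem _ ((adicFiltration κ hN).mul_mem_succ_left hDB' hΨ)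
    ((adicFiltration κ hN).mul_mem hΨ hDB')

theorem IsUnitalAInfinity.exists_error_correction (hN : m ^ N = ⊥)
    (hB : IsUnitalAInfinity dg B) (hB0 : components B [] = 0) (hD : IsUnitalAInfinity dg D)
    (hD' : IsUnitalAInfinity dg D') (hDB : CoeffIn S m (D - B)) (hDB' : CoeffIn S m (D' - B))
    {i : ℕ} (hi : 1 ≤ i) {ε : Module.End S (BW κ S)} (hε : CoeffIn S (m ^ i) ε)
    (hmor : IsGradedCoalgMor dg (1 + ε)) (h : (1 + ε) * D = D' * (1 + ε)) :
    ∃ Ψ ∈ coderivation S dg (-1), CoeffIn S (m ^ i) Ψ ∧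
      ∃ Θ ∈ normalizedCoderivation S dg 0, CoeffIn S (m ^ i) Θ ∧
        CoeffIn S (m ^ (i + 1)) (ε + (D' * Ψ + Ψ * D') - Θ) := by
  have hsq : m ^ i * m ^ i ≤ m ^ (i + 1) := by
    rw [← pow_add]
    exact Ideal.pow_le_pow_right (by omega)
  have hε_homog : HomogEnd S dg 0 ε := by
    rw [← add_sub_cancel_left (G := Module.End S (BW κ S)) 1 ε]
    exact Submodule.sub_mem (homogSubmodule S dg 0) (x := 1 + ε) (y := 1) hmor.homogEnd
      homogEnd_one
  set F := coderOf dg 0 (components ε)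
  have hF : F ∈ coderivation S dg 0 := coderOf_mem_coderivation hε_homog.homogCochain
  have hFi : CoeffIn S (m ^ i) F := hF.1.coeffIn fun w => by
    rw [components_coderOf]
    exact components_mem_vectorsIn hε w
  have hεF : CoeffIn S (m ^ (i + 1)) (ε - F) := hmor.isCoalgMor.sub_coderOf_mem dg hsq hε
  obtain ⟨Ψ, hΨ, hΨi, Θ, hΘ, hΘi, hrest⟩ :=
    hB.exists_normalizedCoderivation_add_sub_mem hB0 hF hFi fun w hw =>
      hD.unital.components_commutator_mem hN hD'.unital hDB hDB' hε hεF h hw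
  refine ⟨Ψ, hΨ, hΨi, Θ, hΘ, hΘi, ?_⟩
  have hsplit : ε + (D' * Ψ + Ψ * D') - Θ = (ε - F) + (F + (B * Ψ + Ψ * B) - Θ) +
      ((D' * Ψ + Ψ * D') - (B * Ψ + Ψ * B)) := by abel
  rw [hsplit]
  exact Submodule.add_mem (coeffSubmodule κ _) (Submodule.add_mem (coeffSubmodule κ _) hεF hrest)
    (anticommutator_sub_mem hN hDB' hΨi)

variable (dg) in
/-- The normalized coderivation `d` is a logarithm modulo `m ^ i` of the isomorphism `f` from
`D` to `D'`. -/
structure IsApproxLog (m : Ideal S) (D D' : Module.End S (BW κ S)) (i : ℕ)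
    (d f : Module.End S (BW κ S)) : Prop where
  mem : d ∈ normalizedCoderivation S dg 0
  coeffIn : CoeffIn S m d
  isGradedCoalgMor : IsGradedCoalgMor dg f
  intertwines : f * D = D' * f
  sub_exp_mem : CoeffIn S (m ^ i) (f - IsNilpotent.exp d)

theorem IsApproxLog.exists_eq_one_add_mul_exp (hN : m ^ N = ⊥) {i : ℕ}
    {d f : Module.End S (BW κ S)} (h : IsApproxLog dg m D D' i d f) :
    ∃ ε, f = (1 + ε) * IsNilpotent.exp d ∧ CoeffIn S (m ^ i) ε ∧
      IsGradedCoalgMor dg (1 + ε) ∧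
      (1 + ε) * (IsNilpotent.exp d * D * IsNilpotent.exp (-d)) = D' * (1 + ε) := by
  have hn : IsNilpotent d :=
    (adicFiltration κ hN).isNilpotent (mem_adicFiltration_one.2 h.coeffIn)
  have hn_neg : IsNilpotent (-d) := hn.neg (R := Module.End S (BW κ S))
  have hneg : -d ∈ coderivation S dg 0 :=
    Submodule.neg_mem (coderivation S dg 0) (x := d) h.mem.1
  obtain ⟨ε, hε⟩ : ∃ ε, f * IsNilpotent.exp (-d) = 1 + ε :=
    ⟨_, (add_sub_cancel (G := Module.End S (BW κ S)) 1 _).symm⟩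
  refine ⟨ε, ?_, ?_, ?_, ?_⟩
  · rw [← hε, mul_assoc, IsNilpotent.exp_neg_mul_exp_self hn, mul_one]
  · have hε' : ε = (f - IsNilpotent.exp d) * IsNilpotent.exp (-d) := by
      rw [sub_mul (α := Module.End S (BW κ S)), hε, IsNilpotent.exp_mul_exp_neg_self hn,
        add_sub_cancel_left (G := Module.End S (BW κ S))]
    rw [hε']
    exact (adicFiltration κ hN).mul_mem_right h.sub_exp_mem _
  · rw [← hε]
    exact h.isGradedCoalgMor.mul (hneg.1.isGradedCoalgMor_exp hneg.2 hn_neg)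
  · rw [← hε]
    calc f * IsNilpotent.exp (-d) * (IsNilpotent.exp d * D * IsNilpotent.exp (-d))
        = f * (IsNilpotent.exp (-d) * IsNilpotent.exp d) * D * IsNilpotent.exp (-d) := by
          simp only [mul_assoc]
      _ = D' * (f * IsNilpotent.exp (-d)) := by
          rw [IsNilpotent.exp_neg_mul_exp_self hn, mul_one, h.intertwines, mul_assoc]

theorem IsApproxLog.exists_succ (hN : m ^ N = ⊥) (hB : IsUnitalAInfinity dg B)
    (hB0 : components B [] = 0) (hD : IsUnitalAInfinity dg D) (hD' : IsUnitalAInfinity dg D')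
    (hDB : CoeffIn S m (D - B)) (hDB' : CoeffIn S m (D' - B)) {i : ℕ} (hi : 1 ≤ i)
    {d f : Module.End S (BW κ S)} (h : IsApproxLog dg m D D' i d f) :
    ∃ d' f', IsApproxLog dg m D D' (i + 1) d' f' := by
  obtain ⟨ε, hf, hε, hmor, hint⟩ := h.exists_eq_one_add_mul_exp hN
  have hconj : CoeffIn S m (IsNilpotent.exp d * D * IsNilpotent.exp (-d) - B) := by
    rw [← sub_add_sub_cancel (G := Module.End S (BW κ S)) _ D B]
    exact Submodule.add_mem (coeffSubmodule κ m) (hD.unital.exp_mul_mul_exp_neg_sub_mem hN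
      hD.mem_coderivation h.mem h.coeffIn).2 hDB
  obtain ⟨Ψ, hΨ, hΨi, Θ, hΘ, hΘi, hrest⟩ := hB.exists_error_correction hN hB0
    (hD.exp_mul_mul_exp_neg hN h.mem h.coeffIn) hD' hconj hDB' hi hε hmor hint
  set Φ := adicFiltration κ hN
  set η := D' * Ψ + Ψ * D'
  have hηi : η ∈ Φ.part i :=
    Submodule.add_mem _ (Φ.mul_mem_left _ hΨi) (Φ.mul_mem_right hΨi _)
  have hηn : IsNilpotent η := Φ.isNilpotent (Φ.antitone hi hηi)
  have hη := anticommutator_mem_coderivation hD'.mem_coderivation hΨ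
  have hηD' : IsNilpotent.exp η * D' = D' * IsNilpotent.exp η :=
    Module.End.commute_exp_left_of_commute hηn hηn (g := D')
      (commute_anticommutator_of_mul_self (𝔄 := Module.End S (BW κ S)) hD'.mul_self Ψ)
  refine ⟨d + Θ, IsNilpotent.exp η * f, Submodule.add_mem _ h.mem hΘ,
    Submodule.add_mem (coeffSubmodule κ m) h.coeffIn
      (mem_adicFiltration_one.1 (Φ.antitone hi hΘi)),
    (hη.1.isGradedCoalgMor_exp hη.2 hηn).mul h.isGradedCoalgMor, ?_, ?_⟩
  · rw [mul_assoc, h.intertwines, ← mul_assoc, hηD', mul_assoc]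
  · rw [hf]
    exact Φ.exp_mul_sub_exp_add_mem hi (mem_adicFiltration_one.2 h.coeffIn) hΘi hε hηi hrest

theorem exists_normalizedCoderivation_exp_intertwines (hN : m ^ N = ⊥)
    (hB : IsUnitalAInfinity dg B) (hB0 : components B [] = 0) (hD : IsUnitalAInfinity dg D)
    (hD' : IsUnitalAInfinity dg D') (hDB : CoeffIn S m (D - B)) (hDB' : CoeffIn S m (D' - B))
    {f : Module.End S (BW κ S)} (hf : IsGradedCoalgMor dg f) (hfD : f * D = D' * f)
    (hf1 : CoeffIn S m (f - 1)) :
    ∃ d ∈ normalizedCoderivation S dg 0, CoeffIn S m d ∧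
      IsNilpotent.exp d * D = D' * IsNilpotent.exp d := by
  have happrox : ∀ i, ∃ d f', IsApproxLog dg m D D' (i + 1) d f' := by
    intro i
    induction i with
    | zero =>
      refine ⟨0, f, Submodule.zero_mem _, Submodule.zero_mem (coeffSubmodule κ m), hf, hfD, ?_⟩
      rw [IsNilpotent.exp_zero, zero_add, pow_one]
      exact hf1
    | succ i ih =>
      obtain ⟨d, f', h⟩ := ih
      exact h.exists_succ hN hB hB0 hD hD' hDB hDB' (Nat.le_add_left 1 i)
  obtain ⟨d, f', h⟩ := happrox N
  have hf' : f' = IsNilpotent.exp d := eq_of_sub_eq_zero (α := Module.End S (BW κ S))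
    ((adicFiltration κ hN).eq_zero_of_mem (Nat.le_succ N) h.sub_exp_mem)
  exact ⟨d, h.mem, h.coeffIn, hf' ▸ h.intertwines⟩

end Logarithm

section BaseChange

variable {k : Type} [Field k] {R : Type} [CommRing R] [Algebra k R] {κ : Type}
  {dg : κ → ℤ}

theorem baseEnd_single (F : Module.End k (BW κ k)) (w : List (Option κ)) :
    baseEnd k R F (single w 1) = mapBW k R (F (single w 1)) := by
  simp [baseEnd]

theorem mapBW_apply (v : BW κ k) (w : List (Option κ)) :
    mapBW k R v w = algebraMap k R (v w) := by
  simp [mapBW]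

theorem mapBW_single (w : List (Option κ)) (c : k) :
    mapBW k R (single w c : BW κ k) = single w (algebraMap k R c) := by
  simp [mapBW]

theorem baseEnd_mapBW (F : Module.End k (BW κ k)) (v : BW κ k) :
    baseEnd k R F (mapBW k R v) = mapBW k R (F v) := by
  induction v using Finsupp.induction_linear with
  | zero => simp only [map_zero]
  | add f g hf hg => simp only [map_add, hf, hg]
  | single w c =>
    rw [mapBW_single, ← smul_single_one w (algebraMap k R c), map_smul, baseEnd_single,
      ← smul_single_one w c, map_smul, map_smul, algebraMap_smul]

theorem baseEnd_mul (F G : Module.End k (BW κ k)) :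
    baseEnd k R (F * G) = baseEnd k R F * baseEnd k R G :=
  BW.hom_ext fun w => by
    rw [Module.End.mul_apply, baseEnd_single, baseEnd_single, baseEnd_mapBW,
      Module.End.mul_apply]

theorem baseEnd_zero : baseEnd k R (0 : Module.End k (BW κ k)) = 0 :=
  BW.hom_ext fun w => by
    rw [baseEnd_single, LinearMap.zero_apply, map_zero, LinearMap.zero_apply]

theorem components_baseEnd (F : Module.End k (BW κ k)) (w : List (Option κ)) (c : Option κ) :
    components (baseEnd k R F) w c = algebraMap k R (components F w c) := by
  rw [components, components, proj1_apply, proj1_apply, baseEnd_single, mapBW_apply]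

theorem isCoder_iff_apply {S : Type} [CommRing S] {d : ℤ} {F : Module.End S (BW κ S)} :
    IsCoder S dg d F ↔ ∀ w p q, F (single w 1) (p ++ q) =
      splitSum (fun a b => if b = q then F (single a 1) p else 0) w +
        splitSum (fun a b => if a = p then sgn S (d * epsO dg p) * F (single b 1) q else 0) w := by
  simp only [← tensL_comul_apply, ← tensR_comul_apply, ← comul_apply]
  refine ⟨fun h w p q => ?_, fun h => BW.hom_ext fun w => Finsupp.ext fun pq => h w pq.1 pq.2⟩
  exact DFunLike.congr_fun (LinearMap.congr_fun h (single w 1)) (p, q)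

theorem IsCoder.baseEnd {d : ℤ} {F : Module.End k (BW κ k)} (hF : IsCoder k dg d F) :
    IsCoder R dg d (baseEnd k R F) := by
  rw [isCoder_iff_apply] at hF ⊢
  intro w p q
  simp only [baseEnd_single, mapBW_apply, hF w p q, map_add, map_splitSum (algebraMap k R),
    apply_ite (algebraMap k R), map_mul, algebraMap_sgn, map_zero]

theorem HomogEnd.baseEnd {d : ℤ} {F : Module.End k (BW κ k)} (hF : HomogEnd k dg d F) :
    HomogEnd R dg d (baseEnd k R F) := by
  intro w u hu
  refine hF w u ?_
  rw [Finsupp.mem_support_iff] at hu ⊢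
  contrapose! hu
  rw [baseEnd_single, mapBW_apply, hu, map_zero]

theorem IsUnital.baseEnd {F : Module.End k (BW κ k)} (hF : IsUnital dg (components F)) :
    IsUnital dg (components (baseEnd k R F)) where
  unit := by
    ext c
    rw [components_baseEnd, hF.unit, Finsupp.zero_apply, map_zero, Finsupp.zero_apply]
  right_unit x := by
    ext c
    rw [components_baseEnd, hF.right_unit, Finsupp.smul_apply, Finsupp.smul_apply, smul_eq_mul,
      map_mul, algebraMap_sgn, smul_eq_mul, single_apply, single_apply,
      apply_ite (algebraMap k R), map_one, map_zero]
  left_unit x := by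
    ext c
    rw [components_baseEnd, hF.left_unit, single_apply, single_apply,
      apply_ite (algebraMap k R), map_one, map_zero]
  higher w hw hnone := by
    ext c
    rw [components_baseEnd, hF.higher w hw hnone, Finsupp.zero_apply, map_zero,
      Finsupp.zero_apply]

theorem IsUnitalAInfinity.baseEnd {F : Module.End k (BW κ k)} (hF : IsUnitalAInfinity dg F) :
    IsUnitalAInfinity dg (baseEnd k R F) where
  isCoder := hF.isCoder.baseEnd
  homogEnd := hF.homogEnd.baseEnd
  mul_self := by rw [← baseEnd_mul, hF.mul_self, baseEnd_zero]
  unital := hF.unital.baseEnd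

theorem components_baseEnd_nil {F : Module.End k (BW κ k)} (hF : F (single [] 1) = 0) :
    components (baseEnd k R F) [] = 0 := by
  rw [components, baseEnd_single, hF, map_zero, map_zero]

theorem gaugeEnd_eq_gaugeEnd_rat [Algebra ℚ R] (N : ℕ) (B α μ : Module.End R (BW κ R)) :
    gaugeEnd k R N B α μ = gaugeEnd ℚ R N B α μ := by
  simp only [gaugeEnd, Algebra.algebraMap_eq_smul_one, inv_natCast_smul_eq k ℚ]

end BaseChange

section Deformations

theorem commutator_add_eq {𝔄 : Type*} [Ring 𝔄] (B d x : 𝔄) :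
    (d * x - x * d) - (B * d - d * B) = d * (B + x) - (B + x) * d := by
  noncomm_ring

theorem add_mul_self_of_mul_self {𝔄 : Type*} [Ring 𝔄] {B : 𝔄} (hB : B * B = 0) (x : 𝔄) :
    (B + x) * (B + x) = B * x + x * B + x * x := by
  rw [add_mul, mul_add, mul_add, hB, zero_add, add_assoc]

theorem mul_mul_eq_iff_of_mul_eq_one {M : Type*} [Monoid M] {u v a b : M} (huv : u * v = 1)
    (hvu : v * u = 1) : u * a * v = b ↔ u * a = b * u :=
  Units.mul_inv_eq_iff_eq_mul (⟨u, v, huv, hvu⟩ : Mˣ)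

variable {S : Type} [CommRing S] {κ : Type} (dg : κ → ℤ) (m : Ideal S)

/-- The Maurer–Cartan set of `C̄^•(A)[1] ⊗ m`, for the `A∞`-structure `B` on `A ⊗ S`. -/
def maurerCartanSet (B : Module.End S (BW κ S)) : Set (Module.End S (BW κ S)) :=
  {x | IsCoder S dg 1 x ∧ HomogEnd S dg 1 x ∧ NormalizedEnd S x ∧ CoeffIn S m x ∧
    B * x + x * B + x * x = 0}

/-- The unital curved `A∞`-structures on `A ⊗ S` which agree with `B` modulo `m`. -/
def deformationSet (B : Module.End S (BW κ S)) : Set (Module.End S (BW κ S)) :=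
  {D | IsCoder S dg 1 D ∧ HomogEnd S dg 1 D ∧ D * D = 0 ∧ CoeffIn S m (D - B) ∧
    UnitAxioms S dg D}

/-- Equivalence of `x` and `y` under the gauge action of `exp (C̄^•(A)[1] ⊗ m)⁰`, where
`m ^ N = 0`. -/
def GaugeEquivalent [Algebra ℚ S] (N : ℕ) (B x y : Module.End S (BW κ S)) : Prop :=
  ∃ d, (IsCoder S dg 0 d ∧ HomogEnd S dg 0 d ∧ NormalizedEnd S d ∧ CoeffIn S m d) ∧
    gaugeEnd ℚ S N B d x = y

/-- The deformations `D` and `D'` are isomorphic by a map which is the identity modulo `m`. -/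
def IsoDeformation (D D' : Module.End S (BW κ S)) : Prop :=
  ∃ f : Module.End S (BW κ S), IsCoalgMor S f ∧ HomogEnd S dg 0 f ∧ ReducesToId S m f ∧
    Function.Bijective f ∧ f * D = D' * f

variable {dg m} {B : Module.End S (BW κ S)}

theorem mem_deformationSet_iff {D : Module.End S (BW κ S)} :
    D ∈ deformationSet dg m B ↔ IsUnitalAInfinity dg D ∧ CoeffIn S m (D - B) :=
  ⟨fun ⟨hcoder, hhomog, hsq, hDB, hunit⟩ =>
    ⟨⟨hcoder, hhomog, hsq, (isUnital_components_iff dg).2 hunit⟩, hDB⟩,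
  fun ⟨hD, hDB⟩ =>
    ⟨hD.isCoder, hD.homogEnd, hD.mul_self, hDB, (isUnital_components_iff dg).1 hD.unital⟩⟩

theorem IsUnitalAInfinity.add_mem_deformationSet_iff (hB : IsUnitalAInfinity dg B)
    {x : Module.End S (BW κ S)} :
    B + x ∈ deformationSet dg m B ↔ x ∈ maurerCartanSet dg m B := by
  have hx : B + x - B = x := add_sub_cancel_left (G := Module.End S (BW κ S)) B x
  have hsq := add_mul_self_of_mul_self (𝔄 := Module.End S (BW κ S)) hB.mul_self x
  have hcoder := Submodule.add_mem_iff_right (coderivation S dg 1) (y := x) hB.mem_coderivation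
  rw [mem_deformationSet_iff, hx]
  constructor
  · rintro ⟨hD, hxm⟩
    have hxc := hcoder.1 hD.mem_coderivation
    exact ⟨hxc.1, hxc.2, hx ▸ hB.unital.sub_normalizedEnd hD.unital, hxm,
      hsq.symm.trans hD.mul_self⟩
  · rintro ⟨hc, hh, hnorm, hxm, hmc⟩
    have hxc := hcoder.2 ⟨hc, hh⟩
    refine ⟨⟨hxc.1, hxc.2, hsq.trans hmc, ?_⟩, hxm⟩
    rw [components_add]
    exact hB.unital.add hnorm

theorem IsUnitalAInfinity.bijOn_maurerCartanSet (hB : IsUnitalAInfinity dg B) :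
    Set.BijOn (fun x => B + x) (maurerCartanSet dg m B) (deformationSet dg m B) :=
  (Equiv.addLeft B).bijOn fun _ => hB.add_mem_deformationSet_iff

variable [Algebra ℚ S] {N : ℕ}

theorem exp_mul_eq_iff {d D D' : Module.End S (BW κ S)} (hd : IsNilpotent d) :
    IsNilpotent.exp d * D * IsNilpotent.exp (-d) = D' ↔
      IsNilpotent.exp d * D = D' * IsNilpotent.exp d :=
  mul_mul_eq_iff_of_mul_eq_one (IsNilpotent.exp_mul_exp_neg_self hd)
    (IsNilpotent.exp_neg_mul_exp_self hd)

theorem add_gaugeEnd_eq_exp_mul_mul_exp_neg (hN : m ^ N = ⊥) {d : Module.End S (BW κ S)}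
    (hd : CoeffIn S m d) (x : Module.End S (BW κ S)) :
    B + gaugeEnd ℚ S N B d x = IsNilpotent.exp d * (B + x) * IsNilpotent.exp (-d) := by
  rw [(adicFiltration κ hN).exp_mul_mul_exp_neg_eq (mem_adicFiltration_one.2 hd), gaugeEnd,
    add_assoc, commutator_add_eq (𝔄 := Module.End S (BW κ S))]
  simp only [Function.iterate_succ_apply, algebraMap_smul]

theorem gaugeEquivalent_iff (hN : m ^ N = ⊥) {x y : Module.End S (BW κ S)} :
    GaugeEquivalent dg m N B x y ↔ ∃ d ∈ normalizedCoderivation S dg 0, CoeffIn S m d ∧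
      IsNilpotent.exp d * (B + x) = (B + y) * IsNilpotent.exp d := by
  have hgauge {d : Module.End S (BW κ S)} (hdm : CoeffIn S m d) : gaugeEnd ℚ S N B d x = y ↔
      IsNilpotent.exp d * (B + x) = (B + y) * IsNilpotent.exp d := by
    rw [← exp_mul_eq_iff ((adicFiltration κ hN).isNilpotent (mem_adicFiltration_one.2 hdm)),
      ← add_gaugeEnd_eq_exp_mul_mul_exp_neg hN hdm]
    exact ((Equiv.addLeft B).injective.eq_iff (a := gaugeEnd ℚ S N B d x) (b := y)).symm
  constructor
  · rintro ⟨d, ⟨hc, hh, hn, hdm⟩, hd⟩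
    exact ⟨d, ⟨⟨hc, hh⟩, hn⟩, hdm, (hgauge hdm).1 hd⟩
  · rintro ⟨d, ⟨⟨hc, hh⟩, hn⟩, hdm, hd⟩
    exact ⟨d, ⟨hc, hh, hn, hdm⟩, (hgauge hdm).2 hd⟩

theorem bijective_exp {d : Module.End S (BW κ S)} (hd : IsNilpotent d) :
    Function.Bijective (IsNilpotent.exp d : Module.End S (BW κ S)) :=
  (Module.End.isUnit_iff _).1 (IsNilpotent.isUnit_exp (A := Module.End S (BW κ S)) hd)

theorem IsUnitalAInfinity.isoDeformation_iff (hN : m ^ N = ⊥) (hB : IsUnitalAInfinity dg B)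
    (hB0 : components B [] = 0) {D D' : Module.End S (BW κ S)}
    (hD : D ∈ deformationSet dg m B) (hD' : D' ∈ deformationSet dg m B) :
    IsoDeformation dg m D D' ↔ ∃ d ∈ normalizedCoderivation S dg 0, CoeffIn S m d ∧
      IsNilpotent.exp d * D = D' * IsNilpotent.exp d := by
  rw [mem_deformationSet_iff] at hD hD'
  constructor
  · rintro ⟨f, hf, hf0, hf1, -, hfD⟩
    exact exists_normalizedCoderivation_exp_intertwines hN hB hB0 hD.1 hD'.1 hD.2 hD'.2
      ⟨hf, hf0⟩ hfD hf1
  · rintro ⟨d, ⟨⟨hc, hh⟩, -⟩, hdm, hd⟩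
    have hd1 := mem_adicFiltration_one (hN := hN).2 hdm
    have hn := (adicFiltration κ hN).isNilpotent hd1
    have hexp := hc.isGradedCoalgMor_exp hh hn
    exact ⟨_, hexp.isCoalgMor, hexp.homogEnd,
      mem_adicFiltration_one.1 ((adicFiltration κ hN).exp_sub_one_mem hd1), bijective_exp hn, hd⟩

theorem statement5_general (hN : m ^ N = ⊥) (hB : IsUnitalAInfinity dg B)
    (hB0 : components B [] = 0) :
    Set.BijOn (fun x => B + x) (maurerCartanSet dg m B) (deformationSet dg m B) ∧
      ∀ x ∈ maurerCartanSet dg m B, ∀ y ∈ maurerCartanSet dg m B,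
        (GaugeEquivalent dg m N B x y ↔ IsoDeformation dg m (B + x) (B + y)) := by
  refine ⟨hB.bijOn_maurerCartanSet, fun x hx y hy => ?_⟩
  rw [gaugeEquivalent_iff hN, hB.isoDeformation_iff hN hB0 (hB.add_mem_deformationSet_iff.2 hx)
    (hB.add_mem_deformationSet_iff.2 hy)]

end Deformations

end NCB

open NCB in
/-- Let `(A,b)` be a unital A∞-algebra over a field `k` of characteristic `0`.
For every artin local `k`-algebra `R` with residue field `k` and maximal ideal `m`, the
assignment `x ↦ (A⊗R, b⊗R + x)` induces a bijection
`Def_{C̄^•(A)[1]}(R) = MC(C̄^•(A)[1]⊗m_R)/exp((C̄^•(A)[1]⊗m_R)⁰) ≅ 𝖣𝖠𝗅𝗀_A(R)`: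
(a) `x ↦ b⊗R + x` is a bijection from the Maurer–Cartan set onto the set of deformations
of `(A,b)` to `R`, and (b) two Maurer–Cartan elements are gauge equivalent exactly when the
corresponding deformations are isomorphic, so that the map descends to a bijection on the
quotients. -/
theorem statement5 {k : Type} [Field k] [CharZero k] {κ : Type} (dg : κ → ℤ)
    (R : Type) [CommRing R] [Algebra k R] [IsArtinianRing R] [IsLocalRing R]
    (m : Ideal R) (hm : m = IsLocalRing.maximalIdeal R) (N : ℕ) (hN : m ^ N = ⊥)
    (hres : Function.Bijective (algebraMap k (R ⧸ m)))
    (Db : Module.End k (BW κ k))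
    (hb1 : IsCoder k dg 1 Db) (hb2 : HomogEnd k dg 1 Db) (hb3 : Db * Db = 0)
    (hb4 : Db (Finsupp.single [] 1) = 0) (hb5 : UnitAxioms k dg Db) :
    -- (a) Maurer–Cartan elements correspond bijectively to deformations
    Set.BijOn (fun x => baseEnd k R Db + x)
      {x : Module.End R (BW κ R) |
        IsCoder R dg 1 x ∧ HomogEnd R dg 1 x ∧ NormalizedEnd R x ∧ CoeffIn R m x ∧
          baseEnd k R Db * x + x * baseEnd k R Db + x * x = 0}
      {D : Module.End R (BW κ R) |
        IsCoder R dg 1 D ∧ HomogEnd R dg 1 D ∧ D * D = 0 ∧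
          (∀ ls ms, (D (Finsupp.single ls 1) -
              mapBW k R (Db (Finsupp.single ls 1)) : BW κ R) ms ∈ m) ∧
          UnitAxioms R dg D} ∧
    -- (b) gauge equivalence corresponds to isomorphism of deformations
    ∀ x ∈ {x : Module.End R (BW κ R) |
        IsCoder R dg 1 x ∧ HomogEnd R dg 1 x ∧ NormalizedEnd R x ∧ CoeffIn R m x ∧
          baseEnd k R Db * x + x * baseEnd k R Db + x * x = 0},
    ∀ y ∈ {x : Module.End R (BW κ R) |
        IsCoder R dg 1 x ∧ HomogEnd R dg 1 x ∧ NormalizedEnd R x ∧ CoeffIn R m x ∧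
          baseEnd k R Db * x + x * baseEnd k R Db + x * x = 0},
      ((∃ d : Module.End R (BW κ R),
          (IsCoder R dg 0 d ∧ HomogEnd R dg 0 d ∧ NormalizedEnd R d ∧ CoeffIn R m d) ∧
            gaugeEnd k R N (baseEnd k R Db) d x = y) ↔
        (∃ f : Module.End R (BW κ R),
          IsCoalgMor R f ∧ HomogEnd R dg 0 f ∧ ReducesToId R m f ∧
            Function.Bijective f ∧
            f * (baseEnd k R Db + x) = (baseEnd k R Db + y) * f)) := by
  let _ : Algebra ℚ R := Algebra.compHom R (algebraMap ℚ k)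
  simp only [← baseEnd_single, gaugeEnd_eq_gaugeEnd_rat]
  exact statement5_general hN (IsUnitalAInfinity.baseEnd
    ⟨hb1, hb2, hb3, (isUnital_components_iff dg).2 hb5⟩) (components_baseEnd_nil hb4)
end

section
/- Let E be a cochain complex of vector spaces over a field k of characteristic 0 with differential d_E. For every R ∈ Art, the assignment x ↦ (E⊗_kR, d_E⊗_kR + x) induces a bijection Def_{End_k(E)}(R) = MC(End_k(E)⊗_km_R)/exp((End_k(E)⊗_km_R)⁰) ≅ 𝖣_E(R), natural in R, where 𝖣_E(R) is the set of isomorphism classes of deformations of the complex E to R. -/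
open TensorProduct

namespace NCE

variable (k : Type) [Field k] [CharZero k]
variable (R : Type) [CommRing R] [Algebra k R]
variable {M : Type} [AddCommGroup M] [Module R M]

/-- Truncated exponential `Σ_{i<N} F^i/i!` of an endomorphism (equal to `exp F` whenever
`F` has coefficients in `m` with `m^N = 0`). -/
noncomputable def expM (N : ℕ) (F : Module.End R M) : Module.End R M :=
  ∑ i ∈ Finset.range N, algebraMap k R ((i.factorial : k)⁻¹) • F ^ i

/-- Truncated logarithm `Σ_{1≤n≤N} (−1)^{n−1}(F−1)^n/n`. -/
noncomputable def logM (N : ℕ) (F : Module.End R M) : Module.End R M :=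
  ∑ n ∈ Finset.range (N + 1),
    if n = 0 then 0 else algebraMap k R ((-1 : k) ^ (n - 1) / (n : k)) • (F - 1) ^ n

/-- The gauge action `e^α • μ = μ + Σᵢ ad_α^i/(i+1)!·([α,μ] − ∂α)` of a degree-0 element
`α` on a degree-1 element `μ` of the dg Lie algebra of endomorphisms with differential
`∂ = [D,−]` (a finite sum: all terms beyond `N` vanish). -/
noncomputable def gaugeM (N : ℕ) (D α μ : Module.End R M) : Module.End R M :=
  μ + ∑ i ∈ Finset.range N, algebraMap k R (((i + 1).factorial : k)⁻¹) •
    (fun y => α * y - y * α)^[i] ((α * μ - μ * α) - (D * α - α * D))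

variable {E : Type} [AddCommGroup E] [Module k E]

/-- The graded piece `(ℰ i) ⊗ R` of the base change `E ⊗ R`. -/
noncomputable def piece (ℰ : ℤ → Submodule k E) (i : ℤ) : Submodule R (R ⊗[k] E) :=
  LinearMap.range (LinearMap.baseChange R (ℰ i).subtype)

/-- An endomorphism of `E ⊗ R` is homogeneous of degree `s`. -/
def DegM (ℰ : ℤ → Submodule k E) (s : ℤ) (φ : Module.End R (R ⊗[k] E)) : Prop :=
  ∀ i : ℤ, ∀ v ∈ piece k R ℰ i, φ v ∈ piece k R ℰ (i + s)

/-- An endomorphism of `E ⊗ R` has coefficients in the ideal `m` (i.e. lies in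
`End_k(E) ⊗ m_R`). -/
def CoeffM (m : Ideal R) (φ : Module.End R (R ⊗[k] E)) : Prop :=
  ∀ v, φ v ∈ m • (⊤ : Submodule R (R ⊗[k] E))

end NCE

/-!
For `a` with nilpotent coefficients, summing the gauge series gives
`D + e^a • x = exp a * (D + x) * exp (-a)`, because `exp (ad a)` is conjugation by `exp a`. Hence a
gauge equivalence from `x` to `y` is an isomorphism of the form `exp a` from `D + x` to `D + y`.
Conversely an isomorphism of deformations is unipotent, so it is `exp a` for some `a` which is a
polynomial without constant term in the isomorphism minus one; such an `a` again has degree zero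
and coefficients in the ideal.
-/

namespace NCE

theorem commutator_iterate_mem_pow {A : Type*} [Ring A] {I : Ideal A} [I.IsTwoSided] {a : A}
    (ha : a ∈ I) (x : A) (n : ℕ) :
    (fun y => a * y - y * a)^[n] x ∈ I ^ n := by
  induction n with
  | zero => simp [Submodule.pow_zero]
  | succ n ih =>
    rw [Function.iterate_succ_apply']
    refine sub_mem ?_ ?_
    · exact Ideal.IsTwoSided.pow_succ (I := I) n ▸ Ideal.mul_mem_mul ha ih
    · exact Submodule.pow_succ (M := I) (n := n) ▸ Ideal.mul_mem_mul ih ha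

section NilpotentExp

variable {A : Type*} [Ring A] [Algebra ℚ A] {a : A}

theorem exp_sub_one_mem {S : NonUnitalSubalgebra ℚ A} (haS : a ∈ S) (ha : IsNilpotent a) :
    IsNilpotent.exp a - 1 ∈ S := by
  have pow_succ_mem (i : ℕ) : a ^ (i + 1) ∈ S := by
    induction i with
    | zero => simpa using haS
    | succ i ih => exact pow_succ a (i + 1) ▸ mul_mem ih haS
  obtain ⟨n, hn⟩ := ha
  rw [IsNilpotent.exp_eq_sum (pow_eq_zero_of_le n.le_succ hn), Finset.sum_range_succ']
  simp only [pow_zero, Nat.factorial_zero, Nat.cast_one, inv_one, one_smul, add_sub_cancel_right]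
  exact sum_mem fun i _ => SMulMemClass.smul_mem _ (pow_succ_mem i)

theorem exists_exp_eq_one_add_add_sq_mul (ha : IsNilpotent a) :
    ∃ q, Commute a q ∧ IsNilpotent.exp a = 1 + a + a ^ 2 * q := by
  obtain ⟨n, hn⟩ := ha
  refine ⟨∑ i ∈ Finset.range n, ((i + 2).factorial : ℚ)⁻¹ • a ^ i,
    Commute.sum_right _ _ _ fun i _ => ((Commute.refl a).pow_right i).smul_right _, ?_⟩
  rw [IsNilpotent.exp_eq_sum (pow_eq_zero_of_le (n.le_add_right 2) hn), Finset.sum_range_succ',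
    Finset.sum_range_succ', Finset.mul_sum, add_assoc, add_comm]
  congr 1
  · simp [add_comm]
  · exact Finset.sum_congr rfl fun i _ => by rw [mul_smul_comm, ← pow_add, add_comm 2 i]

theorem exists_exp_neg_mul_one_add_eq (ha : IsNilpotent a) :
    ∃ c, Commute a c ∧ IsNilpotent.exp (-a) * (1 + a) = 1 + a ^ 2 * c := by
  obtain ⟨q, hq, hexp⟩ := exists_exp_eq_one_add_add_sq_mul ha.neg
  replace hq : Commute a q := Commute.neg_left_iff.mp hq
  refine ⟨q * (1 + a) - 1, ?_, ?_⟩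
  · exact (hq.mul_right ((Commute.one_right a).add_right (.refl a))).sub_right (.one_right a)
  · rw [hexp]
    noncomm_ring

-- Newton iteration: `exp (-n) * (1 + n) = 1 + n ^ 2 * c`, and passing from `n` to `n ^ 2 * c`
-- halves the order of nilpotency.
theorem exists_mem_adjoin_exp_eq_one_add {n : A} (hn : IsNilpotent n) :
    ∃ a ∈ NonUnitalAlgebra.adjoin ℚ {n}, IsNilpotent a ∧ IsNilpotent.exp a = 1 + n := by
  obtain ⟨N, hN⟩ := hn
  replace hN : n ^ 2 ^ N = 0 := pow_eq_zero_of_le N.lt_two_pow_self.le hN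
  induction N generalizing n with
  | zero => exact ⟨0, zero_mem _, .zero, by simp_all⟩
  | succ N ih =>
    have hn : IsNilpotent n := ⟨_, hN⟩
    obtain ⟨c, hc, hexp⟩ := exists_exp_neg_mul_one_add_eq hn
    have hn_mem := NonUnitalAlgebra.self_mem_adjoin_singleton ℚ n
    have remainder_mem : n ^ 2 * c ∈ NonUnitalAlgebra.adjoin ℚ {n} := by
      have := exp_sub_one_mem (neg_mem hn_mem) hn.neg
      have heq : n ^ 2 * c =
          (IsNilpotent.exp (-n) - 1) + (IsNilpotent.exp (-n) - 1) * n + n := by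
        rw [← add_right_inj 1, ← hexp]
        noncomm_ring
      exact heq ▸ add_mem (add_mem this (mul_mem this hn_mem)) hn_mem
    have remainder_pow : (n ^ 2 * c) ^ 2 ^ N = 0 := by
      rw [(hc.pow_left 2).mul_pow, ← pow_mul, ← pow_succ', hN, zero_mul]
    obtain ⟨b, hb_mem, hb, hb_exp⟩ := ih remainder_pow
    replace hb_mem : b ∈ NonUnitalAlgebra.adjoin ℚ {n} :=
      NonUnitalAlgebra.adjoin_le (by simpa using remainder_mem) hb_mem
    have hnb : Commute n b := NonUnitalAlgebra.commute_of_mem_adjoin_self hb_mem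
    refine ⟨n + b, add_mem hn_mem hb_mem, hnb.isNilpotent_add hn hb, ?_⟩
    rw [IsNilpotent.exp_add_of_commute hnb hn hb, hb_exp, ← hexp, ← mul_assoc,
      IsNilpotent.exp_mul_exp_neg_self hn, one_mul]

theorem exists_mem_conj_exp_eq_iff {S : NonUnitalSubalgebra ℚ A} (hS : ∀ a ∈ S, IsNilpotent a)
    {x y : A} :
    (∃ a ∈ S, IsNilpotent.exp a * x * IsNilpotent.exp (-a) = y) ↔
      ∃ u, u - 1 ∈ S ∧ u * x = y * u := by
  constructor
  · rintro ⟨a, haS, rfl⟩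
    refine ⟨IsNilpotent.exp a, exp_sub_one_mem haS (hS a haS), ?_⟩
    rw [mul_assoc _ _ (IsNilpotent.exp a), IsNilpotent.exp_neg_mul_exp_self (hS a haS), mul_one]
  · rintro ⟨u, hu, hxy⟩
    obtain ⟨a, ha_mem, ha, ha_exp⟩ := exists_mem_adjoin_exp_eq_one_add (hS _ hu)
    rw [add_sub_cancel] at ha_exp
    refine ⟨a, NonUnitalAlgebra.adjoin_le (by simpa using hu) ha_mem, ?_⟩
    rw [ha_exp, hxy, ← ha_exp, mul_assoc, IsNilpotent.exp_mul_exp_neg_self ha, mul_one]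

theorem exp_mulLeft (ha : IsNilpotent a) :
    IsNilpotent.exp (LinearMap.mulLeft ℚ a) = LinearMap.mulLeft ℚ (IsNilpotent.exp a) :=
  (IsNilpotent.map_exp ha (Algebra.lmul ℚ A)).symm

theorem exp_mulRight (ha : IsNilpotent a) :
    IsNilpotent.exp (LinearMap.mulRight ℚ a) = LinearMap.mulRight ℚ (IsNilpotent.exp a) := by
  obtain ⟨n, hn⟩ := ha
  have hR : LinearMap.mulRight ℚ a ^ n = 0 := by
    rw [LinearMap.pow_mulRight, hn, LinearMap.mulRight_zero_eq_zero]
  ext x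
  simp [IsNilpotent.exp_eq_sum hn, IsNilpotent.exp_eq_sum hR, LinearMap.pow_mulRight,
    Finset.mul_sum]

attribute [local instance] LieRing.ofAssociativeRing

theorem exp_ad_apply (ha : IsNilpotent a) (x : A) :
    IsNilpotent.exp (LieAlgebra.ad ℚ A a) x = IsNilpotent.exp a * x * IsNilpotent.exp (-a) := by
  have had : LieAlgebra.ad ℚ A a = LinearMap.mulLeft ℚ a + LinearMap.mulRight ℚ (-a) := by
    ext y
    simp [LieRing.of_associative_ring_bracket, sub_eq_add_neg]
  rw [had, IsNilpotent.exp_add_of_commute (LinearMap.commute_mulLeft_right a (-a))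
    (by simpa using ha) (by simpa using ha), exp_mulLeft ha, exp_mulRight ha.neg,
    Module.End.mul_apply, LinearMap.mulLeft_apply, LinearMap.mulRight_apply, mul_assoc]

theorem exp_mul_mul_exp_neg_eq_sum {I : Ideal A} [I.IsTwoSided] {N : ℕ} (hI : I ^ N = ⊥)
    (ha : a ∈ I) (x : A) :
    IsNilpotent.exp a * x * IsNilpotent.exp (-a) =
      x + ∑ i ∈ Finset.range N,
        ((i + 1).factorial : ℚ)⁻¹ • (fun y => a * y - y * a)^[i] (a * x - x * a) := by
  have hnil : a ^ N = 0 := by simpa [hI] using Ideal.pow_mem_pow ha N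
  have ad_pow_apply (i : ℕ) (y : A) :
      (LieAlgebra.ad ℚ A a ^ i) y = (fun y => a * y - y * a)^[i] y :=
    Module.End.pow_apply _ _ _
  have ad_pow_eq_zero : LieAlgebra.ad ℚ A a ^ N = 0 := by
    ext y
    simpa [hI, ad_pow_apply] using commutator_iterate_mem_pow ha y N
  rw [← exp_ad_apply ⟨N, hnil⟩,
    IsNilpotent.exp_eq_sum (pow_eq_zero_of_le N.le_succ ad_pow_eq_zero), LinearMap.sum_apply,
    Finset.sum_range_succ', add_comm]
  simp [ad_pow_apply]

end NilpotentExp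

section GradedEndomorphisms

variable {R M : Type*} [CommRing R] [AddCommGroup M] [Module R M]

/-- The `R`-linear endomorphisms of `M` that are homogeneous of degree `s` for a family `P` of
submodules; over `piece k R ℰ` this is `DegM`. -/
def endOfDegree {ι : Type*} [Add ι] (P : ι → Submodule R M) (s : ι) :
    Submodule R (Module.End R M) where
  carrier := {φ | ∀ i, ∀ v ∈ P i, φ v ∈ P (i + s)}
  add_mem' hφ hψ i v hv := add_mem (hφ i v hv) (hψ i v hv)
  zero_mem' _ _ _ := zero_mem _
  smul_mem' r _ hφ i v hv := (P _).smul_mem r (hφ i v hv)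

variable (M) in
/-- The endomorphisms of `M` with coefficients in `I`, as a left (in fact two-sided) ideal of
`Module.End R M`; on a base change this is `CoeffM`, the paper's `End(E) ⊗ I`. -/
def endCoeff (I : Ideal R) : Ideal (Module.End R M) where
  carrier := {φ | ∀ v, φ v ∈ I • (⊤ : Submodule R M)}
  add_mem' hφ hψ v := add_mem (hφ v) (hψ v)
  zero_mem' _ := zero_mem _
  smul_mem' ψ _ hφ v := Submodule.smul_top_le_comap_smul_top I ψ (hφ v)

instance (I : Ideal R) : (endCoeff M I).IsTwoSided where
  mul_mem_of_left ψ hφ v := hφ (ψ v)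

theorem endCoeff_bot : endCoeff M (⊥ : Ideal R) = ⊥ :=
  (Submodule.eq_bot_iff _).mpr fun φ hφ => LinearMap.ext fun v => by simpa using hφ v

theorem endCoeff_mul_le (I J : Ideal R) :
    endCoeff M I * endCoeff M J ≤ endCoeff M (I * J) := by
  refine Ideal.mul_le.mpr fun φ hφ ψ hψ v => ?_
  have hmap : (J • (⊤ : Submodule R M)).map φ ≤ (I * J) • (⊤ : Submodule R M) := by
    rw [Submodule.map_smul'', mul_comm, Submodule.mul_smul, Submodule.map_top]
    exact Submodule.smul_mono le_rfl (LinearMap.range_le_iff_comap.mpr (by ext; simp [hφ _]))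
  exact hmap (Submodule.mem_map_of_mem (hψ v))

theorem endCoeff_pow_le (I : Ideal R) (n : ℕ) : endCoeff M I ^ n ≤ endCoeff M (I ^ n) := by
  induction n with
  | zero => exact fun φ _ v => by simp
  | succ n ih =>
    rw [Submodule.pow_succ, pow_succ]
    exact (Ideal.mul_mono_left ih).trans (endCoeff_mul_le _ _)

theorem endCoeff_pow_eq_bot {I : Ideal R} {N : ℕ} (hI : I ^ N = ⊥) : endCoeff M I ^ N = ⊥ :=
  le_bot_iff.mp (endCoeff_bot (R := R) (M := M) ▸ hI ▸ endCoeff_pow_le I N)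

theorem isNilpotent_of_mem_endCoeff {I : Ideal R} {N : ℕ} (hI : I ^ N = ⊥)
    {φ : Module.End R M} (hφ : φ ∈ endCoeff M I) : IsNilpotent φ :=
  ⟨N, by simpa [endCoeff_pow_eq_bot hI] using Ideal.pow_mem_pow hφ N⟩

variable {ι : Type*} [AddMonoid ι] (P : ι → Submodule R M) (I : Ideal R)

theorem one_mem_endOfDegree_zero : (1 : Module.End R M) ∈ endOfDegree P 0 :=
  fun i v hv => by simpa using hv

/-- The degree-zero endomorphisms with coefficients in `I`, i.e. the paper's `(End(E) ⊗ I)⁰`.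
It is the gauge Lie algebra; the associative structure recorded here makes sense of `exp`. -/
def gaugeAlgebra [Algebra ℚ R] [Module ℚ M] : NonUnitalSubalgebra ℚ (Module.End R M) where
  __ := (endOfDegree P 0).restrictScalars ℚ ⊓ (endCoeff M I).restrictScalars ℚ
  mul_mem' {φ ψ} hφ hψ :=
    ⟨fun i v hv => by simpa using hφ.1 _ _ (hψ.1 i v hv), Ideal.mul_mem_left _ φ hψ.2⟩

variable {P I} in
theorem mem_gaugeAlgebra [Algebra ℚ R] [Module ℚ M] {φ : Module.End R M} :
    φ ∈ gaugeAlgebra P I ↔ φ ∈ endOfDegree P 0 ∧ φ ∈ endCoeff M I :=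
  .rfl

end GradedEndomorphisms

section Deformations

variable {R M : Type*} [CommRing R] [AddCommGroup M] [Module R M]
  {ι : Type*} [AddMonoidWithOne ι] (P : ι → Submodule R M) (I : Ideal R) (D : Module.End R M)

/-- The Maurer–Cartan elements of `End(M) ⊗ I` with differential `[D, -]`. For `x` of degree one
`[D, x] = D * x + x * D` and `[x, x] / 2 = x * x`. -/
def maurerCartan : Set (Module.End R M) :=
  {x | x ∈ endOfDegree P 1 ∧ x ∈ endCoeff M I ∧ D * x + x * D + x * x = 0}

/-- The deformations of the complex `(M, D)` modulo `I`, each encoded by its differential on the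
fixed graded module `M`. -/
def deformations : Set (Module.End R M) :=
  {d | d ∈ endOfDegree P 1 ∧ d * d = 0 ∧ d - D ∈ endCoeff M I}

/-- `φ` is an isomorphism `(M, d) → (M, d')` of deformations: a degree-zero automorphism of `M`
which is the identity modulo `I` and intertwines `d` and `d'`. -/
def IsDeformationIso (d d' φ : Module.End R M) : Prop :=
  φ ∈ endOfDegree P 0 ∧ Function.Bijective φ ∧ φ - 1 ∈ endCoeff M I ∧ φ * d = d' * φ

variable {P I D}

theorem bijOn_maurerCartan_deformations (hD : D ∈ endOfDegree P 1) (hDD : D * D = 0) :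
    Set.BijOn (D + ·) (maurerCartan P I D) (deformations P I D) := by
  have sq_eq (x : Module.End R M) : (D + x) * (D + x) = D * x + x * D + x * x := by
    rw [add_mul, mul_add, mul_add, hDD]
    abel
  refine (Equiv.addLeft D).bijOn fun x => ?_
  simp [maurerCartan, deformations, Submodule.add_mem_iff_right _ hD, sq_eq, and_comm]

theorem isDeformationIso_iff [Algebra ℚ R] [Module ℚ M] {N : ℕ} (hI : I ^ N = ⊥)
    {d d' φ : Module.End R M} :
    IsDeformationIso P I d d' φ ↔ φ - 1 ∈ gaugeAlgebra P I ∧ φ * d = d' * φ := by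
  constructor
  · rintro ⟨hdeg, -, hcoeff, hφ⟩
    exact ⟨⟨sub_mem hdeg (one_mem_endOfDegree_zero P), hcoeff⟩, hφ⟩
  · rintro ⟨⟨hdeg, hcoeff⟩, hφ⟩
    have hunit : IsUnit φ := by
      simpa using (isNilpotent_of_mem_endCoeff hI hcoeff).isUnit_one_add
    have hadd : φ - 1 + 1 ∈ endOfDegree P 0 := add_mem hdeg (one_mem_endOfDegree_zero P)
    exact ⟨sub_add_cancel φ 1 ▸ hadd, (Module.End.isUnit_iff φ).mp hunit, hcoeff, hφ⟩

end Deformations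

theorem add_gaugeM_eq_exp_conj (k : Type) [Field k] [CharZero k] {R : Type} [CommRing R]
    [Algebra k R] [Algebra ℚ R] {M : Type} [AddCommGroup M] [Module R M] [Module ℚ M]
    {I : Ideal R} {N : ℕ} (hI : I ^ N = ⊥) {a : Module.End R M} (ha : a ∈ endCoeff M I)
    (D x : Module.End R M) :
    D + gaugeM k R N D a x = IsNilpotent.exp a * (D + x) * IsNilpotent.exp (-a) := by
  have coeff_smul (i : ℕ) (φ : Module.End R M) :
      algebraMap k R ((i.factorial : k)⁻¹) • φ = (i.factorial : ℚ)⁻¹ • φ := by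
    rw [← algebraMap_smul R ((i.factorial : ℚ)⁻¹) φ, IsScalarTower.algebraMap_apply ℚ k R]
    simp
  have commutator_eq : a * x - x * a - (D * a - a * D) = a * (D + x) - (D + x) * a := by
    noncomm_ring
  simp only [exp_mul_mul_exp_neg_eq_sum (endCoeff_pow_eq_bot hI) ha, gaugeM, coeff_smul,
    commutator_eq, add_assoc]

theorem baseChange_mem_endOfDegree {k R E : Type} [Field k] [CommRing R] [Algebra k R]
    [AddCommGroup E] [Module k E] {ℰ : ℤ → Submodule k E} {s : ℤ} {f : E →ₗ[k] E}
    (hf : ∀ i, ∀ x ∈ ℰ i, f x ∈ ℰ (i + s)) :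
    LinearMap.baseChange R f ∈ endOfDegree (piece k R ℰ) s := by
  rintro i _ ⟨w, rfl⟩
  refine ⟨LinearMap.baseChange R (f.restrict (hf i)) w, ?_⟩
  rw [← LinearMap.comp_apply, ← LinearMap.comp_apply, ← LinearMap.baseChange_comp,
    ← LinearMap.baseChange_comp]
  rfl

end NCE

open NCE in
theorem statement8_general (k : Type) [Field k] [CharZero k] {R : Type} [CommRing R] [Algebra k R]
    {M : Type} [AddCommGroup M] [Module R M] {ι : Type*} [AddMonoidWithOne ι]
    {P : ι → Submodule R M} {I : Ideal R} {N : ℕ} (hI : I ^ N = ⊥) {D : Module.End R M}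
    (hD : D ∈ endOfDegree P 1) (hDD : D * D = 0) :
    Set.BijOn (D + ·) (maurerCartan P I D) (deformations P I D) ∧
      ∀ x y : Module.End R M,
        (∃ α, α ∈ endOfDegree P 0 ∧ α ∈ endCoeff M I ∧ gaugeM k R N D α x = y) ↔
          ∃ φ, IsDeformationIso P I (D + x) (D + y) φ := by
  refine ⟨bijOn_maurerCartan_deformations hD hDD, fun x y => ?_⟩
  let : Algebra ℚ R := Algebra.compHom R (algebraMap ℚ k)
  let : Module ℚ M := Module.compHom M (algebraMap ℚ R)
  calc
    _ ↔ ∃ α ∈ gaugeAlgebra P I, IsNilpotent.exp α * (D + x) * IsNilpotent.exp (-α) = D + y := by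
      simp only [mem_gaugeAlgebra, and_assoc]
      refine exists_congr fun α => and_congr_right fun _ => and_congr_right fun hα => ?_
      rw [← add_gaugeM_eq_exp_conj k hI hα, add_right_inj]
    _ ↔ ∃ φ, φ - 1 ∈ gaugeAlgebra P I ∧ φ * (D + x) = (D + y) * φ :=
      exists_mem_conj_exp_eq_iff fun _ hα =>
        isNilpotent_of_mem_endCoeff hI (mem_gaugeAlgebra.mp hα).2
    _ ↔ ∃ φ, IsDeformationIso P I (D + x) (D + y) φ := by
      simp only [isDeformationIso_iff hI]

open NCE in
/-- Let `E` be a cochain complex of `k`-vector spaces (`k` of characteristic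
`0`).  For every artin local `k`-algebra `R` with residue field `k` and maximal ideal `m`,
the assignment `x ↦ (E⊗R, dE⊗R + x)` induces a bijection
`Def_{End_k(E)}(R) = MC(End_k(E)⊗m_R)/exp((End_k(E)⊗m_R)⁰) ≅ 𝖣_E(R)`:
(a) `x ↦ dE⊗R + x` is a bijection from the Maurer–Cartan set onto the set of deformations
of the complex `E` to `R`, and (b) two Maurer–Cartan elements are gauge equivalent exactly
when the corresponding deformations are isomorphic, so that the map descends to a
bijection on the quotients. -/
theorem statement8 {k : Type} [Field k] [CharZero k]
    {E : Type} [AddCommGroup E] [Module k E]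
    (ℰ : ℤ → Submodule k E) [DirectSum.Decomposition ℰ]
    (dE : E →ₗ[k] E) (hdeg : ∀ i : ℤ, ∀ x ∈ ℰ i, dE x ∈ ℰ (i + 1))
    (hdd : dE ∘ₗ dE = 0)
    (R : Type) [CommRing R] [Algebra k R] [IsArtinianRing R] [IsLocalRing R]
    (m : Ideal R) (hm : m = IsLocalRing.maximalIdeal R) (N : ℕ) (hN : m ^ N = ⊥)
    (hres : Function.Bijective (algebraMap k (R ⧸ m))) :
    Set.BijOn (fun x => LinearMap.baseChange R dE + x)
      {x : Module.End R (R ⊗[k] E) |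
        DegM k R ℰ 1 x ∧ CoeffM k R m x ∧
          LinearMap.baseChange R dE * x + x * LinearMap.baseChange R dE + x * x = 0}
      {d' : Module.End R (R ⊗[k] E) |
        DegM k R ℰ 1 d' ∧ d' * d' = 0 ∧
          ∀ v, d' v - LinearMap.baseChange R dE v ∈
            m • (⊤ : Submodule R (R ⊗[k] E))} ∧
    ∀ x ∈ {x : Module.End R (R ⊗[k] E) |
        DegM k R ℰ 1 x ∧ CoeffM k R m x ∧
          LinearMap.baseChange R dE * x + x * LinearMap.baseChange R dE + x * x = 0},
    ∀ y ∈ {x : Module.End R (R ⊗[k] E) |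
        DegM k R ℰ 1 x ∧ CoeffM k R m x ∧
          LinearMap.baseChange R dE * x + x * LinearMap.baseChange R dE + x * x = 0},
      ((∃ α : Module.End R (R ⊗[k] E), DegM k R ℰ 0 α ∧ CoeffM k R m α ∧
          gaugeM k R N (LinearMap.baseChange R dE) α x = y) ↔
        (∃ φ : Module.End R (R ⊗[k] E), DegM k R ℰ 0 φ ∧ Function.Bijective φ ∧
          (∀ v, φ v - v ∈ m • (⊤ : Submodule R (R ⊗[k] E))) ∧
          φ * (LinearMap.baseChange R dE + x) = (LinearMap.baseChange R dE + y) * φ)) := by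
  have hDD : LinearMap.baseChange R dE * LinearMap.baseChange R dE = 0 := by
    rw [Module.End.mul_eq_comp, ← LinearMap.baseChange_comp, hdd, LinearMap.baseChange_zero]
  have ⟨hbij, hiso⟩ := statement8_general k hN (baseChange_mem_endOfDegree hdeg) hDD
  exact ⟨hbij, fun x _ y _ => hiso x y⟩
end

section
/- Let k be a field, R an artin local k-algebra with residue field k and maximal ideal m_R, and R → R' a surjective morphism of artin local k-algebras whose kernel I satisfies I·m_R = 0 and dim_k I = 1; fix a k-basis element e of I. Then the map R ×_k k[ε]/(ε²) → R ×_{R'} R sending (r, r̄ + aε) to (r, r + a·e) — where r̄ ∈ k denotes the residue of r and a ∈ k — is a well-defined isomorphism of k-algebras. -/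
/-!
If `r ∈ R` acts on `M ⊆ R` through its residue `ρ r`, and `ρ` vanishes on `M`, then
`v * w = ρ w • v = 0` for `v, w ∈ M`.  Hence expanding `(r + v) * (s + w)` gives
`r * s + (ρ r • w + ρ s • v)`, which is the multiplication law of `k ⊕ M`; so
`(r, ρ r + v) ↦ r + v` is multiplicative.  Paired with `(r, ρ r + v) ↦ r`, it parametrizes the
pairs in `R × R` whose difference lies in `M`, that is, `R ×_{R'} R` when `M` is the kernel of
`R → R'`.  The basis element `e` identifies the kernel with `M = k`, turning `k ⊕ M` into `k[ε]`.
-/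

/-- The fiber product `A ×_C B` of `k`-algebras, realized as a subalgebra of `A × B`. -/
abbrev fiberProduct {k A B C : Type*} [CommSemiring k] [Semiring A] [Algebra k A] [Semiring B]
    [Algebra k B] [Semiring C] [Algebra k C] (f : A →ₐ[k] C) (g : B →ₐ[k] C) :
    Subalgebra k (A × B) :=
  AlgHom.equalizer (f.comp (AlgHom.fst k A B)) (g.comp (AlgHom.snd k A B))

theorem mul_eq_smul_of_forall_mem_ker_mul_eq_zero {k R : Type*} [CommRing k] [Ring R]
    [Algebra k R] (ρ : R →ₐ[k] k) {x : R} (hx : ∀ r ∈ RingHom.ker ρ, x * r = 0) (r : R) :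
    x * r = ρ r • x := by
  have hmem : r - algebraMap k R (ρ r) ∈ RingHom.ker ρ := by simp [RingHom.mem_ker]
  rw [Algebra.smul_def, Algebra.commutes, ← sub_eq_zero, ← mul_sub, hx _ hmem]

theorem exact_toSpanSingleton {k M N : Type*} [Semiring k] [AddCommMonoid M] [Module k M]
    [AddCommMonoid N] [Module k N] {f : M →ₗ[k] N} {e : M} (he : f e = 0)
    (hspan : ∀ x, f x = 0 → ∃ a : k, x = a • e) :
    Function.Exact (LinearMap.toSpanSingleton k M e) f := by
  refine fun x ↦ ⟨fun hx ↦ (hspan x hx).imp fun _ ha ↦ ha.symm, ?_⟩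
  rintro ⟨a, rfl⟩
  simp [he]

section KernelPair

variable {k R R' M : Type*} [CommRing k] [CommRing R] [Algebra k R] [Ring R'] [Algebra k R']
  [AddCommGroup M] [Module k M]

theorem add_mul_add_of_forall_mem_ker_mul_eq_zero {ρ : R →ₐ[k] k} {ι : M →ₗ[k] R}
    (hann : ∀ v, ∀ r ∈ RingHom.ker ρ, ι v * r = 0) (hρι : ∀ v, ρ (ι v) = 0) (r s : R) (v w : M) :
    (r + ι v) * (s + ι w) = r * s + ι (ρ r • w + ρ s • v) := by
  have hvs : ι v * s = ρ s • ι v := mul_eq_smul_of_forall_mem_ker_mul_eq_zero ρ (hann v) s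
  have hrw : r * ι w = ρ r • ι w := by
    rw [mul_comm, mul_eq_smul_of_forall_mem_ker_mul_eq_zero ρ (hann w) r]
  have hvw : ι v * ι w = 0 := hann v _ (hρι w)
  rw [add_mul, mul_add, mul_add, hvs, hrw, hvw, add_zero, add_assoc, map_add, map_smul, map_smul]

variable [Module kᵐᵒᵖ M] [IsCentralScalar k M]

/-- The algebra homomorphism `R ×_k (k ⊕ M) → R`, `(r, ρ r + v) ↦ r + ι v`, translating `r` by an
element of the copy `ι M` of `M` inside `R`. -/
def translationHom (ρ : R →ₐ[k] k) (ι : M →ₗ[k] R)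
    (hann : ∀ v, ∀ r ∈ RingHom.ker ρ, ι v * r = 0) (hρι : ∀ v, ρ (ι v) = 0) :
    fiberProduct ρ (TrivSqZeroExt.fstHom k k M) →ₐ[k] R :=
  AlgHom.ofLinearMap
    ((LinearMap.fst k R _ + ι ∘ₗ TrivSqZeroExt.sndHom k M ∘ₗ LinearMap.snd k R _) ∘ₗ
      (fiberProduct ρ (TrivSqZeroExt.fstHom k k M)).val.toLinearMap)
    (by simp)
    (by
      rintro ⟨⟨r, x⟩, hx : ρ r = x.fst⟩ ⟨⟨s, y⟩, hy : ρ s = y.fst⟩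
      simpa [hx, hy] using
        (add_mul_add_of_forall_mem_ker_mul_eq_zero hann hρι r s x.snd y.snd).symm)

/-- The map `R ×_k (k ⊕ M) → R ×_{R'} R`, `(r, ρ r + v) ↦ (r, r + ι v)`, whenever `ι` takes values
in the kernel of `f : R → R'`. -/
def kernelPairHom (ρ : R →ₐ[k] k) (f : R →ₐ[k] R') (ι : M →ₗ[k] R)
    (hann : ∀ v, ∀ r ∈ RingHom.ker ρ, ι v * r = 0) (hρι : ∀ v, ρ (ι v) = 0)
    (hfι : ∀ v, f (ι v) = 0) :
    fiberProduct ρ (TrivSqZeroExt.fstHom k k M) →ₐ[k] fiberProduct f f :=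
  (((AlgHom.fst k R _).comp (Subalgebra.val _)).prod (translationHom ρ ι hann hρι)).codRestrict _
    fun x ↦ show f x.1.1 = f (x.1.1 + ι x.1.2.snd) by rw [map_add, hfι, add_zero]

variable {ρ : R →ₐ[k] k} {f : R →ₐ[k] R'} {ι : M →ₗ[k] R}
  {hann : ∀ v, ∀ r ∈ RingHom.ker ρ, ι v * r = 0} {hρι : ∀ v, ρ (ι v) = 0}

theorem coe_kernelPairHom_apply (hfι : ∀ v, f (ι v) = 0)
    (x : fiberProduct ρ (TrivSqZeroExt.fstHom k k M)) :
    (kernelPairHom ρ f ι hann hρι hfι x : R × R) = (x.1.1, x.1.1 + ι x.1.2.snd) :=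
  rfl

theorem kernelPairHom_injective {hfι : ∀ v, f (ι v) = 0} (hι : Function.Injective ι) :
    Function.Injective (kernelPairHom ρ f ι hann hρι hfι) := by
  rintro ⟨⟨r, x⟩, hx : ρ r = x.fst⟩ ⟨⟨s, y⟩, hy : ρ s = y.fst⟩ hxy
  obtain ⟨rfl, hsnd⟩ : r = s ∧ r + ι x.snd = s + ι y.snd :=
    Prod.mk.inj (congrArg Subtype.val hxy)
  have hxy' : x = y := TrivSqZeroExt.ext (hx.symm.trans hy) (hι (add_left_cancel hsnd))
  exact Subtype.ext (congrArg (Prod.mk r) hxy')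

theorem kernelPairHom_surjective (hexact : Function.Exact ι f) :
    Function.Surjective (kernelPairHom ρ f ι hann hρι hexact.apply_apply_eq_zero) := by
  rintro ⟨⟨r, s⟩, hrs : f r = f s⟩
  obtain ⟨v, hv⟩ : s - r ∈ Set.range ι := (hexact _).mp (by rw [map_sub, hrs, sub_self])
  refine ⟨⟨(r, TrivSqZeroExt.inl (ρ r) + TrivSqZeroExt.inr v), by simp⟩, Subtype.ext ?_⟩
  simp [coe_kernelPairHom_apply, hv]

end KernelPair

theorem statement17_general {k R R' M : Type*} [CommRing k] [CommRing R] [Algebra k R] [Ring R']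
    [Algebra k R'] [AddCommGroup M] [Module k M] [Module kᵐᵒᵖ M] [IsCentralScalar k M]
    (ρ : R →ₐ[k] k) (f : R →ₐ[k] R') (ι : M →ₗ[k] R) (hι : Function.Injective ι)
    (hexact : Function.Exact ι f) (hann : ∀ v, ∀ r ∈ RingHom.ker ρ, ι v * r = 0)
    (hρι : ∀ v, ρ (ι v) = 0) :
    ∃ ψ : fiberProduct ρ (TrivSqZeroExt.fstHom k k M) ≃ₐ[k] fiberProduct f f,
      ∀ x, (ψ x : R × R) = (x.1.1, x.1.1 + ι x.1.2.snd) :=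
  ⟨AlgEquiv.ofBijective (kernelPairHom ρ f ι hann hρι hexact.apply_apply_eq_zero)
    ⟨kernelPairHom_injective hι, kernelPairHom_surjective hexact⟩,
    coe_kernelPairHom_apply hexact.apply_apply_eq_zero⟩

/-- Let `k` be a field, `R` an artin local `k`-algebra with residue field `k`
(residue map `ρ : R →ₐ[k] k` with kernel the maximal ideal `m`), and `f : R → R'` a
surjective morphism of artin local `k`-algebras whose kernel `I` satisfies `I·m = 0` and
`dim_k I = 1`, with a fixed `k`-basis element `e` of `I`.  Then the map
`R ×_k k[ε]/(ε²) → R ×_{R'} R`, `(r, r̄ + aε) ↦ (r, r + a·e)`, is a well-defined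
isomorphism of `k`-algebras.  (The fiber products are realized as equalizer subalgebras of
`R × k[ε]` resp. `R × R`; an element of `R ×_k k[ε]/(ε²)` has first component `r` and second
component `r̄ + aε` where `r̄ = ρ r` and `a` is the `ε`-coefficient.) -/
theorem statement17 (k : Type*) [Field k]
    (R : Type*) [CommRing R] [Algebra k R] [IsArtinianRing R] [IsLocalRing R]
    (R' : Type*) [CommRing R'] [Algebra k R'] [IsArtinianRing R'] [IsLocalRing R']
    (m : Ideal R) (hm : m = IsLocalRing.maximalIdeal R)
    (ρ : R →ₐ[k] k) (hρ : RingHom.ker (ρ : R →+* k) = m)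
    (f : R →ₐ[k] R') (hf : Function.Surjective f)
    (hIm : ∀ x ∈ RingHom.ker (f : R →+* R'), ∀ y ∈ m, x * y = 0)
    (e : R) (he : e ∈ RingHom.ker (f : R →+* R')) (he0 : e ≠ 0)
    (hbasis : ∀ x ∈ RingHom.ker (f : R →+* R'), ∃ a : k, x = a • e) :
    ∃ ψ : AlgHom.equalizer (ρ.comp (AlgHom.fst k R (DualNumber k)))
            ((TrivSqZeroExt.fstHom k k k).comp (AlgHom.snd k R (DualNumber k)))
          ≃ₐ[k]
          AlgHom.equalizer (f.comp (AlgHom.fst k R R)) (f.comp (AlgHom.snd k R R)),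
      ∀ x, ((ψ x : R × R)) =
        ((x : R × DualNumber k).1,
         (x : R × DualNumber k).1 + (TrivSqZeroExt.snd (x : R × DualNumber k).2) • e) := by
  have hker : RingHom.ker (f : R →+* R') ≤ RingHom.ker (ρ : R →+* k) :=
    (IsLocalRing.le_maximalIdeal (RingHom.ker_ne_top _)).trans_eq (hm.symm.trans hρ.symm)
  have hexact : Function.Exact (LinearMap.toSpanSingleton k R e) f :=
    exact_toSpanSingleton (f := f.toLinearMap) he hbasis
  have hmem (a : k) : a • e ∈ RingHom.ker (f : R →+* R') := hexact.apply_apply_eq_zero a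
  exact statement17_general ρ f (.toSpanSingleton k R e) (smul_left_injective k he0) hexact
    (fun a r hr ↦ hIm _ (hmem a) r (hρ.le hr)) fun a ↦ hker (hmem a)
end
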